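/- Suppose there exist real numbers θ > 1, σ > 1 and r₀ > 0 such that ∫_1^∞ (g_θ(t)·t)^{−1/p} dt < ∞ and ∫_1^∞ g_θ(t)^{−1/α} dt < ∞, while ∫_{r₀}^∞ (r·f_σ(r))^{1/(p−1)} dr < ∞. Define F₀(ξ) = (∫_ξ^∞ (g_θ(t)·t)^{−1/p} dt)^{p/(p−1)} + ∫_ξ^∞ g_θ(t)^{−1/α} dt for ξ > 0. Then there exists a constant C > 0, depending only on n, p, θ, σ, α, C₁ and C₂, such that every nonnegative C¹ solution u of div A(x,Du) + b(x)|Du|^α ≥ q(x)g(u) in ℝⁿ satisfies, for all sufficiently large r: either M(r;u) = 0 or F₀(M(r;u)) ≥ C·∫_r^∞ (ξ·f_σ(ξ))^{1/(p−1)} dξ (equivalently, M(r;u) ≤ F₀^{−1}(C ∫_r^∞ (ξ f_σ(ξ))^{1/(p−1)} dξ)). -/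

import Mathlib

open MeasureTheory Metric Set Filter
open scoped RealInnerProductSpace ENNReal

noncomputable section

abbrev Euc (n : ℕ) := EuclideanSpace ℝ (Fin n)

/-- Weak solution of `div A(x,Dv) + b(x)|Dv|^α ≥ a(x)` on an open set `U`:
for every nonnegative test function `φ ∈ C₀^∞(U)`,
`-∫ A(x,Dv)·Dφ + ∫ b |Dv|^α φ ≥ ∫ a φ`. -/
def IsWeakSol {n : ℕ} (A : Euc n → Euc n → Euc n) (b : Euc n → ℝ) (α : ℝ)
    (a : Euc n → ℝ) (U : Set (Euc n)) (v : Euc n → ℝ) : Prop :=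
  ∀ φ : Euc n → ℝ, ContDiff ℝ (⊤ : ℕ∞) φ → HasCompactSupport φ → tsupport φ ⊆ U →
    (∀ x, 0 ≤ φ x) →
    (∫ x in U, a x * φ x) ≤
      (-(∫ x in U, ⟪A x (gradient v x), gradient φ x⟫)) +
        ∫ x in U, b x * ‖gradient v x‖ ^ α * φ x

/-- Structural conditions on `A`: measurability, coercivity and growth. -/
def StructCond {n : ℕ} (A : Euc n → Euc n → Euc n) (p C₁ C₂ : ℝ) : Prop :=
  Measurable (Function.uncurry A) ∧
    ∀ x ζ : Euc n, C₁ * ‖ζ‖ ^ p ≤ ⟪ζ, A x ζ⟫ ∧ ‖A x ζ‖ ≤ C₂ * ‖ζ‖ ^ (p - 1)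

/-- Locally bounded function on `ℝⁿ`. -/
def LocBdd {n : ℕ} (b : Euc n → ℝ) : Prop :=
  ∀ K : Set (Euc n), IsCompact K → ∃ C, ∀ x ∈ K, b x ≤ C

/-- `M(r; u) = max_{|x| = r} u x`. -/
def sphMax {n : ℕ} (u : Euc n → ℝ) (r : ℝ) : ℝ := sSup (u '' Metric.sphere (0 : Euc n) r)

/-- `g_θ(t) = inf_{s ∈ (t/θ, θ t)} g s`. -/
def ginf (g : ℝ → ℝ) (θ t : ℝ) : ℝ := sInf (g '' Set.Ioo (t / θ) (θ * t))

/-- The open annulus `{x : r₁ < |x| < r₂}`. -/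
def Ann (n : ℕ) (r₁ r₂ : ℝ) : Set (Euc n) := {x : Euc n | r₁ < ‖x‖ ∧ ‖x‖ < r₂}

/-- `q_σ(r) = ess inf_{r/σ < |x| < σ r} q x`. -/
def qinf {n : ℕ} (q : Euc n → ℝ) (σ r : ℝ) : ℝ :=
  essInf q (volume.restrict (Ann n (r / σ) (σ * r)))

/-- `f_σ(r) = q_σ(r) / (1 + r q_σ(r)^{(α-p+1)/α} ess sup_{r/σ<|x|<σr} b^{(p-1)/α})`. -/
def fdef {n : ℕ} (q b : Euc n → ℝ) (p α σ r : ℝ) : ℝ :=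
  qinf q σ r /
    (1 + r * qinf q σ r ^ ((α - p + 1) / α) *
      essSup (fun x => b x ^ ((p - 1) / α)) (volume.restrict (Ann n (r / σ) (σ * r))))

/-- `F₀(ξ) = (∫_ξ^∞ (g_θ(t) t)^{-1/p} dt)^{p/(p-1)} + ∫_ξ^∞ g_θ(t)^{-1/α} dt`. -/
def Fzero (g : ℝ → ℝ) (θ p α ξ : ℝ) : ℝ :=
  (∫ t in Set.Ioi ξ, (ginf g θ t * t) ^ (-(1 / p))) ^ (p / (p - 1)) +
    ∫ t in Set.Ioi ξ, ginf g θ t ^ (-(1 / α))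

/-!
Where `div A(x, Du) + b |Du|^α ≥ a > 0` holds on `{u > u(x₀) - h}` in the ball of radius `δ` about
`x₀`, the function `u` minus `u(x₀) - h` and a paraboloid with vertex `x₀` equals `h` at `x₀`. It
is negative on the sphere if `u` does not grow by `h`, so its truncations are admissible test
functions. Testing with their squares, De Giorgi's iteration shows that `u` must grow by `h` if
`a ≥ K max (h ^ (p - 1) δ ^ (-p)) (b (h / δ) ^ α)`. Starting from maximum points on spheres (where
the maximum principle makes `M(r)` monotone) and splitting a long radial step into equal ones, an
increment `H` of `M` takes a distance of at most
`c (H ^ ((p - 1) / p) a ^ (-1 / p) + (b / a) ^ (1 / α) H)`.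

With `a = Q g_θ(M)`, the second terms of consecutive steps add up to the second integral in `F₀`.
The first ones are integrated by choosing steps on which `M` grows by a fixed factor, which turns
`H ^ ((p - 1) / p)` into `H M ^ (-1 / p)`; if `M` grows less than that in the whole annulus, the
first term is controlled directly by `H ≤ M`, at the price of the power `p / (p - 1)` in `F₀`. In
either case the annulus `ρ < |x| < τ ρ` contributes at most a constant multiple of
`F₀(M(ρ)) - F₀(M(τ ρ))` to the integral of `(r f_σ(r)) ^ (1 / (p - 1))`, and the sum telescopes.
-/

open Module Function
open scoped Topology Convolution NNReal Gradient

section Sobolev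

variable {E F : Type*} [NormedAddCommGroup E] [NormedSpace ℝ E] [FiniteDimensional ℝ E]
  [MeasurableSpace E] [BorelSpace E] [NormedAddCommGroup F] [NormedSpace ℝ F]
  (μ : Measure E) [μ.IsAddHaarMeasure]

lemma eLpNorm_one_restrict_le_eLpNorm_fderiv_one {u : E → F} (hu : ContDiff ℝ 1 u)
    (hsupp : HasCompactSupport u) {p : ℝ≥0} (hp : NNReal.HolderConjugate (finrank ℝ E) p)
    (S : Set E) :
    eLpNorm u 1 (μ.restrict S) ≤
      eLpNormLESNormFDerivOneConst μ p * eLpNorm (fderiv ℝ u) 1 μ *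
        μ S ^ (1 / (finrank ℝ E : ℝ)) := by
  have hexp : 1 / (1 : ℝ≥0∞).toReal - 1 / (p : ℝ≥0∞).toReal = 1 / (finrank ℝ E : ℝ) := by
    have := hp.coe.inv_add_inv_eq_one
    simp only [NNReal.coe_natCast] at this
    simp only [ENNReal.toReal_one, ENNReal.coe_toReal]
    linarith [one_div (p : ℝ), one_div (finrank ℝ E : ℝ)]
  calc eLpNorm u 1 (μ.restrict S)
      ≤ eLpNorm u p (μ.restrict S) * μ.restrict S univ ^
          (1 / (1 : ℝ≥0∞).toReal - 1 / (p : ℝ≥0∞).toReal) :=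
        eLpNorm_le_eLpNorm_mul_rpow_measure_univ (mod_cast hp.symm.lt.le)
          hu.continuous.aestronglyMeasurable
    _ ≤ _ := by
        rw [hexp, Measure.restrict_apply_univ]
        gcongr
        exact (eLpNorm_mono_measure u Measure.restrict_le_self).trans
          (eLpNorm_le_eLpNorm_fderiv_one μ hu hsupp hp)

theorem exists_setIntegral_norm_le_mul_integral_norm_fderiv (hdim : 2 ≤ finrank ℝ E) :
    ∃ C : ℝ, 0 < C ∧ ∀ u : E → F, ContDiff ℝ 1 u → HasCompactSupport u →
      ∀ S : Set E, μ S ≠ ∞ →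
        ∫ x in S, ‖u x‖ ∂μ ≤
          C * μ.real S ^ (1 / (finrank ℝ E : ℝ)) * ∫ x, ‖fderiv ℝ u x‖ ∂μ := by
  have hp : NNReal.HolderConjugate (finrank ℝ E) (NNReal.conjExponent (finrank ℝ E)) :=
    .conjExponent (mod_cast hdim)
  set K := eLpNormLESNormFDerivOneConst μ (NNReal.conjExponent (finrank ℝ E))
  refine ⟨K + 1, by positivity, fun u hu hsupp S hS ↦ ?_⟩
  have hu_int : Integrable u μ := hu.continuous.integrable_of_hasCompactSupport hsupp
  have hdu_int : Integrable (fderiv ℝ u) μ :=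
    (hu.continuous_fderiv one_ne_zero).integrable_of_hasCompactSupport (hsupp.fderiv ℝ)
  have hmain := ENNReal.toReal_mono
    (ENNReal.mul_ne_top (ENNReal.mul_ne_top ENNReal.coe_ne_top
      (memLp_one_iff_integrable.2 hdu_int).eLpNorm_ne_top)
      (ENNReal.rpow_ne_top_of_nonneg (by positivity) hS))
    (eLpNorm_one_restrict_le_eLpNorm_fderiv_one μ hu hsupp hp S)
  rw [ENNReal.toReal_mul, ENNReal.toReal_mul, ← ENNReal.toReal_rpow,
    eLpNorm_one_eq_lintegral_enorm, eLpNorm_one_eq_lintegral_enorm,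
    ← integral_norm_eq_lintegral_enorm hu_int.aestronglyMeasurable.restrict,
    ← integral_norm_eq_lintegral_enorm hdu_int.aestronglyMeasurable] at hmain
  have hprod : 0 ≤ μ.real S ^ (1 / (finrank ℝ E : ℝ)) * ∫ x, ‖fderiv ℝ u x‖ ∂μ := by
    positivity
  calc ∫ x in S, ‖u x‖ ∂μ
      ≤ K * (∫ x, ‖fderiv ℝ u x‖ ∂μ) * μ.real S ^ (1 / (finrank ℝ E : ℝ)) := hmain
    _ ≤ (K + 1) * μ.real S ^ (1 / (finrank ℝ E : ℝ)) * ∫ x, ‖fderiv ℝ u x‖ ∂μ := by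
        linarith

end Sobolev

section Gradient

variable {E : Type*} [NormedAddCommGroup E] [InnerProductSpace ℝ E] [CompleteSpace E]

lemma norm_gradient_eq_norm_fderiv (φ : E → ℝ) (x : E) : ‖∇ φ x‖ = ‖fderiv ℝ φ x‖ :=
  LinearIsometryEquiv.norm_map _ _

lemma continuous_gradient {φ : E → ℝ} (hφ : ContDiff ℝ 1 φ) : Continuous (∇ φ) :=
  (LinearIsometryEquiv.continuous _).comp (hφ.continuous_fderiv one_ne_zero)

lemma hasCompactSupport_gradient {φ : E → ℝ} (hφ : HasCompactSupport φ) :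
    HasCompactSupport (∇ φ) :=
  (hφ.fderiv ℝ).comp_left (map_zero _)

lemma gradient_eq_zero_of_notMem_tsupport {φ : E → ℝ} {x : E} (hx : x ∉ tsupport φ) :
    ∇ φ x = 0 := by
  have hloc : φ =ᶠ[𝓝 x] fun _ ↦ 0 := notMem_tsupport_iff_eventuallyEq.1 hx
  rw [hloc.gradient_eq, gradient_fun_const]

end Gradient

section Mollification

variable {E F : Type*} [NormedAddCommGroup E] [NormedSpace ℝ E] [FiniteDimensional ℝ E]
  [MeasurableSpace E] [BorelSpace E] [NormedAddCommGroup F] [NormedSpace ℝ F] [CompleteSpace F]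
  {μ : Measure E} [μ.IsAddHaarMeasure]

lemma tendstoUniformly_normed_convolution {f : E → F} (hf : UniformContinuous f)
    {B : ℕ → ContDiffBump (0 : E)} (hB : Tendsto (fun k ↦ (B k).rOut) atTop (𝓝 0)) :
    TendstoUniformly
      (fun k ↦ (B k).normed μ ⋆[ContinuousLinearMap.lsmul ℝ ℝ, μ] f) f atTop := by
  rw [Metric.tendstoUniformly_iff]
  intro ε hε
  obtain ⟨η, hη, hfη⟩ := Metric.uniformContinuous_iff.1 hf (ε / 2) (half_pos hε)
  filter_upwards [hB.eventually_lt_const hη] with k hk x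
  rw [dist_comm]
  exact ((B k).dist_normed_convolution_le hf.continuous.aestronglyMeasurable
    fun y hy ↦ (hfη ((mem_ball.1 hy).trans hk)).le).trans_lt (half_lt_self hε)

lemma fderiv_normed_convolution {φ : E → ℝ} (hφ : ContDiff ℝ 1 φ) (hsupp : HasCompactSupport φ)
    (B : ContDiffBump (0 : E)) :
    fderiv ℝ (B.normed μ ⋆[ContinuousLinearMap.lsmul ℝ ℝ, μ] φ) =
      B.normed μ ⋆[ContinuousLinearMap.lsmul ℝ ℝ, μ] fderiv ℝ φ := by
  ext1 x
  rw [(hsupp.hasFDerivAt_convolution_right (ContinuousLinearMap.lsmul ℝ ℝ)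
    (B.continuous_normed (μ := μ)).locallyIntegrable hφ x).fderiv, convolution_def,
    convolution_def]
  rfl

lemma tsupport_normed_convolution_subset (φ : E → ℝ) (B : ContDiffBump (0 : E)) {δ : ℝ}
    (hδ : B.rOut ≤ δ) :
    tsupport (B.normed μ ⋆[ContinuousLinearMap.lsmul ℝ ℝ, μ] φ) ⊆ cthickening δ (tsupport φ) := by
  refine closure_minimal ((support_convolution_subset _).trans ?_) isClosed_cthickening
  rintro _ ⟨a, ha, c, hc, rfl⟩
  rw [B.support_normed_eq, mem_ball_zero_iff] at ha
  refine mem_cthickening_of_dist_le _ c _ _ (subset_tsupport _ hc) ?_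
  change dist (a + c) c ≤ δ
  rw [dist_eq_norm, add_sub_cancel_right]
  exact (ha.trans_le hδ).le

end Mollification

section TestFunctions

variable {E : Type*} [NormedAddCommGroup E] [InnerProductSpace ℝ E] [FiniteDimensional ℝ E]
  [MeasurableSpace E] [BorelSpace E]

theorem exists_contDiff_tendstoUniformly_gradient {φ : E → ℝ} (hφ : ContDiff ℝ 1 φ)
    (hsupp : HasCompactSupport φ) (hφ0 : 0 ≤ φ) :
    ∃ (K : Set E) (ψ : ℕ → E → ℝ), IsCompact K ∧
      (∀ k, ContDiff ℝ (⊤ : ℕ∞) (ψ k) ∧ tsupport (ψ k) ⊆ K ∧ 0 ≤ ψ k) ∧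
      TendstoUniformly ψ φ atTop ∧ TendstoUniformly (fun k ↦ ∇ (ψ k)) (∇ φ) atTop := by
  let B (k : ℕ) : ContDiffBump (0 : E) :=
    ⟨1 / (k + 1) / 2, 1 / (k + 1), by positivity, half_lt_self (by positivity)⟩
  have hB : Tendsto (fun k ↦ (B k).rOut) atTop (𝓝 0) := tendsto_one_div_add_atTop_nhds_zero_nat
  have hB_le (k : ℕ) : (B k).rOut ≤ 1 := (div_le_one (by positivity)).2 (by simp)
  refine ⟨cthickening 1 (tsupport φ),
    fun k ↦ (B k).normed volume ⋆[ContinuousLinearMap.lsmul ℝ ℝ, volume] φ,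
    hsupp.isCompact.cthickening, fun k ↦ ⟨?_, ?_, ?_⟩, ?_, ?_⟩
  · exact (B k).hasCompactSupport_normed.contDiff_convolution_left _ (B k).contDiff_normed
      hφ.continuous.locallyIntegrable
  · exact tsupport_normed_convolution_subset φ (B k) (hB_le k)
  · exact fun x ↦ integral_nonneg fun t ↦ mul_nonneg ((B k).nonneg_normed t) (hφ0 _)
  · exact tendstoUniformly_normed_convolution
      (hsupp.uniformContinuous_of_continuous hφ.continuous) hB
  · have hfderiv := tendstoUniformly_normed_convolution (μ := volume)
      ((hsupp.fderiv ℝ).uniformContinuous_of_continuous (hφ.continuous_fderiv one_ne_zero)) hB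
    simp_rw [← fderiv_normed_convolution hφ hsupp] at hfderiv
    exact (InnerProductSpace.toDual ℝ E).symm.isometry.uniformContinuous.comp_tendstoUniformly
      hfderiv

lemma tendsto_integral_inner_of_tendstoUniformly {V : Type*} [NormedAddCommGroup V]
    [InnerProductSpace ℝ V] {μ : Measure E} {G : E → V} (hG : LocallyIntegrable G μ)
    {K : Set E} (hK : IsCompact K) {Φ : ℕ → E → V} {Ψ : E → V} (hΦ : ∀ k, Continuous (Φ k))
    (hΦK : ∀ k, ∀ x ∉ K, Φ k x = 0) (hlim : TendstoUniformly Φ Ψ atTop) :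
    Tendsto (fun k ↦ ∫ x, ⟪G x, Φ k x⟫ ∂μ) atTop (𝓝 (∫ x, ⟪G x, Ψ x⟫ ∂μ)) := by
  have hΨ : Continuous Ψ := hlim.continuous (.of_forall hΦ)
  obtain ⟨M, hM⟩ := hK.exists_bound_of_continuousOn hΨ.continuousOn
  refine tendsto_integral_filter_of_dominated_convergence
    (K.indicator fun x ↦ ‖G x‖ * (M + 1)) (.of_forall fun k ↦ ?_) ?_ ?_ (.of_forall fun x ↦ ?_)
  · exact hG.aestronglyMeasurable.inner (hΦ k).aestronglyMeasurable
  · filter_upwards [Metric.tendstoUniformly_iff.1 hlim 1 one_pos] with k hk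
    refine .of_forall fun x ↦ ?_
    by_cases hx : x ∈ K
    · have hΦM : ‖Φ k x‖ ≤ M + 1 := by
        have := norm_le_norm_add_norm_sub' (Φ k x) (Ψ x)
        rw [← dist_eq_norm, dist_comm] at this
        linarith [hM x hx, hk x]
      rw [indicator_of_mem hx]
      exact (norm_inner_le_norm _ _).trans (by gcongr)
    · simp only [hΦK k x hx, inner_zero_right, norm_zero, indicator_of_notMem hx, le_refl]
  · rw [integrable_indicator_iff hK.measurableSet]
    exact (hG.integrableOn_isCompact hK).norm.mul_const _
  · exact tendsto_const_nhds.inner (hlim.tendsto_at x)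

theorem integral_inner_gradient_le_of_forall_contDiff_infty {μ : Measure E} {X : E → E}
    {c : E → ℝ} (hX : LocallyIntegrable X μ) (hc : LocallyIntegrable c μ)
    (hweak : ∀ φ : E → ℝ, ContDiff ℝ (⊤ : ℕ∞) φ → HasCompactSupport φ → 0 ≤ φ →
      ∫ x, ⟪X x, ∇ φ x⟫ ∂μ ≤ ∫ x, c x * φ x ∂μ)
    {φ : E → ℝ} (hφ : ContDiff ℝ 1 φ) (hsupp : HasCompactSupport φ) (hφ0 : 0 ≤ φ) :
    ∫ x, ⟪X x, ∇ φ x⟫ ∂μ ≤ ∫ x, c x * φ x ∂μ := by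
  obtain ⟨K, ψ, hK, hψ, hψφ, hgrad⟩ := exists_contDiff_tendstoUniformly_gradient hφ hsupp hφ0
  have hψK (k : ℕ) (x : E) (hx : x ∉ K) : x ∉ tsupport (ψ k) := fun h ↦ hx ((hψ k).2.1 h)
  have hψ1 (k : ℕ) : ContDiff ℝ 1 (ψ k) := (hψ k).1.of_le (mod_cast le_top)
  have hleft := tendsto_integral_inner_of_tendstoUniformly hX hK
    (fun k ↦ continuous_gradient (hψ1 k))
    (fun k x hx ↦ gradient_eq_zero_of_notMem_tsupport (hψK k x hx)) hgrad
  have hright := tendsto_integral_inner_of_tendstoUniformly hc hK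
    (fun k ↦ (hψ k).1.continuous) (fun k x hx ↦ image_eq_zero_of_notMem_tsupport (hψK k x hx)) hψφ
  have hinner (s t : ℝ) : ⟪s, t⟫ = s * t := mul_comm t s
  simp only [hinner] at hright
  exact le_of_tendsto_of_tendsto' hleft hright fun k ↦
    hweak _ (hψ k).1 (hK.of_isClosed_subset (isClosed_tsupport _) (hψ k).2.1) (hψ k).2.2

end TestFunctions

section Truncation

lemma hasDerivAt_max_zero_rpow {m : ℝ} (hm : 1 < m) (t : ℝ) :
    HasDerivAt (fun t : ℝ ↦ max t 0 ^ m) (m * max t 0 ^ (m - 1)) t := by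
  have hm0 : m ≠ 0 := by positivity
  have hm1 : m - 1 ≠ 0 := by linarith
  rcases lt_trichotomy t 0 with ht | rfl | ht
  · have hloc : (fun t : ℝ ↦ max t 0 ^ m) =ᶠ[𝓝 t] fun _ ↦ 0 := by
      filter_upwards [Iio_mem_nhds ht] with y hy
      rw [max_eq_right (le_of_lt hy), Real.zero_rpow hm0]
    rw [max_eq_right ht.le, Real.zero_rpow hm1, mul_zero]
    exact (hasDerivAt_const t (0 : ℝ)).congr_of_eventuallyEq hloc
  · have habs : HasDerivAt (fun t : ℝ ↦ |t| ^ m) 0 0 := by simpa using hasDerivAt_abs_rpow 0 hm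
    rw [max_self, Real.zero_rpow hm1, mul_zero]
    rw [hasDerivAt_iff_isLittleO] at habs ⊢
    refine (Asymptotics.IsBigO.of_norm_le fun x ↦ ?_).trans_isLittleO habs
    simp only [max_self, abs_zero, Real.zero_rpow hm0, sub_zero, smul_zero]
    rw [Real.norm_of_nonneg (by positivity)]
    gcongr
    exact max_le (le_abs_self x) (abs_nonneg x)
  · have hloc : (fun t : ℝ ↦ max t 0 ^ m) =ᶠ[𝓝 t] fun t ↦ t ^ m := by
      filter_upwards [Ioi_mem_nhds ht] with y hy
      rw [max_eq_left (le_of_lt hy)]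
    rw [max_eq_left ht.le]
    exact (Real.hasDerivAt_rpow_const (Or.inl ht.ne')).congr_of_eventuallyEq hloc

/-- The truncation `(z - s)₊` of `z` above the level `s`, extended by zero outside `U`. It is as
regular as `(z - s)₊` whenever `z < s` on the frontier of `U`. -/
def trunc {X : Type*} (U : Set X) (z : X → ℝ) (s : ℝ) : X → ℝ :=
  U.indicator fun x ↦ max (z x - s) 0

namespace trunc

variable {X : Type*} {U : Set X} {z : X → ℝ} {s : ℝ} {x : X}

lemma nonneg (U : Set X) (z : X → ℝ) (s : ℝ) (x : X) : 0 ≤ trunc U z s x :=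
  indicator_nonneg (fun _ _ ↦ le_max_right _ _) x

lemma of_mem (hx : x ∈ U) : trunc U z s x = max (z x - s) 0 :=
  indicator_of_mem hx _

lemma of_notMem (hx : x ∉ U) : trunc U z s x = 0 :=
  indicator_of_notMem hx _

lemma eq_zero_of_le (hx : z x ≤ s) : trunc U z s x = 0 :=
  indicator_apply_eq_zero.2 fun _ ↦ max_eq_right (sub_nonpos.2 hx)

lemma eq_sub_of_mem (hx : x ∈ U) (hs : s ≤ z x) : trunc U z s x = z x - s := by
  rw [of_mem hx, max_eq_left (sub_nonneg.2 hs)]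

lemma pos_iff : 0 < trunc U z s x ↔ x ∈ U ∧ s < z x := by
  by_cases hx : x ∈ U
  · simp only [of_mem hx, lt_max_iff, sub_pos, lt_self_iff_false, or_false, hx, true_and]
  · simp only [of_notMem hx, lt_self_iff_false, hx, false_and]

lemma hasCompactSupport [PseudoMetricSpace X] [ProperSpace X] (hU : Bornology.IsBounded U) :
    HasCompactSupport (trunc U z s) :=
  .intro hU.isCompact_closure fun _ hx ↦ of_notMem fun hxU ↦ hx (subset_closure hxU)

lemma hasCompactSupport_rpow [PseudoMetricSpace X] [ProperSpace X] (hU : Bornology.IsBounded U)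
    {m : ℝ} (hm : m ≠ 0) : HasCompactSupport fun x ↦ trunc U z s x ^ m :=
  (hasCompactSupport hU).comp_left (g := (· ^ m)) (Real.zero_rpow hm)

section Topology

variable [TopologicalSpace X]

lemma eventuallyEq_of_mem (hU : IsOpen U) (hx : x ∈ U) :
    trunc U z s =ᶠ[𝓝 x] fun x ↦ max (z x - s) 0 := by
  filter_upwards [hU.mem_nhds hx] with y hy using of_mem hy

lemma eventuallyEq_zero_of_notMem (hz : Continuous z) (hU : IsOpen U)
    (hs : ∀ x ∈ frontier U, z x < s) (hx : x ∉ U) : trunc U z s =ᶠ[𝓝 x] fun _ ↦ 0 := by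
  by_cases hcl : x ∈ closure U
  · have hxs : z x < s := hs x (hU.frontier_eq ▸ ⟨hcl, hx⟩)
    filter_upwards [hz.continuousAt.eventually_lt continuousAt_const hxs] with y hy
    exact eq_zero_of_le hy.le
  · filter_upwards [isClosed_closure.isOpen_compl.mem_nhds hcl] with y hy
    exact of_notMem fun hyU ↦ hy (subset_closure hyU)

lemma continuous (hz : Continuous z) (hU : IsOpen U) (hs : ∀ x ∈ frontier U, z x < s) :
    Continuous (trunc U z s) := by
  refine continuous_iff_continuousAt.2 fun x ↦ ?_
  by_cases hx : x ∈ U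
  · exact ContinuousAt.congr (by fun_prop) (eventuallyEq_of_mem hU hx).symm
  · exact continuousAt_const.congr (eventuallyEq_zero_of_notMem hz hU hs hx).symm

end Topology

section Calculus

variable {E : Type*} [NormedAddCommGroup E] [InnerProductSpace ℝ E] {U : Set E} {z : E → ℝ} {m : ℝ}

lemma hasFDerivAt_rpow (hz : ContDiff ℝ 1 z) (hU : IsOpen U) (hs : ∀ x ∈ frontier U, z x < s)
    (hm : 1 < m) (x : E) :
    HasFDerivAt (fun x ↦ trunc U z s x ^ m) ((m * trunc U z s x ^ (m - 1)) • fderiv ℝ z x) x := by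
  by_cases hx : x ∈ U
  · have hpos : HasFDerivAt (fun x ↦ max (z x - s) 0 ^ m)
        ((m * max (z x - s) 0 ^ (m - 1)) • fderiv ℝ z x) x :=
      HasDerivAt.comp_hasFDerivAt x (f := fun x ↦ z x - s) (hasDerivAt_max_zero_rpow hm (z x - s))
        ((hz.differentiable one_ne_zero x).hasFDerivAt.sub_const s)
    rw [of_mem hx]
    exact hpos.congr_of_eventuallyEq ((eventuallyEq_of_mem hU hx).fun_comp (· ^ m))
  · rw [of_notMem hx, Real.zero_rpow (by linarith), mul_zero, zero_smul]
    refine (hasFDerivAt_const (0 : ℝ) x).congr_of_eventuallyEq ?_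
    filter_upwards [eventuallyEq_zero_of_notMem hz.continuous hU hs hx] with y hy
    rw [hy, Real.zero_rpow (by linarith)]

lemma contDiff_rpow (hz : ContDiff ℝ 1 z) (hU : IsOpen U) (hs : ∀ x ∈ frontier U, z x < s)
    (hm : 1 < m) : ContDiff ℝ 1 fun x ↦ trunc U z s x ^ m := by
  rw [contDiff_one_iff_fderiv, funext fun x ↦ (hasFDerivAt_rpow hz hU hs hm x).fderiv]
  have hpow : Continuous fun x ↦ trunc U z s x ^ (m - 1) :=
    (continuous hz.continuous hU hs).rpow_const fun _ ↦ Or.inr (by linarith)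
  exact ⟨fun x ↦ (hasFDerivAt_rpow hz hU hs hm x).differentiableAt,
    (continuous_const.mul hpow).smul (hz.continuous_fderiv one_ne_zero)⟩

lemma gradient_rpow [CompleteSpace E] (hz : ContDiff ℝ 1 z) (hU : IsOpen U)
    (hs : ∀ x ∈ frontier U, z x < s) (hm : 1 < m) (x : E) :
    ∇ (fun x ↦ trunc U z s x ^ m) x = (m * trunc U z s x ^ (m - 1)) • ∇ z x := by
  rw [gradient, (hasFDerivAt_rpow hz hU hs hm x).fderiv, map_smul, gradient]

end Calculus

end trunc

end Truncation

lemma LocBdd.locallyIntegrable {n : ℕ} {f : Euc n → ℝ} (hf : LocBdd f) (hmeas : Measurable f)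
    (hf0 : ∀ x, 0 ≤ f x) : LocallyIntegrable f := by
  refine locallyIntegrable_iff.2 fun K hK ↦ ?_
  obtain ⟨M, hM⟩ := hf K hK
  refine Measure.integrableOn_of_bounded (M := M) hK.measure_lt_top.ne
    hmeas.aestronglyMeasurable ?_
  filter_upwards [ae_restrict_mem hK.measurableSet] with x hx
  rw [Real.norm_of_nonneg (hf0 x)]
  exact hM x hx

lemma integrable_inner_of_hasCompactSupport {X V : Type*} [TopologicalSpace X] [T2Space X]
    [SecondCountableTopology X] [MeasurableSpace X] [OpensMeasurableSpace X] {μ : Measure X}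
    [NormedAddCommGroup V] [InnerProductSpace ℝ V] {G Φ : X → V} (hG : LocallyIntegrable G μ)
    (hΦ : Continuous Φ) (hsupp : HasCompactSupport Φ) : Integrable (fun x ↦ ⟪G x, Φ x⟫) μ := by
  have hnorm : LocallyIntegrable (fun x ↦ ‖G x‖) μ :=
    hG.mono hG.aestronglyMeasurable.norm (.of_forall fun x ↦ (norm_norm (G x)).le)
  refine (hnorm.integrable_smul_left_of_hasCompactSupport hΦ.norm hsupp.norm).mono'
    (hG.aestronglyMeasurable.inner hΦ.aestronglyMeasurable) (.of_forall fun x ↦ ?_)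
  exact (norm_inner_le_norm _ _).trans_eq (mul_comm _ _)

/-- `u` is a `C¹` weak solution of `div A(x, Du) + b(x) |Du|^α ≥ f(x)` on `ℝⁿ`, under the structural
conditions on `A` and with nonnegative, locally bounded data. The nonlinearity `q(x) g(u)` enters
only through its values `f`, so the local theory of the inequality does not see it. -/
structure IsSubsolution {n : ℕ} (p C₁ C₂ α : ℝ) (A : Euc n → Euc n → Euc n) (b f u : Euc n → ℝ) :
    Prop where
  one_lt_p : 1 < p
  C₁_pos : 0 < C₁
  C₂_pos : 0 < C₂
  p_sub_one_le : p - 1 ≤ α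
  α_le : α ≤ p
  structCond : StructCond A p C₁ C₂
  b_measurable : Measurable b
  b_nonneg : ∀ x, 0 ≤ b x
  b_locBdd : LocBdd b
  f_measurable : Measurable f
  f_nonneg : ∀ x, 0 ≤ f x
  f_locBdd : LocBdd f
  contDiff : ContDiff ℝ 1 u
  isWeakSol : IsWeakSol A b α f univ u

namespace IsSubsolution

variable {n : ℕ} {p C₁ C₂ α : ℝ} {A : Euc n → Euc n → Euc n} {b f u : Euc n → ℝ}
  (hu : IsSubsolution p C₁ C₂ α A b f u)
include hu

lemma α_pos : 0 < α := by linarith [hu.one_lt_p, hu.p_sub_one_le]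

lemma coercive (x : Euc n) : C₁ * ‖∇ u x‖ ^ p ≤ ⟪A x (∇ u x), ∇ u x⟫ := by
  rw [real_inner_comm]
  exact (hu.structCond.2 x _).1

lemma norm_flux_le (x : Euc n) : ‖A x (∇ u x)‖ ≤ C₂ * ‖∇ u x‖ ^ (p - 1) :=
  (hu.structCond.2 x _).2

lemma locallyIntegrable_flux : LocallyIntegrable fun x ↦ A x (∇ u x) := by
  have hmeas : AEStronglyMeasurable fun x ↦ A x (∇ u x) :=
    (hu.structCond.1.comp
      (measurable_id.prodMk (continuous_gradient hu.contDiff).measurable)).aestronglyMeasurable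
  have hbound : Continuous fun x ↦ C₂ * ‖∇ u x‖ ^ (p - 1) :=
    ((continuous_gradient hu.contDiff).norm.rpow_const
      fun _ ↦ Or.inr (by linarith [hu.one_lt_p])).const_mul _
  exact hbound.locallyIntegrable.mono hmeas
    (.of_forall fun x ↦ (hu.norm_flux_le x).trans (le_abs_self _))

lemma locallyIntegrable_lowerOrder :
    LocallyIntegrable fun x ↦ b x * ‖∇ u x‖ ^ α - f x := by
  refine LocallyIntegrable.sub ?_ (hu.f_locBdd.locallyIntegrable hu.f_measurable hu.f_nonneg)
  exact (hu.b_locBdd.locallyIntegrable hu.b_measurable hu.b_nonneg).mul_continuous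
    ((continuous_gradient hu.contDiff).norm.rpow_const fun _ ↦ Or.inr hu.α_pos.le)

lemma integral_inner_gradient_le {φ : Euc n → ℝ} (hφ : ContDiff ℝ 1 φ)
    (hsupp : HasCompactSupport φ) (hφ0 : 0 ≤ φ) :
    ∫ x, ⟪A x (∇ u x), ∇ φ x⟫ ≤ ∫ x, (b x * ‖∇ u x‖ ^ α - f x) * φ x := by
  refine integral_inner_gradient_le_of_forall_contDiff_infty hu.locallyIntegrable_flux
    hu.locallyIntegrable_lowerOrder (fun ψ hψ hψc hψ0 ↦ ?_) hφ hsupp hφ0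
  have hweak := hu.isWeakSol ψ hψ hψc (subset_univ _) hψ0
  simp only [setIntegral_univ] at hweak
  have hb_int : Integrable fun x ↦ b x * ‖∇ u x‖ ^ α * ψ x :=
    ((hu.b_locBdd.locallyIntegrable hu.b_measurable hu.b_nonneg).mul_continuous
      ((continuous_gradient hu.contDiff).norm.rpow_const fun _ ↦ Or.inr hu.α_pos.le))
      |>.integrable_smul_right_of_hasCompactSupport hψ.continuous hψc
  have hf_int : Integrable fun x ↦ f x * ψ x :=
    (hu.f_locBdd.locallyIntegrable hu.f_measurable hu.f_nonneg)
      |>.integrable_smul_right_of_hasCompactSupport hψ.continuous hψc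
  simp only [sub_mul]
  rw [integral_sub hb_int hf_int]
  linarith

theorem integral_nonpos_of_le_trunc {U : Set (Euc n)} (hU : IsOpen U)
    (hbdd : Bornology.IsBounded U) {z : Euc n → ℝ} (hz : ContDiff ℝ 1 z) {s : ℝ}
    (hs : ∀ x ∈ frontier U, z x < s) {P : Euc n → ℝ} (hP : Integrable P)
    (hle : ∀ᵐ x, P x ≤ 2 * trunc U z s x * ⟪A x (∇ u x), ∇ z x⟫ -
      (b x * ‖∇ u x‖ ^ α - f x) * trunc U z s x ^ (2 : ℝ)) :
    ∫ x, P x ≤ 0 := by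
  have hφ : ContDiff ℝ 1 fun x ↦ trunc U z s x ^ (2 : ℝ) :=
    trunc.contDiff_rpow hz hU hs one_lt_two
  have hsupp : HasCompactSupport fun x ↦ trunc U z s x ^ (2 : ℝ) :=
    trunc.hasCompactSupport_rpow hbdd two_ne_zero
  have hinner (x : Euc n) : ⟪A x (∇ u x), ∇ (fun x ↦ trunc U z s x ^ (2 : ℝ)) x⟫ =
      2 * trunc U z s x * ⟪A x (∇ u x), ∇ z x⟫ := by
    rw [trunc.gradient_rpow hz hU hs one_lt_two, inner_smul_right]
    norm_num
  have hflux_int := integrable_inner_of_hasCompactSupport hu.locallyIntegrable_flux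
    (continuous_gradient hφ) (hasCompactSupport_gradient hsupp)
  have hlower_int : Integrable fun x ↦ (b x * ‖∇ u x‖ ^ α - f x) * trunc U z s x ^ (2 : ℝ) :=
    hu.locallyIntegrable_lowerOrder.integrable_smul_right_of_hasCompactSupport hφ.continuous hsupp
  have htest := hu.integral_inner_gradient_le hφ hsupp
    fun x ↦ Real.rpow_nonneg (trunc.nonneg U z s x) _
  simp only [hinner] at htest hflux_int
  have hmono := integral_mono_ae hP (hflux_int.sub hlower_int) hle
  rw [integral_sub' hflux_int hlower_int] at hmono
  linarith

end IsSubsolution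

lemma mul_rpow_sub_one_mul_le {p K D w ε : ℝ} (hp : 1 < p) (hK : 0 ≤ K) (hD : 0 ≤ D) (hw : 0 ≤ w)
    (hε : 0 < ε) :
    K * D ^ (p - 1) * w ≤ ε * D ^ p + K * (K / ε) ^ (p - 1) * w ^ p := by
  have hpow {t : ℝ} (ht : 0 ≤ t) : t ^ p = t ^ (p - 1) * t := by
    rw [← Real.rpow_add_one' ht (by linarith), sub_add_cancel]
  rcases le_total (K * w) (ε * D) with h | h
  · have : K * D ^ (p - 1) * w ≤ ε * D ^ p :=
      calc K * D ^ (p - 1) * w = D ^ (p - 1) * (K * w) := by ring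
        _ ≤ D ^ (p - 1) * (ε * D) := by gcongr
        _ = ε * D ^ p := by rw [hpow hD]; ring
    have : 0 ≤ K * (K / ε) ^ (p - 1) * w ^ p := by positivity
    linarith
  · have hDw : D ≤ K / ε * w := by rw [div_mul_eq_mul_div, le_div_iff₀ hε]; linarith
    have : K * D ^ (p - 1) * w ≤ K * (K / ε) ^ (p - 1) * w ^ p :=
      calc K * D ^ (p - 1) * w ≤ K * (K / ε * w) ^ (p - 1) * w := by gcongr
        _ = K * (K / ε) ^ (p - 1) * w ^ p := by
          rw [Real.mul_rpow (by positivity) hw, hpow hw]; ring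
    have : 0 ≤ ε * D ^ p := by positivity
    linarith

lemma rpow_le_rpow_sub_one_add_rpow {p α D : ℝ} (hp : 1 < p) (hα₁ : p - 1 ≤ α) (hα₂ : α ≤ p)
    (hD : 0 ≤ D) : D ^ α ≤ D ^ (p - 1) + D ^ p := by
  have hD₁ : 0 ≤ D ^ (p - 1) := by positivity
  have hD₂ : 0 ≤ D ^ p := by positivity
  rcases le_total D 1 with h | h
  · linarith [Real.rpow_le_rpow_of_exponent_ge' hD h (by linarith) hα₁]
  · linarith [Real.rpow_le_rpow_of_exponent_le h hα₂]

section RegularSuperlevel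

variable {E : Type*} [NormedAddCommGroup E] [InnerProductSpace ℝ E] [CompleteSpace E]

/-- The part of the superlevel set `{u > s}` in `U` which contains no critical point of `u`. The
gradient of a power of `(u - s)₊` is supported there, and its measure vanishes as `s` tends to
`max u` even if the maximum is attained on a set of positive measure. -/
def regularSuperlevel (U : Set E) (u : E → ℝ) (s : ℝ) : Set E :=
  {x ∈ U | s < u x ∧ ∇ u x ≠ 0}

variable {U : Set E} {u : E → ℝ}

lemma isOpen_regularSuperlevel (hU : IsOpen U) (hu : ContDiff ℝ 1 u) (s : ℝ) :
    IsOpen (regularSuperlevel U u s) :=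
  hU.inter ((isOpen_lt continuous_const hu.continuous).inter
    (isOpen_ne_fun (continuous_gradient hu) continuous_const))

lemma mem_regularSuperlevel_of_ne_zero {s : ℝ} {x : E} (hw : trunc U u s x ≠ 0)
    (hD : ∇ u x ≠ 0) : x ∈ regularSuperlevel U u s :=
  ⟨not_imp_comm.1 trunc.of_notMem hw, not_le.1 (mt trunc.eq_zero_of_le hw), hD⟩

lemma tendsto_measureReal_regularSuperlevel [MeasurableSpace E] [OpensMeasurableSpace E]
    {μ : Measure E} (hU : IsOpen U) (hμ : μ U ≠ ∞) (hu : ContDiff ℝ 1 u) {m : ℝ}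
    (hm : ∀ x ∈ U, u x ≤ m) :
    Tendsto (fun d ↦ μ.real (regularSuperlevel U u (m - d))) (𝓝[>] 0) (𝓝 0) := by
  have hfin (s : ℝ) : μ (regularSuperlevel U u s) ≠ ∞ :=
    measure_ne_top_of_subset (sep_subset _ _) hμ
  have hempty : ⋂ d > (0 : ℝ), regularSuperlevel U u (m - d) = ∅ := by
    refine eq_empty_of_forall_notMem fun y hy ↦ ?_
    simp only [mem_iInter] at hy
    have hyU : y ∈ U := (hy 1 one_pos).1
    have hmy : m ≤ u y := le_of_forall_pos_lt_add fun d hd ↦ by linarith [(hy d hd).2.1]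
    have hmax : IsLocalMax u y := by
      filter_upwards [hU.mem_nhds hyU] with x hx using (hm x hx).trans hmy
    exact (hy 1 one_pos).2.2 (by rw [gradient, hmax.fderiv_eq_zero, map_zero])
  have hlim := tendsto_measure_biInter_gt (μ := μ) (a := (0 : ℝ))
    (s := fun d ↦ regularSuperlevel U u (m - d))
    (fun d _ ↦ (isOpen_regularSuperlevel hU hu _).measurableSet.nullMeasurableSet)
    (fun d d' _ hd x hx ↦ ⟨hx.1, by linarith [hx.2.1], hx.2.2⟩) ⟨1, one_pos, hfin _⟩
  rw [hempty, measure_empty] at hlim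
  exact (ENNReal.tendsto_toReal_zero_iff fun d ↦ hfin _).2 hlim

lemma eventually_mul_measureReal_regularSuperlevel_rpow_lt_one [MeasurableSpace E]
    [OpensMeasurableSpace E] {μ : Measure E} (hU : IsOpen U) (hμ : μ U ≠ ∞) (hu : ContDiff ℝ 1 u)
    {m κ : ℝ} (hm : ∀ x ∈ U, u x ≤ m) (hκ : 0 < κ) (S c : ℝ) :
    ∀ᶠ d in 𝓝[>] 0, S * μ.real (regularSuperlevel U u (m - d)) ^ κ * c < 1 := by
  have hlim := (tendsto_measureReal_regularSuperlevel hU hμ hu hm).rpow_const (p := κ)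
    (Or.inr hκ.le)
  rw [Real.zero_rpow hκ.ne'] at hlim
  have hlim_mul := (hlim.const_mul S).mul_const c
  rw [mul_zero, zero_mul] at hlim_mul
  exact hlim_mul.eventually (gt_mem_nhds one_pos)

end RegularSuperlevel

section MaximumPrinciple

variable {n : ℕ} {p C₁ C₂ α : ℝ} {A : Euc n → Euc n → Euc n} {b f u : Euc n → ℝ}
  {U : Set (Euc n)} {B s : ℝ}

lemma continuous_trunc_mul_norm_gradient_rpow (hu : ContDiff ℝ 1 u) (hU : IsOpen U)
    (hs : ∀ x ∈ frontier U, u x < s) (hp : 0 ≤ p) :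
    Continuous fun x ↦ trunc U u s x * ‖∇ u x‖ ^ p :=
  (trunc.continuous hu.continuous hU hs).mul
    ((continuous_gradient hu).norm.rpow_const fun _ ↦ Or.inr hp)

lemma integrable_trunc_mul_norm_gradient_rpow (hu : ContDiff ℝ 1 u) (hU : IsOpen U)
    (hbdd : Bornology.IsBounded U) (hs : ∀ x ∈ frontier U, u x < s) (hp : 0 ≤ p) :
    Integrable fun x ↦ trunc U u s x * ‖∇ u x‖ ^ p :=
  (continuous_trunc_mul_norm_gradient_rpow hu hU hs hp).integrable_of_hasCompactSupport
    (trunc.hasCompactSupport hbdd).mul_right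

lemma integrable_trunc_rpow (hu : ContDiff ℝ 1 u) (hU : IsOpen U) (hbdd : Bornology.IsBounded U)
    (hs : ∀ x ∈ frontier U, u x < s) (hp : 1 < p) : Integrable fun x ↦ trunc U u s x ^ p :=
  (trunc.contDiff_rpow hu hU hs hp).continuous.integrable_of_hasCompactSupport
    (trunc.hasCompactSupport_rpow hbdd (by linarith))

namespace IsSubsolution

lemma const_mul_trunc_mul_norm_gradient_rpow_le (hu : IsSubsolution p C₁ C₂ α A b f u)
    (hB : 0 ≤ B) (hbB : ∀ x ∈ U, b x ≤ B) {x : Euc n} (hsmall : B * trunc U u s x ≤ C₁ / 2) :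
    C₁ * (trunc U u s x * ‖∇ u x‖ ^ p) - B * (B / (C₁ / 2)) ^ (p - 1) *
        (regularSuperlevel U u s).indicator (fun y ↦ trunc U u s y ^ (p + 1)) x ≤
      2 * trunc U u s x * ⟪A x (∇ u x), ∇ u x⟫ -
        (b x * ‖∇ u x‖ ^ α - f x) * trunc U u s x ^ (2 : ℝ) := by
  have hp := hu.one_lt_p
  have hC₁ := hu.C₁_pos
  have hw := trunc.nonneg U u s x
  have hind : 0 ≤ (regularSuperlevel U u s).indicator (fun y ↦ trunc U u s y ^ (p + 1)) x :=
    indicator_nonneg (fun y _ ↦ Real.rpow_nonneg (trunc.nonneg U u s y) _) x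
  have hK : 0 ≤ B * (B / (C₁ / 2)) ^ (p - 1) *
      (regularSuperlevel U u s).indicator (fun y ↦ trunc U u s y ^ (p + 1)) x := by positivity
  have hcoer := mul_le_mul_of_nonneg_left (hu.coercive x) hw
  have hf : 0 ≤ f x * trunc U u s x ^ (2 : ℝ) := mul_nonneg (hu.f_nonneg x) (by positivity)
  rcases eq_or_ne (trunc U u s x) 0 with hw0 | hw0
  · rw [hw0, Real.zero_rpow two_ne_zero]
    linarith
  rcases eq_or_ne (∇ u x) 0 with hD0 | hD0
  · rw [hD0, norm_zero, Real.zero_rpow (by linarith), Real.zero_rpow hu.α_pos.ne', inner_zero_right]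
    linarith
  have hxT := mem_regularSuperlevel_of_ne_zero hw0 hD0
  have hyoung := mul_le_mul_of_nonneg_left
    (mul_rpow_sub_one_mul_le hp hB (norm_nonneg (∇ u x)) hw (half_pos hC₁)) hw
  have hbD : b x * ‖∇ u x‖ ^ α ≤ B * (‖∇ u x‖ ^ (p - 1) + ‖∇ u x‖ ^ p) :=
    mul_le_mul (hbB x hxT.1) (rpow_le_rpow_sub_one_add_rpow hp hu.p_sub_one_le hu.α_le
      (norm_nonneg _)) (by positivity) hB
  have hbDw := mul_le_mul_of_nonneg_right hbD (mul_nonneg hw hw)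
  have hBw := mul_le_mul_of_nonneg_right hsmall
    (show 0 ≤ trunc U u s x * ‖∇ u x‖ ^ p by positivity)
  rw [indicator_of_mem hxT, Real.rpow_add_one' hw (by linarith)] at *
  rw [Real.rpow_two] at *
  linarith

lemma integral_trunc_mul_norm_gradient_rpow_le (hu : IsSubsolution p C₁ C₂ α A b f u)
    (hU : IsOpen U) (hbdd : Bornology.IsBounded U) (hs : ∀ x ∈ frontier U, u x < s)
    (hB : 0 ≤ B) (hbB : ∀ x ∈ U, b x ≤ B) (hsmall : ∀ x, B * trunc U u s x ≤ C₁ / 2) :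
    C₁ * ∫ x, trunc U u s x * ‖∇ u x‖ ^ p ≤ B * (B / (C₁ / 2)) ^ (p - 1) *
      ∫ x in regularSuperlevel U u s, trunc U u s x ^ (p + 1) := by
  have hT := (isOpen_regularSuperlevel hU hu.contDiff s).measurableSet
  have hD_int := integrable_trunc_mul_norm_gradient_rpow hu.contDiff hU hbdd hs
    (zero_le_one.trans hu.one_lt_p.le)
  have hw_int : Integrable fun x ↦ trunc U u s x ^ (p + 1) :=
    integrable_trunc_rpow hu.contDiff hU hbdd hs (by linarith [hu.one_lt_p])
  have henergy := hu.integral_nonpos_of_le_trunc hU hbdd hu.contDiff hs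
    ((hD_int.const_mul C₁).sub ((hw_int.indicator hT).const_mul (B * (B / (C₁ / 2)) ^ (p - 1))))
    (.of_forall fun x ↦ hu.const_mul_trunc_mul_norm_gradient_rpow_le hB hbB (hsmall x))
  rw [integral_sub' (hD_int.const_mul C₁) ((hw_int.indicator hT).const_mul _), integral_const_mul,
    integral_const_mul, integral_indicator hT] at henergy
  linarith

end IsSubsolution

lemma norm_fderiv_trunc_rpow_le (hu : ContDiff ℝ 1 u) (hU : IsOpen U)
    (hs : ∀ x ∈ frontier U, u x < s) (hp : 1 < p) (x : Euc n) :
    ‖fderiv ℝ (fun x ↦ trunc U u s x ^ (p + 1)) x‖ ≤ (p + 1) * (trunc U u s x * ‖∇ u x‖ ^ p +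
      (regularSuperlevel U u s).indicator (fun y ↦ trunc U u s y ^ (p + 1)) x) := by
  have hw := trunc.nonneg U u s x
  have hind : 0 ≤ (regularSuperlevel U u s).indicator (fun y ↦ trunc U u s y ^ (p + 1)) x :=
    indicator_nonneg (fun y _ ↦ Real.rpow_nonneg (trunc.nonneg U u s y) _) x
  rw [← norm_gradient_eq_norm_fderiv, trunc.gradient_rpow hu hU hs (by linarith), norm_smul,
    Real.norm_of_nonneg (by positivity), mul_assoc, add_sub_cancel_right]
  gcongr
  rcases eq_or_ne (trunc U u s x) 0 with hw0 | hw0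
  · rw [hw0, Real.zero_rpow (by linarith)]
    linarith
  rcases eq_or_ne (∇ u x) 0 with hD0 | hD0
  · rw [hD0, norm_zero, Real.zero_rpow (by linarith)]
    linarith
  rw [indicator_of_mem (mem_regularSuperlevel_of_ne_zero hw0 hD0),
    Real.rpow_add_one' hw (by linarith)]
  rcases le_total ‖∇ u x‖ (trunc U u s x) with hDw | hwD
  · have : trunc U u s x ^ p * ‖∇ u x‖ ≤ trunc U u s x ^ p * trunc U u s x := by gcongr
    have : 0 ≤ trunc U u s x * ‖∇ u x‖ ^ p := by positivity
    linarith
  · have hpow {t : ℝ} (ht : 0 ≤ t) : t ^ p = t ^ (p - 1) * t := by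
      rw [← Real.rpow_add_one' ht (by linarith), sub_add_cancel]
    have : trunc U u s x ^ p * ‖∇ u x‖ ≤ trunc U u s x * ‖∇ u x‖ ^ p :=
      calc trunc U u s x ^ p * ‖∇ u x‖
          = trunc U u s x ^ (p - 1) * (trunc U u s x * ‖∇ u x‖) := by rw [hpow hw]; ring
        _ ≤ ‖∇ u x‖ ^ (p - 1) * (trunc U u s x * ‖∇ u x‖) := by gcongr
        _ = trunc U u s x * ‖∇ u x‖ ^ p := by rw [hpow (norm_nonneg _)]; ring
    have : 0 ≤ trunc U u s x ^ p * trunc U u s x := by positivity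
    linarith

namespace IsSubsolution

lemma integral_norm_fderiv_trunc_rpow_le (hu : IsSubsolution p C₁ C₂ α A b f u)
    (hU : IsOpen U) (hbdd : Bornology.IsBounded U) (hs : ∀ x ∈ frontier U, u x < s)
    (hB : 0 ≤ B) (hbB : ∀ x ∈ U, b x ≤ B) (hsmall : ∀ x, B * trunc U u s x ≤ C₁ / 2) :
    ∫ x, ‖fderiv ℝ (fun x ↦ trunc U u s x ^ (p + 1)) x‖ ≤
      (p + 1) * (B * (B / (C₁ / 2)) ^ (p - 1) / C₁ + 1) *
        ∫ x in regularSuperlevel U u s, trunc U u s x ^ (p + 1) := by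
  have hp := hu.one_lt_p
  have hT := (isOpen_regularSuperlevel hU hu.contDiff s).measurableSet
  have hD_int := integrable_trunc_mul_norm_gradient_rpow hu.contDiff hU hbdd hs
    (zero_le_one.trans hp.le)
  have hw_int : Integrable ((regularSuperlevel U u s).indicator
      fun x ↦ trunc U u s x ^ (p + 1)) :=
    (integrable_trunc_rpow hu.contDiff hU hbdd hs (by linarith)).indicator hT
  have henergy := hu.integral_trunc_mul_norm_gradient_rpow_le hU hbdd hs hB hbB hsmall
  rw [← le_div_iff₀' hu.C₁_pos, mul_div_right_comm] at henergy
  calc ∫ x, ‖fderiv ℝ (fun x ↦ trunc U u s x ^ (p + 1)) x‖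
      ≤ ∫ x, (p + 1) * (trunc U u s x * ‖∇ u x‖ ^ p +
          (regularSuperlevel U u s).indicator (fun y ↦ trunc U u s y ^ (p + 1)) x) :=
        integral_mono_of_nonneg (.of_forall fun _ ↦ norm_nonneg _)
          ((hD_int.add hw_int).const_mul _)
          (.of_forall (norm_fderiv_trunc_rpow_le hu.contDiff hU hs hp))
    _ = (p + 1) * (∫ x, trunc U u s x * ‖∇ u x‖ ^ p) +
          (p + 1) * ∫ x in regularSuperlevel U u s, trunc U u s x ^ (p + 1) := by
        rw [integral_const_mul, integral_add hD_int hw_int, integral_indicator hT, mul_add]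
    _ ≤ _ := by
        have := mul_le_mul_of_nonneg_left henergy (show 0 ≤ p + 1 by linarith)
        linarith

lemma trunc_mul_norm_gradient_rpow_eq_zero (hu : IsSubsolution p C₁ C₂ α A b f u)
    (hU : IsOpen U) (hbdd : Bornology.IsBounded U) (hs : ∀ x ∈ frontier U, u x < s)
    (hB : 0 ≤ B) (hbB : ∀ x ∈ U, b x ≤ B) (hsmall : ∀ x, B * trunc U u s x ≤ C₁ / 2) {S : ℝ}
    (hsob : ∫ x in regularSuperlevel U u s, trunc U u s x ^ (p + 1) ≤
      S * ∫ x, ‖fderiv ℝ (fun x ↦ trunc U u s x ^ (p + 1)) x‖) (hS : 0 ≤ S)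
    (hS1 : S * ((p + 1) * (B * (B / (C₁ / 2)) ^ (p - 1) / C₁ + 1)) < 1) (x : Euc n) :
    trunc U u s x * ‖∇ u x‖ ^ p = 0 := by
  have hp0 : 0 ≤ p := zero_le_one.trans hu.one_lt_p.le
  set J := ∫ x in regularSuperlevel U u s, trunc U u s x ^ (p + 1) with hJ
  have hJ0 : 0 ≤ J := integral_nonneg fun x ↦ Real.rpow_nonneg (trunc.nonneg U u s x) _
  have hJ_le := hsob.trans (mul_le_mul_of_nonneg_left
    (hu.integral_norm_fderiv_trunc_rpow_le hU hbdd hs hB hbB hsmall) hS)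
  have hJ_zero : J = 0 := by
    by_contra hne
    have hJ_pos : 0 < J := hJ0.lt_of_ne' hne
    rw [← mul_assoc] at hJ_le
    exact (mul_lt_of_lt_one_left hJ_pos hS1).not_ge hJ_le
  have henergy := hu.integral_trunc_mul_norm_gradient_rpow_le hU hbdd hs hB hbB hsmall
  rw [← hJ, hJ_zero, mul_zero] at henergy
  have hnonneg : 0 ≤ fun x ↦ trunc U u s x * ‖∇ u x‖ ^ p := fun x ↦
    mul_nonneg (trunc.nonneg U u s x) (by positivity)
  have hint_zero : ∫ x, trunc U u s x * ‖∇ u x‖ ^ p = 0 :=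
    le_antisymm (nonpos_of_mul_nonpos_right henergy hu.C₁_pos) (integral_nonneg hnonneg)
  have hae := (integral_eq_zero_iff_of_nonneg hnonneg
    (integrable_trunc_mul_norm_gradient_rpow hu.contDiff hU hbdd hs hp0)).1 hint_zero
  exact congrFun ((continuous_trunc_mul_norm_gradient_rpow hu.contDiff hU hs hp0).ae_eq_iff_eq
    volume continuous_const |>.1 hae) x

end IsSubsolution

lemma trunc_eq_zero_of_mul_norm_gradient_rpow_eq_zero [Nontrivial (Euc n)]
    (hu : ContDiff ℝ 1 u) (hU : IsOpen U) (hbdd : Bornology.IsBounded U)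
    (hs : ∀ x ∈ frontier U, u x < s) (hp : p ≠ 0)
    (hzero : ∀ x, trunc U u s x * ‖∇ u x‖ ^ p = 0) (x : Euc n) : trunc U u s x = 0 := by
  have hderiv (x : Euc n) : fderiv ℝ (fun x ↦ trunc U u s x ^ (2 : ℝ)) x = 0 := by
    rw [(trunc.hasFDerivAt_rpow hu hU hs one_lt_two x).fderiv]
    rcases mul_eq_zero.1 (hzero x) with hw | hD
    · rw [hw, Real.zero_rpow (by norm_num), mul_zero, zero_smul]
    · rw [Real.rpow_eq_zero (norm_nonneg _) hp, norm_gradient_eq_norm_fderiv, norm_eq_zero] at hD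
      rw [hD, smul_zero]
  obtain ⟨y, hy⟩ : ∃ y, y ∉ U := by
    by_contra! hall
    exact NormedSpace.unbounded_univ ℝ (Euc n) (eq_univ_of_forall hall ▸ hbdd)
  have hconst := is_const_of_fderiv_eq_zero
    ((trunc.contDiff_rpow hu hU hs one_lt_two).differentiable one_ne_zero) hderiv x y
  simpa only [trunc.of_notMem hy, Real.rpow_two, ne_eq, OfNat.ofNat_ne_zero, not_false_eq_true,
    zero_pow, pow_eq_zero_iff] using hconst

theorem nontrivial_euc (hn : 2 ≤ n) : Nontrivial (Euc n) :=
  nontrivial_of_finrank_pos (R := ℝ) (by rw [finrank_euclideanSpace_fin]; omega)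

theorem IsSubsolution.le_of_frontier_le (hu : IsSubsolution p C₁ C₂ α A b f u) (hn : 2 ≤ n)
    (hU : IsOpen U) (hbdd : Bornology.IsBounded U) {M : ℝ} (hM : ∀ x ∈ frontier U, u x ≤ M)
    {x : Euc n} (hx : x ∈ U) : u x ≤ M := by
  have : Nontrivial (Euc n) := nontrivial_euc hn
  by_contra! hxM
  obtain ⟨x₁, hx₁, hmax⟩ := hbdd.isCompact_closure.exists_isMaxOn ⟨x, subset_closure hx⟩
    hu.contDiff.continuous.continuousOn
  have hmax_U {y : Euc n} (hy : y ∈ U) : u y ≤ u x₁ := hmax (subset_closure hy)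
  have hMm : M < u x₁ := hxM.trans_le (hmax_U hx)
  have hx₁U : x₁ ∈ U := by
    by_contra hnot
    exact (hM x₁ (hU.frontier_eq ▸ ⟨hx₁, hnot⟩)).not_gt hMm
  obtain ⟨B, hbB⟩ := hu.b_locBdd _ hbdd.isCompact_closure
  replace hbB (y : Euc n) (hy : y ∈ U) : b y ≤ B := hbB y (subset_closure hy)
  have hB : 0 ≤ B := (hu.b_nonneg x).trans (hbB x hx)
  obtain ⟨S, hS, hsob⟩ := exists_setIntegral_norm_le_mul_integral_norm_fderiv (F := ℝ)
    (volume : Measure (Euc n)) (by rwa [finrank_euclideanSpace_fin])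
  set c := (p + 1) * (B * (B / (C₁ / 2)) ^ (p - 1) / C₁ + 1)
  have hexp : 0 < 1 / (finrank ℝ (Euc n) : ℝ) :=
    one_div_pos.2 (Nat.cast_pos.2 finrank_pos)
  have hvol := eventually_mul_measureReal_regularSuperlevel_rpow_lt_one (μ := volume) hU
    hbdd.measure_lt_top.ne hu.contDiff (fun y hy ↦ hmax_U hy) hexp S c
  have hBd : ∀ᶠ d : ℝ in 𝓝[>] 0, B * d < C₁ / 2 :=
    nhdsWithin_le_nhds (((continuous_const_mul B).tendsto' 0 0 (mul_zero B)).eventually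
      (gt_mem_nhds (half_pos hu.C₁_pos)))
  obtain ⟨d, hdvol, hdB, hd, hdM⟩ := (hvol.and (hBd.and
    (Ioo_mem_nhdsGT (sub_pos.2 hMm)))).exists
  have hs : ∀ y ∈ frontier U, u y < u x₁ - d := fun y hy ↦ by linarith [hM y hy]
  have hw_le (y : Euc n) : trunc U u (u x₁ - d) y ≤ d :=
    indicator_le' (fun y hy ↦ max_le (by linarith [hmax_U hy]) hd.le) (fun _ _ ↦ hd.le) y
  have hp1 : 1 < p + 1 := by linarith [hu.one_lt_p]
  have hsob_d := hsob _ (trunc.contDiff_rpow hu.contDiff hU hs hp1)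
    (trunc.hasCompactSupport_rpow hbdd (zero_lt_one.trans hp1).ne')
    (regularSuperlevel U u (u x₁ - d))
    (measure_ne_top_of_subset (sep_subset _ _) hbdd.measure_lt_top.ne)
  simp only [Real.norm_of_nonneg (Real.rpow_nonneg (trunc.nonneg U u _ _) _)] at hsob_d
  have hzero := hu.trunc_mul_norm_gradient_rpow_eq_zero hU hbdd hs hB hbB
    (fun y ↦ (mul_le_mul_of_nonneg_left (hw_le y) hB).trans hdB.le) hsob_d (by positivity) hdvol
  have hx₁_zero := trunc_eq_zero_of_mul_norm_gradient_rpow_eq_zero hu.contDiff hU hbdd hs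
    (by linarith [hu.one_lt_p]) hzero x₁
  rw [trunc.eq_sub_of_mem hx₁U (by linarith)] at hx₁_zero
  linarith

end MaximumPrinciple

section DeGiorgi

lemma eq_zero_of_forall_add_le {Y : ℝ → ℝ} {C h ν r : ℝ} (hC : 0 ≤ C) (hh : 0 < h) (hν : 0 ≤ ν)
    (hr0 : 0 < r) (hr1 : r < 1) (hrν : (2 * r) ^ ν ≤ 1 / 2) (hY0 : ∀ s, 0 ≤ Y s)
    (hanti : AntitoneOn Y (Ici 0))
    (hY : ∀ s d, 0 ≤ s → 0 < d → Y (s + d) ≤ C / d * (Y s / d) ^ ν * Y s)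
    (hsmall : 8 * C / h * (8 * Y (h / 4) / h) ^ ν ≤ r) : Y (h / 2) = 0 := by
  let s : ℕ → ℝ := fun i ↦ h / 2 - h / (4 * 2 ^ i)
  have hs0 (i : ℕ) : 0 ≤ s i := by
    have : h / (4 * 2 ^ i) ≤ h / 2 := by
      gcongr
      linarith [one_le_pow₀ (M₀ := ℝ) one_le_two (n := i)]
    exact sub_nonneg.2 this
  have hs_succ (i : ℕ) : s (i + 1) = s i + h / (8 * 2 ^ i) := by
    simp only [s, pow_succ]
    field_simp
    ring
  have hdecay (i : ℕ) : Y (s i) ≤ Y (h / 4) * r ^ i := by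
    have hYh := hY0 (h / 4)
    induction i with
    | zero => exact (show s 0 = h / 4 by ring) ▸ (by simp)
    | succ i ih =>
      have hd : 0 < h / (8 * 2 ^ i) := by positivity
      have hYi := hY0 (s i)
      have hratio : (Y (s i) / (h / (8 * 2 ^ i))) ^ ν ≤ (8 * Y (h / 4) / h) ^ ν * (1 / 2) ^ i :=
        calc (Y (s i) / (h / (8 * 2 ^ i))) ^ ν
            ≤ (Y (h / 4) * r ^ i / (h / (8 * 2 ^ i))) ^ ν := by gcongr
          _ = ((8 * Y (h / 4) / h) * (2 * r) ^ i) ^ ν := by rw [mul_pow]; congr 1; field_simp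
          _ = (8 * Y (h / 4) / h) ^ ν * ((2 * r) ^ ν) ^ i := by
            rw [Real.mul_rpow (by positivity) (by positivity), Real.rpow_pow_comm (by positivity)]
          _ ≤ (8 * Y (h / 4) / h) ^ ν * (1 / 2) ^ i := by gcongr
      calc Y (s (i + 1))
          ≤ C / (h / (8 * 2 ^ i)) * (Y (s i) / (h / (8 * 2 ^ i))) ^ ν * Y (s i) :=
            hs_succ i ▸ hY (s i) _ (hs0 i) hd
        _ ≤ C / (h / (8 * 2 ^ i)) * ((8 * Y (h / 4) / h) ^ ν * (1 / 2) ^ i) *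
              (Y (h / 4) * r ^ i) := by gcongr
        _ = 8 * C / h * (8 * Y (h / 4) / h) ^ ν * (Y (h / 4) * r ^ i) := by
          rw [one_div_pow]
          field_simp
        _ ≤ r * (Y (h / 4) * r ^ i) := by gcongr
        _ = Y (h / 4) * r ^ (i + 1) := by ring
  have hlim : Tendsto (fun i : ℕ ↦ Y (h / 4) * r ^ i) atTop (𝓝 0) :=
    mul_zero (Y (h / 4)) ▸ (tendsto_pow_atTop_nhds_zero_of_lt_one hr0.le hr1).const_mul _
  refine le_antisymm (ge_of_tendsto' hlim fun i ↦ (hanti (hs0 i) ?_ ?_).trans (hdecay i)) (hY0 _)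
  · exact (half_pos hh).le
  · exact sub_le_self _ (by positivity)

namespace trunc

variable {s d : ℝ}

lemma antitone {X : Type*} (U : Set X) (z : X → ℝ) : Antitone (trunc U z) := fun _ _ hst ↦
  indicator_mono (s := U) fun _ ↦ max_le_max (sub_le_sub_left hst _) le_rfl

lemma mul_le_indicator {X : Type*} {U : Set X} {z : X → ℝ} (hd : 0 < d) (x : X) :
    d * trunc U z (s + d) x ≤
      {y | d ≤ trunc U z s y}.indicator (fun y ↦ trunc U z s y ^ (2 : ℝ)) x := by
  rcases (nonneg U z (s + d) x).eq_or_lt' with h0 | hpos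
  · rw [h0, mul_zero]
    exact indicator_nonneg (fun y _ ↦ Real.rpow_nonneg (nonneg U z s y) _) x
  · obtain ⟨hx, hz⟩ := pos_iff.1 hpos
    rw [eq_sub_of_mem hx hz.le, indicator_of_mem, eq_sub_of_mem hx (by linarith), Real.rpow_two]
    · nlinarith
    · rw [mem_ofPred_eq, eq_sub_of_mem hx (by linarith)]
      linarith

variable {E : Type*} [NormedAddCommGroup E] [InnerProductSpace ℝ E] {U : Set E} {z : E → ℝ}
  [FiniteDimensional ℝ E] [MeasurableSpace E] [BorelSpace E] {μ : Measure E}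
  [IsFiniteMeasureOnCompacts μ]

lemma integrable (hz : Continuous z) (hU : IsOpen U) (hbdd : Bornology.IsBounded U)
    (hs : ∀ x ∈ frontier U, z x < s) : Integrable (trunc U z s) μ :=
  (continuous hz hU hs).integrable_of_hasCompactSupport (hasCompactSupport hbdd)

lemma mul_integral_add_le (hz : ContDiff ℝ 1 z) (hU : IsOpen U) (hbdd : Bornology.IsBounded U)
    (hs : ∀ x ∈ frontier U, z x < s) (hd : 0 < d) :
    d * ∫ x, trunc U z (s + d) x ∂μ ≤
      ∫ x in {x | d ≤ trunc U z s x}, trunc U z s x ^ (2 : ℝ) ∂μ := by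
  have hT : MeasurableSet {x | d ≤ trunc U z s x} :=
    (isClosed_le continuous_const (continuous hz.continuous hU hs)).measurableSet
  have hint : Integrable (fun x ↦ trunc U z s x ^ (2 : ℝ)) μ :=
    (contDiff_rpow hz hU hs one_lt_two).continuous.integrable_of_hasCompactSupport
      (hasCompactSupport_rpow hbdd two_ne_zero)
  rw [← integral_const_mul, ← integral_indicator hT]
  exact integral_mono ((integrable hz.continuous hU hbdd
    fun x hx ↦ (hs x hx).trans (lt_add_of_pos_right s hd)).const_mul d) (hint.indicator hT)
    (mul_le_indicator hd)

lemma integral_add_le {S K κ : ℝ} (hz : ContDiff ℝ 1 z) (hU : IsOpen U)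
    (hbdd : Bornology.IsBounded U) (hs : ∀ x ∈ frontier U, z x < s) (hd : 0 < d)
    (hS : 0 ≤ S) (hκ : 0 ≤ κ)
    (hsob : ∀ v : E → ℝ, ContDiff ℝ 1 v → HasCompactSupport v → ∀ T, μ T ≠ ∞ →
      ∫ x in T, ‖v x‖ ∂μ ≤ S * μ.real T ^ κ * ∫ x, ‖fderiv ℝ v x‖ ∂μ)
    (hK : ∫ x, ‖fderiv ℝ (fun x ↦ trunc U z s x ^ (2 : ℝ)) x‖ ∂μ ≤ K * ∫ x, trunc U z s x ∂μ) :
    ∫ x, trunc U z (s + d) x ∂μ ≤ S * K / d * ((∫ x, trunc U z s x ∂μ) / d) ^ κ *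
      ∫ x, trunc U z s x ∂μ := by
  have hw_int : Integrable (trunc U z s) μ := integrable hz.continuous hU hbdd hs
  have hfin : μ {x | d ≤ trunc U z s x} ≠ ∞ :=
    measure_ne_top_of_subset (fun x hx ↦ (pos_iff.1 (hd.trans_le hx)).1) hbdd.measure_lt_top.ne
  have hcheb : μ.real {x | d ≤ trunc U z s x} ≤ (∫ x, trunc U z s x ∂μ) / d := by
    rw [le_div_iff₀' hd]
    exact mul_meas_ge_le_integral_of_nonneg (.of_forall (nonneg U z s)) hw_int d
  have hsob_w := hsob _ (contDiff_rpow hz hU hs one_lt_two)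
    (hasCompactSupport_rpow hbdd two_ne_zero) _ hfin
  simp only [Real.norm_of_nonneg (Real.rpow_nonneg (nonneg U z s _) _)] at hsob_w
  have hY : 0 ≤ ∫ x, trunc U z s x ∂μ := integral_nonneg (nonneg U z s)
  have hchain : d * ∫ x, trunc U z (s + d) x ∂μ ≤
      S * ((∫ x, trunc U z s x ∂μ) / d) ^ κ * (K * ∫ x, trunc U z s x ∂μ) :=
    calc d * ∫ x, trunc U z (s + d) x ∂μ
        ≤ ∫ x in {x | d ≤ trunc U z s x}, trunc U z s x ^ (2 : ℝ) ∂μ :=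
          mul_integral_add_le hz hU hbdd hs hd
      _ ≤ _ := hsob_w
      _ ≤ _ := by gcongr
  rw [← le_div_iff₀' hd] at hchain
  exact hchain.trans_eq (by ring)

end trunc

end DeGiorgi

section Barrier

variable {E : Type*} [NormedAddCommGroup E] {u : E → ℝ} {x₀ x : E} {δ h : ℝ}

/-- The function `u - (u x₀ - h)`, lowered by a paraboloid with vertex `x₀`. It equals `h` at `x₀`,
and it is negative on the sphere of radius `δ` about `x₀` as soon as `u ≤ u x₀ + h` there. -/
def barrier (u : E → ℝ) (x₀ : E) (δ h : ℝ) : E → ℝ :=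
  fun x ↦ u x - (u x₀ - h) - 4 * h / δ ^ 2 * ‖x - x₀‖ ^ 2

namespace barrier

lemma apply_center (u : E → ℝ) (x₀ : E) (δ h : ℝ) : barrier u x₀ δ h x₀ = h := by
  simp [barrier]

lemma le_sub_sub (hh : 0 ≤ h) (x : E) : barrier u x₀ δ h x ≤ u x - (u x₀ - h) :=
  sub_le_self _ (by positivity)

lemma lt_of_mem_frontier_ball (hδ : 0 < δ) (hh : 0 < h)
    (hle : ∀ x ∈ closedBall x₀ δ, u x ≤ u x₀ + h) {s : ℝ} (hs : 0 ≤ s) :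
    ∀ x ∈ frontier (ball x₀ δ), barrier u x₀ δ h x < s := by
  intro x hx
  have hxδ : ‖x - x₀‖ = δ := mem_sphere_iff_norm.1 (frontier_ball_subset_sphere hx)
  have hux := hle x (mem_closedBall_iff_norm.2 hxδ.le)
  have : 4 * h / δ ^ 2 * δ ^ 2 = 4 * h := by field_simp
  rw [barrier, hxδ]
  linarith

variable [InnerProductSpace ℝ E]

lemma contDiff (hu : ContDiff ℝ 1 u) : ContDiff ℝ 1 (barrier u x₀ δ h) :=
  (hu.sub contDiff_const).sub (contDiff_const.mul ((contDiff_id.sub contDiff_const).norm_sq ℝ))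

lemma gradient_eq [CompleteSpace E] (hu : ContDiff ℝ 1 u) (x : E) :
    ∇ (barrier u x₀ δ h) x = ∇ u x - (8 * h / δ ^ 2) • (x - x₀) := by
  have hu' := ((hu.differentiable one_ne_zero x).hasGradientAt).hasFDerivAt
  have hsq : HasFDerivAt (fun y : E ↦ ‖y - x₀‖ ^ 2) (2 • innerSL ℝ (x - x₀)) x :=
    ((hasFDerivAt_id x).sub_const x₀).norm_sq
  refine HasGradientAt.gradient (hasGradientAt_iff_hasFDerivAt.2
    (((hu'.sub_const (u x₀ - h)).sub (hsq.const_mul (4 * h / δ ^ 2))).congr_fderiv ?_))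
  ext v
  simp
  ring

lemma norm_smul_sub_le (hδ : 0 < δ) (hh : 0 ≤ h) (hx : x ∈ ball x₀ δ) :
    ‖(8 * h / δ ^ 2) • (x - x₀)‖ ≤ 8 * (h / δ) := by
  rw [norm_smul, Real.norm_of_nonneg (by positivity)]
  calc 8 * h / δ ^ 2 * ‖x - x₀‖ ≤ 8 * h / δ ^ 2 * δ := by
        gcongr
        exact (mem_ball_iff_norm.1 hx).le
    _ = 8 * (h / δ) := by field_simp

end barrier

/-- The truncation of the barrier to the ball of radius `δ`: the test functions of De Giorgi's
iteration are its squares. -/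
abbrev barrierTrunc (u : E → ℝ) (x₀ : E) (δ h s : ℝ) : E → ℝ :=
  trunc (ball x₀ δ) (barrier u x₀ δ h) s

end Barrier

/-- The constant which Young's inequality produces in the energy estimate for the barrier. -/
def energyConst (p C₁ C₂ : ℝ) : ℝ :=
  (16 * C₂ + C₁) * ((16 * C₂ + C₁) / (C₁ / 2)) ^ (p - 1)

lemma energyConst_pos {p C₁ C₂ : ℝ} (hC₁ : 0 < C₁) (hC₂ : 0 < C₂) : 0 < energyConst p C₁ C₂ := by
  unfold energyConst
  positivity

/- With `D` the length of the gradient in units of the slope `K = h / δ`, the hypothesis on `B` says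
that the lower-order term is dominated by the `p`-energy at this scale. -/
lemma energy_density_le {p C₁ C₂ α K D w h a B β φ P Q : ℝ} (hp : 1 < p) (hα₁ : p - 1 ≤ α)
    (hα₂ : α ≤ p) (hC₁ : 0 < C₁) (hC₂ : 0 < C₂) (hK : 0 < K) (hD : 0 ≤ D) (hw : 0 ≤ w)
    (hwh : w ≤ 2 * h) (hβ : β ≤ B) (hB : 0 ≤ B) (hBh : B * h * K ^ (α - p) ≤ C₁ / 2) (ha : a ≤ φ)
    (hP : C₁ * (K * D) ^ p ≤ P) (hQ : Q ≤ C₂ * (K * D) ^ (p - 1) * (8 * K)) :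
    K ^ p * (C₁ / 2 * (w * D ^ p) - energyConst p C₁ C₂ * w) + a * w ^ (2 : ℝ) ≤
      2 * w * (P - Q) - (β * (K * D) ^ α - φ) * w ^ (2 : ℝ) := by
  rw [Real.mul_rpow hK.le hD] at *
  have hKp : K ^ p = K ^ (p - 1) * K := by
    rw [← Real.rpow_add_one' hK.le (by linarith), sub_add_cancel]
  have hKα : K ^ α = K ^ p * K ^ (α - p) := by
    rw [← Real.rpow_add hK, add_sub_cancel]
  have hinterp := rpow_le_rpow_sub_one_add_rpow hp hα₁ hα₂ hD
  have hlower : β * (K ^ α * D ^ α) * (w * w) ≤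
      w * K ^ p * (C₁ * (D ^ (p - 1) + D ^ p)) :=
    calc β * (K ^ α * D ^ α) * (w * w)
        ≤ B * (K ^ α * D ^ α) * (w * (2 * h)) := by gcongr
      _ = w * K ^ p * (2 * (B * h * K ^ (α - p)) * D ^ α) := by rw [hKα]; ring
      _ ≤ w * K ^ p * (2 * (C₁ / 2) * (D ^ (p - 1) + D ^ p)) := by gcongr
      _ = w * K ^ p * (C₁ * (D ^ (p - 1) + D ^ p)) := by ring
  have hyoung := mul_rpow_sub_one_mul_le (w := 1) hp (show 0 ≤ 16 * C₂ + C₁ by positivity) hD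
    zero_le_one (half_pos hC₁)
  rw [Real.one_rpow, mul_one, mul_one, ← energyConst] at hyoung
  have hQ' : Q ≤ K ^ p * (8 * C₂ * D ^ (p - 1)) := hQ.trans_eq (by rw [hKp]; ring)
  have hP_mul := mul_le_mul_of_nonneg_left hP (show 0 ≤ 2 * w by positivity)
  have hQ_mul := mul_le_mul_of_nonneg_left hQ' (show 0 ≤ 2 * w by positivity)
  have hyoung_mul := mul_le_mul_of_nonneg_left hyoung (show 0 ≤ w * K ^ p by positivity)
  have hφ_mul := mul_le_mul_of_nonneg_right ha (mul_nonneg hw hw)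
  rw [Real.rpow_two, pow_two]
  linear_combination hlower + hP_mul + hQ_mul + hyoung_mul + hφ_mul

section BarrierTrunc

variable {E : Type*} [NormedAddCommGroup E] [InnerProductSpace ℝ E] [FiniteDimensional ℝ E]
  {u : E → ℝ} {x₀ x : E} {δ h s p : ℝ}

lemma norm_fderiv_barrierTrunc_rpow_two_le (hu : ContDiff ℝ 1 u) (hδ : 0 < δ) (hh : 0 < h)
    (hle : ∀ x ∈ closedBall x₀ δ, u x ≤ u x₀ + h) (hs : 0 ≤ s) (hp : 1 < p) :
    ‖fderiv ℝ (fun x ↦ barrierTrunc u x₀ δ h s x ^ (2 : ℝ)) x‖ ≤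
      2 * (h / δ) * (9 * barrierTrunc u x₀ δ h s x +
        barrierTrunc u x₀ δ h s x * (‖∇ u x‖ / (h / δ)) ^ p) := by
  have hw0 : 0 ≤ barrierTrunc u x₀ δ h s x := trunc.nonneg _ _ _ _
  rw [← norm_gradient_eq_norm_fderiv, trunc.gradient_rpow (barrier.contDiff hu) isOpen_ball
    (barrier.lt_of_mem_frontier_ball hδ hh hle hs) one_lt_two, norm_smul,
    show (2 : ℝ) - 1 = 1 by norm_num, Real.rpow_one, Real.norm_of_nonneg (by positivity)]
  by_cases hx : x ∈ ball x₀ δ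
  swap
  · rw [barrierTrunc, trunc.of_notMem hx]
    simp
  have hK : 0 < h / δ := div_pos hh hδ
  set D := ‖∇ u x‖ / (h / δ) with hD
  have hgrad : ‖∇ (barrier u x₀ δ h) x‖ ≤ h / δ * D + 8 * (h / δ) := by
    rw [barrier.gradient_eq hu, hD, mul_div_cancel₀ _ hK.ne']
    exact (norm_sub_le _ _).trans (by gcongr; exact barrier.norm_smul_sub_le hδ hh.le hx)
  have hD_le : D ≤ 1 + D ^ p := by
    have hD0 : 0 ≤ D := by positivity
    rcases le_total D 1 with hD1 | hD1
    · linarith [Real.rpow_nonneg hD0 p]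
    · linarith [Real.self_le_rpow_of_one_le hD1 hp.le]
  calc 2 * barrierTrunc u x₀ δ h s x * ‖∇ (barrier u x₀ δ h) x‖
      ≤ 2 * barrierTrunc u x₀ δ h s x * (h / δ * (1 + D ^ p) + 8 * (h / δ)) := by
        gcongr
        exact hgrad.trans (by gcongr)
    _ = _ := by ring

variable [MeasurableSpace E] [BorelSpace E] {μ : Measure E} [IsFiniteMeasureOnCompacts μ]

lemma integrable_barrierTrunc_mul_rpow (hu : ContDiff ℝ 1 u) (hδ : 0 < δ) (hh : 0 < h)
    (hle : ∀ x ∈ closedBall x₀ δ, u x ≤ u x₀ + h) (hs : 0 ≤ s) (hp : 0 ≤ p) :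
    Integrable (fun x ↦ barrierTrunc u x₀ δ h s x * (‖∇ u x‖ / (h / δ)) ^ p) μ := by
  have hw : Continuous (barrierTrunc u x₀ δ h s) :=
    trunc.continuous (barrier.contDiff hu).continuous isOpen_ball
      (barrier.lt_of_mem_frontier_ball hδ hh hle hs)
  have hD : Continuous fun x ↦ (‖∇ u x‖ / (h / δ)) ^ p :=
    ((continuous_gradient hu).norm.div_const _).rpow_const fun _ ↦ Or.inr hp
  exact (hw.mul hD).integrable_of_hasCompactSupport
    (trunc.hasCompactSupport isBounded_ball).mul_right

lemma integrable_barrierTrunc_rpow_two (hu : ContDiff ℝ 1 u) (hδ : 0 < δ) (hh : 0 < h)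
    (hle : ∀ x ∈ closedBall x₀ δ, u x ≤ u x₀ + h) (hs : 0 ≤ s) :
    Integrable (fun x ↦ barrierTrunc u x₀ δ h s x ^ (2 : ℝ)) μ :=
  (trunc.contDiff_rpow (barrier.contDiff hu) isOpen_ball
    (barrier.lt_of_mem_frontier_ball hδ hh hle hs)
    one_lt_two).continuous.integrable_of_hasCompactSupport
    (trunc.hasCompactSupport_rpow isBounded_ball two_ne_zero)

lemma integral_barrierTrunc_le (hu : ContDiff ℝ 1 u) (hδ : 0 < δ) (hh : 0 < h)
    (hle : ∀ x ∈ closedBall x₀ δ, u x ≤ u x₀ + h) (hs : 0 ≤ s) :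
    ∫ x, barrierTrunc u x₀ δ h s x ∂μ ≤ 2 * h * μ.real (ball x₀ δ) := by
  rw [← setIntegral_eq_integral_of_forall_compl_eq_zero (s := ball x₀ δ)
    fun x hx ↦ trunc.of_notMem hx]
  calc ∫ x in ball x₀ δ, barrierTrunc u x₀ δ h s x ∂μ
      ≤ ∫ _ in ball x₀ δ, 2 * h ∂μ := by
        refine setIntegral_mono_on (trunc.integrable (barrier.contDiff hu).continuous isOpen_ball
          isBounded_ball (barrier.lt_of_mem_frontier_ball hδ hh hle hs)).integrableOn
          (integrableOn_const measure_ball_lt_top.ne) measurableSet_ball fun x hx ↦ ?_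
        have hux := hle x (ball_subset_closedBall hx)
        have hbar := barrier.le_sub_sub (u := u) (x₀ := x₀) (δ := δ) hh.le x
        rw [barrierTrunc, trunc.of_mem hx]
        exact max_le (by linarith) (by linarith)
    _ = 2 * h * μ.real (ball x₀ δ) := by
        rw [setIntegral_const, smul_eq_mul, mul_comm]

end BarrierTrunc

section BarrierEnergy

variable {n : ℕ} {p C₁ C₂ α : ℝ} {A : Euc n → Euc n → Euc n} {b f u : Euc n → ℝ}
  {x₀ x : Euc n} {δ h a B s : ℝ}

namespace IsSubsolution

variable (hu : IsSubsolution p C₁ C₂ α A b f u) (hδ : 0 < δ) (hh : 0 < h) (hB : 0 ≤ B)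
  (hBh : B * h * (h / δ) ^ (α - p) ≤ C₁ / 2) (hle : ∀ x ∈ closedBall x₀ δ, u x ≤ u x₀ + h)
  (hs : 0 ≤ s)
include hu hδ hh hB hBh hle hs

lemma barrier_energy_density_le (hx : x ∈ ball x₀ δ → b x ≤ B ∧ (u x₀ - h < u x → a ≤ f x)) :
    (h / δ) ^ p * (C₁ / 2 * (barrierTrunc u x₀ δ h s x *
        (‖∇ u x‖ / (h / δ)) ^ p) - energyConst p C₁ C₂ *
        barrierTrunc u x₀ δ h s x) +
        a * barrierTrunc u x₀ δ h s x ^ (2 : ℝ) ≤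
      2 * barrierTrunc u x₀ δ h s x *
        ⟪A x (∇ u x), ∇ (barrier u x₀ δ h) x⟫ -
        (b x * ‖∇ u x‖ ^ α - f x) * barrierTrunc u x₀ δ h s x ^ (2 : ℝ) := by
  rcases (trunc.nonneg (ball x₀ δ) (barrier u x₀ δ h) s x).eq_or_lt' with h0 | hpos
  · rw [barrierTrunc, h0, Real.zero_rpow two_ne_zero]
    simp
  have hK : 0 < h / δ := div_pos hh hδ
  obtain ⟨hxδ, hsx⟩ := trunc.pos_iff.1 hpos
  obtain ⟨hbx, hfx⟩ := hx hxδ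
  have hbar := barrier.le_sub_sub (u := u) (x₀ := x₀) (δ := δ) hh.le x
  have hux := hle x (ball_subset_closedBall hxδ)
  have hKD : h / δ * (‖∇ u x‖ / (h / δ)) = ‖∇ u x‖ := mul_div_cancel₀ _ hK.ne'
  have hQ : ⟪A x (∇ u x), (8 * h / δ ^ 2) • (x - x₀)⟫ ≤
      C₂ * (h / δ * (‖∇ u x‖ / (h / δ))) ^ (p - 1) * (8 * (h / δ)) := by
    rw [hKD]
    exact (real_inner_le_norm _ _).trans (mul_le_mul (hu.norm_flux_le x)
      (barrier.norm_smul_sub_le hδ hh.le hxδ) (norm_nonneg _)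
      (mul_nonneg hu.C₂_pos.le (by positivity)))
  have hw_le : barrierTrunc u x₀ δ h s x ≤ 2 * h := by
    rw [barrierTrunc, trunc.eq_sub_of_mem hxδ hsx.le]
    linarith
  have hdensity := energy_density_le hu.one_lt_p hu.p_sub_one_le hu.α_le hu.C₁_pos hu.C₂_pos hK
    (D := ‖∇ u x‖ / (h / δ)) (by positivity) hpos.le hw_le hbx hB hBh (hfx (by linarith))
    (hKD.symm ▸ hu.coercive x) hQ
  rwa [hKD, ← inner_sub_right, ← barrier.gradient_eq hu.contDiff] at hdensity

lemma barrier_energy_le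
    (hbf : ∀ᵐ x, x ∈ ball x₀ δ → b x ≤ B ∧ (u x₀ - h < u x → a ≤ f x)) :
    (h / δ) ^ p * (C₁ / 2 * (∫ x, barrierTrunc u x₀ δ h s x * (‖∇ u x‖ / (h / δ)) ^ p) -
        energyConst p C₁ C₂ * ∫ x, barrierTrunc u x₀ δ h s x) +
      a * ∫ x, barrierTrunc u x₀ δ h s x ^ (2 : ℝ) ≤ 0 := by
  have hz : ContDiff ℝ 1 (barrier u x₀ δ h) := barrier.contDiff hu.contDiff
  have hfront := barrier.lt_of_mem_frontier_ball hδ hh hle hs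
  have hw : Integrable (barrierTrunc u x₀ δ h s) :=
    trunc.integrable hz.continuous isOpen_ball isBounded_ball hfront
  have hwD := integrable_barrierTrunc_mul_rpow (μ := volume) (p := p) hu.contDiff hδ hh hle hs
    (by linarith [hu.one_lt_p])
  have hw2 := integrable_barrierTrunc_rpow_two (μ := volume) hu.contDiff hδ hh hle hs
  have henergy := hu.integral_nonpos_of_le_trunc isOpen_ball isBounded_ball hz hfront
    ((((hwD.const_mul (C₁ / 2)).sub (hw.const_mul (energyConst p C₁ C₂))).const_mul
      ((h / δ) ^ p)).add (hw2.const_mul a)) (by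
      filter_upwards [hbf] with x hx
      exact hu.barrier_energy_density_le hδ hh hB hBh hle hs hx)
  rwa [integral_add' (((hwD.const_mul _).sub (hw.const_mul _)).const_mul _) (hw2.const_mul _),
    integral_const_mul, integral_sub' (hwD.const_mul _) (hw.const_mul _), integral_const_mul,
    integral_const_mul, integral_const_mul] at henergy

lemma mul_integral_barrierTrunc_rpow_two_le
    (hbf : ∀ᵐ x, x ∈ ball x₀ δ → b x ≤ B ∧ (u x₀ - h < u x → a ≤ f x)) :
    a * ∫ x, barrierTrunc u x₀ δ h s x ^ (2 : ℝ) ≤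
      energyConst p C₁ C₂ * (h / δ) ^ p * ∫ x, barrierTrunc u x₀ δ h s x := by
  have henergy := hu.barrier_energy_le hδ hh hB hBh hle hs hbf
  have hI : 0 ≤ ∫ x, barrierTrunc u x₀ δ h s x * (‖∇ u x‖ / (h / δ)) ^ p :=
    integral_nonneg fun x ↦ mul_nonneg (trunc.nonneg _ _ _ _) (by positivity)
  have : 0 ≤ (h / δ) ^ p *
      (C₁ / 2 * ∫ x, barrierTrunc u x₀ δ h s x * (‖∇ u x‖ / (h / δ)) ^ p) :=
    mul_nonneg (by positivity) (mul_nonneg (half_pos hu.C₁_pos).le hI)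
  linarith

lemma integral_barrierTrunc_mul_rpow_le (ha : 0 ≤ a)
    (hbf : ∀ᵐ x, x ∈ ball x₀ δ → b x ≤ B ∧ (u x₀ - h < u x → a ≤ f x)) :
    ∫ x, barrierTrunc u x₀ δ h s x * (‖∇ u x‖ / (h / δ)) ^ p ≤
      2 * energyConst p C₁ C₂ / C₁ * ∫ x, barrierTrunc u x₀ δ h s x := by
  have henergy := hu.barrier_energy_le hδ hh hB hBh hle hs hbf
  have hI : 0 ≤ a * ∫ x, barrierTrunc u x₀ δ h s x ^ (2 : ℝ) :=
    mul_nonneg ha (integral_nonneg fun x ↦ Real.rpow_nonneg (trunc.nonneg _ _ _ _) _)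
  have := nonpos_of_mul_nonpos_right (show (h / δ) ^ p * (C₁ / 2 *
    (∫ x, barrierTrunc u x₀ δ h s x * (‖∇ u x‖ / (h / δ)) ^ p) -
      energyConst p C₁ C₂ * ∫ x, barrierTrunc u x₀ δ h s x) ≤ 0 by linarith)
    (Real.rpow_pos_of_pos (div_pos hh hδ) p)
  rw [div_mul_eq_mul_div, le_div_iff₀ hu.C₁_pos]
  linarith

lemma integral_norm_fderiv_barrierTrunc_rpow_two_le (ha : 0 ≤ a)
    (hbf : ∀ᵐ x, x ∈ ball x₀ δ → b x ≤ B ∧ (u x₀ - h < u x → a ≤ f x)) :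
    ∫ x, ‖fderiv ℝ (fun x ↦ barrierTrunc u x₀ δ h s x ^ (2 : ℝ)) x‖ ≤
      2 * (h / δ) * (9 + 2 * energyConst p C₁ C₂ / C₁) * ∫ x, barrierTrunc u x₀ δ h s x := by
  have hw : Integrable (barrierTrunc u x₀ δ h s) :=
    trunc.integrable (barrier.contDiff hu.contDiff).continuous isOpen_ball isBounded_ball
      (barrier.lt_of_mem_frontier_ball hδ hh hle hs)
  have hwD := integrable_barrierTrunc_mul_rpow (μ := volume) (p := p) hu.contDiff hδ hh hle hs
    (by linarith [hu.one_lt_p])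
  calc ∫ x, ‖fderiv ℝ (fun x ↦ barrierTrunc u x₀ δ h s x ^ (2 : ℝ)) x‖
      ≤ ∫ x, 2 * (h / δ) * (9 * barrierTrunc u x₀ δ h s x +
          barrierTrunc u x₀ δ h s x * (‖∇ u x‖ / (h / δ)) ^ p) :=
        integral_mono_of_nonneg (.of_forall fun _ ↦ norm_nonneg _)
          (((hw.const_mul 9).add hwD).const_mul (2 * (h / δ))) (.of_forall fun x ↦
            norm_fderiv_barrierTrunc_rpow_two_le hu.contDiff hδ hh hle hs hu.one_lt_p)
    _ = 2 * (h / δ) * (9 * (∫ x, barrierTrunc u x₀ δ h s x) +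
          ∫ x, barrierTrunc u x₀ δ h s x * (‖∇ u x‖ / (h / δ)) ^ p) := by
        rw [integral_const_mul, integral_add (hw.const_mul 9) hwD, integral_const_mul]
    _ ≤ 2 * (h / δ) * (9 * (∫ x, barrierTrunc u x₀ δ h s x) +
          2 * energyConst p C₁ C₂ / C₁ * ∫ x, barrierTrunc u x₀ δ h s x) := by
        gcongr
        exact hu.integral_barrierTrunc_mul_rpow_le hδ hh hB hBh hle hs ha hbf
    _ = _ := by ring

end IsSubsolution

end BarrierEnergy

section Growth

variable {n : ℕ} {p C₁ C₂ α : ℝ} {A : Euc n → Euc n → Euc n} {b f u : Euc n → ℝ}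
  {x₀ : Euc n} {δ h a B : ℝ}

lemma real_volume_ball (hδ : 0 < δ) :
    volume.real (ball x₀ δ) = δ ^ n * volume.real (ball (0 : Euc n) 1) := by
  rw [measureReal_def, Measure.addHaar_ball_of_pos _ _ hδ, ENNReal.toReal_mul,
    ENNReal.toReal_ofReal (by positivity), measureReal_def, finrank_euclideanSpace_fin]

lemma real_volume_unitBall_pos : 0 < volume.real (ball (0 : Euc n) 1) :=
  ENNReal.toReal_pos (measure_ball_pos volume _ one_pos).ne' measure_ball_lt_top.ne

lemma two_mul_one_div_four_pow_rpow_le (hn : n ≠ 0) :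
    (2 * (1 / 4 : ℝ) ^ n) ^ (1 / (n : ℝ)) ≤ 1 / 2 := by
  rw [one_div (n : ℝ), Real.rpow_inv_le_iff_of_pos (by positivity) (by norm_num)
    (by positivity), Real.rpow_natCast]
  calc (2 : ℝ) * (1 / 4) ^ n ≤ 2 ^ n * (1 / 4) ^ n := by
        gcongr
        exact le_self_pow₀ one_le_two hn
    _ = (1 / 2) ^ n := by rw [← mul_pow]; norm_num

namespace IsSubsolution

lemma mul_integral_barrierTrunc_quarter_le (hu : IsSubsolution p C₁ C₂ α A b f u) (hδ : 0 < δ)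
    (hh : 0 < h) (ha : 0 ≤ a) (hB : 0 ≤ B) (hBh : B * h * (h / δ) ^ (α - p) ≤ C₁ / 2)
    (hle : ∀ x ∈ closedBall x₀ δ, u x ≤ u x₀ + h)
    (hbf : ∀ᵐ x, x ∈ ball x₀ δ → b x ≤ B ∧ (u x₀ - h < u x → a ≤ f x)) :
    a * ∫ x, barrierTrunc u x₀ δ h (h / 4) x ≤
      8 * energyConst p C₁ C₂ * (h / δ) ^ p * volume.real (ball x₀ δ) := by
  have hE := energyConst_pos (p := p) hu.C₁_pos hu.C₂_pos
  have hchebyshev := trunc.mul_integral_add_le (μ := volume)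
    (barrier.contDiff hu.contDiff) isOpen_ball isBounded_ball
    (barrier.lt_of_mem_frontier_ball hδ hh hle le_rfl) (show 0 < h / 4 by positivity)
  rw [zero_add] at hchebyshev
  refine le_of_mul_le_mul_left ?_ (show 0 < h / 4 by positivity)
  calc h / 4 * (a * ∫ x, barrierTrunc u x₀ δ h (h / 4) x)
      = a * (h / 4 * ∫ x, barrierTrunc u x₀ δ h (h / 4) x) := mul_left_comm _ _ _
    _ ≤ a * ∫ x in {x | h / 4 ≤ barrierTrunc u x₀ δ h 0 x},
          barrierTrunc u x₀ δ h 0 x ^ (2 : ℝ) := by gcongr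
    _ ≤ a * ∫ x, barrierTrunc u x₀ δ h 0 x ^ (2 : ℝ) := by
        exact mul_le_mul_of_nonneg_left (setIntegral_le_integral
          (integrable_barrierTrunc_rpow_two hu.contDiff hδ hh hle le_rfl)
          (.of_forall fun x ↦ Real.rpow_nonneg (trunc.nonneg _ _ _ _) _)) ha
    _ ≤ energyConst p C₁ C₂ * (h / δ) ^ p * ∫ x, barrierTrunc u x₀ δ h 0 x :=
        hu.mul_integral_barrierTrunc_rpow_two_le hδ hh hB hBh hle le_rfl hbf
    _ ≤ energyConst p C₁ C₂ * (h / δ) ^ p * (2 * h * volume.real (ball x₀ δ)) := by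
        gcongr
        exact integral_barrierTrunc_le hu.contDiff hδ hh hle le_rfl
    _ = h / 4 * (8 * energyConst p C₁ C₂ * (h / δ) ^ p * volume.real (ball x₀ δ)) := by ring

/-- The least `a * h / (h / δ) ^ p` for which De Giorgi's iteration shows that `u` grows by `h` on
the ball of radius `δ`, when `S` is the constant of the Sobolev inequality. -/
def growthConst (n : ℕ) (p C₁ C₂ S : ℝ) : ℝ :=
  64 * energyConst p C₁ C₂ * volume.real (ball (0 : Euc n) 1) *
    (8 * (2 * S * (9 + 2 * energyConst p C₁ C₂ / C₁)) * 4 ^ n) ^ n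

lemma growthConst_pos {S : ℝ} (hC₁ : 0 < C₁) (hC₂ : 0 < C₂) (hS : 0 < S) :
    0 < growthConst n p C₁ C₂ S := by
  have hE := energyConst_pos (p := p) hC₁ hC₂
  have hω := real_volume_unitBall_pos (n := n)
  unfold growthConst
  positivity

lemma integral_barrierTrunc_quarter_le {S : ℝ} (hu : IsSubsolution p C₁ C₂ α A b f u)
    (hδ : 0 < δ) (hh : 0 < h) (ha : 0 ≤ a) (hB : 0 ≤ B) (hS : 0 < S)
    (hBh : B * h * (h / δ) ^ (α - p) ≤ C₁ / 2)
    (hle : ∀ x ∈ closedBall x₀ δ, u x ≤ u x₀ + h)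
    (hbf : ∀ᵐ x, x ∈ ball x₀ δ → b x ≤ B ∧ (u x₀ - h < u x → a ≤ f x))
    (hah : growthConst n p C₁ C₂ S * (h / δ) ^ p ≤ a * h) :
    8 * (∫ x, barrierTrunc u x₀ δ h (h / 4) x) / h ≤
      (δ / (8 * (2 * S * (9 + 2 * energyConst p C₁ C₂ / C₁)) * 4 ^ n)) ^ n := by
  have hC₁ := hu.C₁_pos
  have hE := energyConst_pos (p := p) hu.C₁_pos hu.C₂_pos
  have hω := real_volume_unitBall_pos (n := n)
  set Y := ∫ x, barrierTrunc u x₀ δ h (h / 4) x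
  have hY : 0 ≤ Y := integral_nonneg fun x ↦ trunc.nonneg _ _ _ _
  have hquarter := hu.mul_integral_barrierTrunc_quarter_le hδ hh ha hB hBh hle hbf
  rw [real_volume_ball hδ] at hquarter
  rw [growthConst] at hah
  rw [div_pow, div_le_div_iff₀ hh (by positivity)]
  set P := (8 * (2 * S * (9 + 2 * energyConst p C₁ C₂ / C₁)) * 4 ^ n) ^ n
  refine le_of_mul_le_mul_left ?_ (show 0 < 8 * energyConst p C₁ C₂ *
    volume.real (ball (0 : Euc n) 1) * (h / δ) ^ p by positivity)
  have hleft := mul_le_mul_of_nonneg_right hah hY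
  have hright := mul_le_mul_of_nonneg_left hquarter hh.le
  linarith

lemma barrierTrunc_initial_smallness {S : ℝ} (hn : n ≠ 0)
    (hu : IsSubsolution p C₁ C₂ α A b f u) (hδ : 0 < δ) (hh : 0 < h) (ha : 0 ≤ a) (hB : 0 ≤ B)
    (hS : 0 < S) (hBh : B * h * (h / δ) ^ (α - p) ≤ C₁ / 2)
    (hle : ∀ x ∈ closedBall x₀ δ, u x ≤ u x₀ + h)
    (hbf : ∀ᵐ x, x ∈ ball x₀ δ → b x ≤ B ∧ (u x₀ - h < u x → a ≤ f x))
    (hah : growthConst n p C₁ C₂ S * (h / δ) ^ p ≤ a * h) :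
    8 * (2 * S * (9 + 2 * energyConst p C₁ C₂ / C₁) * (h / δ)) / h *
      (8 * (∫ x, barrierTrunc u x₀ δ h (h / 4) x) / h) ^ (1 / (n : ℝ)) ≤ (1 / 4) ^ n := by
  have hC₁ := hu.C₁_pos
  have hE := energyConst_pos (p := p) hu.C₁_pos hu.C₂_pos
  have hquarter := hu.integral_barrierTrunc_quarter_le hδ hh ha hB hS hBh hle hbf hah
  have hY : 0 ≤ ∫ x, barrierTrunc u x₀ δ h (h / 4) x :=
    integral_nonneg fun x ↦ trunc.nonneg _ _ _ _
  set C := 2 * S * (9 + 2 * energyConst p C₁ C₂ / C₁)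
  have hC : 0 < C := by positivity
  calc 8 * (C * (h / δ)) / h * (8 * (∫ x, barrierTrunc u x₀ δ h (h / 4) x) / h) ^ (1 / (n : ℝ))
      ≤ 8 * (C * (h / δ)) / h * ((δ / (8 * C * 4 ^ n)) ^ n) ^ (1 / (n : ℝ)) := by gcongr
    _ = (1 / 4) ^ n := by
        rw [one_div (n : ℝ), Real.pow_rpow_inv_natCast (by positivity) hn, one_div_pow]
        field_simp

theorem exists_add_lt_of_growthConst_le {S : ℝ} (hn : n ≠ 0)
    (hu : IsSubsolution p C₁ C₂ α A b f u) (hδ : 0 < δ) (hh : 0 < h) (ha : 0 ≤ a) (hB : 0 ≤ B)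
    (hS : 0 < S) (hsob : ∀ v : Euc n → ℝ, ContDiff ℝ 1 v → HasCompactSupport v →
      ∀ T, volume T ≠ ∞ →
        ∫ x in T, ‖v x‖ ≤ S * volume.real T ^ (1 / (n : ℝ)) * ∫ x, ‖fderiv ℝ v x‖)
    (hBh : B * h * (h / δ) ^ (α - p) ≤ C₁ / 2)
    (hbf : ∀ᵐ x, x ∈ ball x₀ δ → b x ≤ B ∧ (u x₀ - h < u x → a ≤ f x))
    (hah : growthConst n p C₁ C₂ S * (h / δ) ^ p ≤ a * h) :
    ∃ x ∈ closedBall x₀ δ, u x₀ + h < u x := by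
  by_contra! hle
  have hC₁ := hu.C₁_pos
  have hE := energyConst_pos (p := p) hu.C₁_pos hu.C₂_pos
  have hz : ContDiff ℝ 1 (barrier u x₀ δ h) := barrier.contDiff hu.contDiff
  have hfront {s : ℝ} (hs : 0 ≤ s) := barrier.lt_of_mem_frontier_ball hδ hh hle hs
  set C := 2 * S * (9 + 2 * energyConst p C₁ C₂ / C₁) with hC
  have hzero : ∫ x, barrierTrunc u x₀ δ h (h / 2) x = 0 := by
    refine eq_zero_of_forall_add_le (Y := fun s ↦ ∫ x, barrierTrunc u x₀ δ h s x)
      (C := C * (h / δ)) (ν := 1 / n) (r := (1 / 4) ^ n) (by positivity) hh (by positivity)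
      (by positivity) (pow_lt_one₀ (by norm_num) (by norm_num) hn)
      (two_mul_one_div_four_pow_rpow_le hn)
      (fun s ↦ integral_nonneg fun x ↦ trunc.nonneg _ _ _ _) (fun s hs t ht hst ↦ ?_)
      (fun s d hs hd ↦ ?_)
      (hu.barrierTrunc_initial_smallness hn hδ hh ha hB hS hBh hle hbf hah)
    · exact integral_mono (trunc.integrable hz.continuous isOpen_ball isBounded_ball (hfront ht))
        (trunc.integrable hz.continuous isOpen_ball isBounded_ball (hfront hs))
        (trunc.antitone _ _ hst)
    · have henergy := hu.integral_norm_fderiv_barrierTrunc_rpow_two_le hδ hh hB hBh hle hs ha hbf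
      refine (trunc.integral_add_le hz isOpen_ball isBounded_ball (hfront hs) hd hS.le
        (by positivity) hsob henergy).trans_eq ?_
      rw [hC]
      ring
  refine hzero.not_gt ((trunc.continuous hz.continuous isOpen_ball
    (hfront (by positivity))).integral_pos_of_hasCompactSupport_nonneg_nonzero (x := x₀)
      (trunc.hasCompactSupport isBounded_ball) (trunc.nonneg _ _ _)
      (trunc.pos_iff.2 ⟨mem_ball_self hδ, ?_⟩).ne')
  rw [barrier.apply_center]
  linarith

end IsSubsolution

end Growth

section SphericalMaximum

variable {n : ℕ} {u : Euc n → ℝ} {r : ℝ}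

theorem le_sphMax (hu : Continuous u) (x : Euc n) : u x ≤ sphMax u ‖x‖ :=
  le_csSup ((isCompact_sphere 0 ‖x‖).image hu).bddAbove
    (mem_image_of_mem u (mem_sphere_zero_iff_norm.2 rfl))

theorem exists_norm_eq_and_eq_sphMax [Nontrivial (Euc n)] (hu : Continuous u) (hr : 0 ≤ r) :
    ∃ x, ‖x‖ = r ∧ u x = sphMax u r := by
  obtain ⟨x, hx, hxu⟩ := (isCompact_sphere (0 : Euc n) r).exists_sSup_image_eq
    (NormedSpace.sphere_nonempty.2 hr) hu.continuousOn
  exact ⟨x, mem_sphere_zero_iff_norm.1 hx, hxu.symm⟩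

theorem continuousOn_sphMax [Nontrivial (Euc n)] (hu : Continuous u) :
    ContinuousOn (sphMax u) (Ici 0) := by
  have hcont : Continuous fun r : ℝ ↦ sSup ((fun x ↦ u (r • x)) '' sphere (0 : Euc n) 1) :=
    (isCompact_sphere 0 1).continuous_sSup (hu.comp (continuous_fst.smul continuous_snd))
  refine hcont.continuousOn.congr fun r hr ↦ ?_
  have hsphere : sphere (0 : Euc n) r = (r • ·) '' sphere (0 : Euc n) 1 := by
    rw [image_smul, smul_sphere r 0 zero_le_one, smul_zero, mul_one, Real.norm_of_nonneg hr]
  rw [sphMax, hsphere, image_image]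

theorem IsSubsolution.le_sphMax_of_norm_le {p C₁ C₂ α : ℝ} {A : Euc n → Euc n → Euc n}
    {b f : Euc n → ℝ} {x : Euc n} (hn : 2 ≤ n) (hu : IsSubsolution p C₁ C₂ α A b f u)
    (hx : ‖x‖ ≤ r) : u x ≤ sphMax u r := by
  have hle {y : Euc n} (hy : ‖y‖ = r) : u y ≤ sphMax u r :=
    hy ▸ le_sphMax hu.contDiff.continuous y
  rcases hx.eq_or_lt with hx | hx
  · exact hle hx
  · exact hu.le_of_frontier_le hn isOpen_ball isBounded_ball
      (fun y hy ↦ hle (mem_sphere_zero_iff_norm.1 (frontier_ball_subset_sphere hy)))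
      (mem_ball_zero_iff.2 hx)

theorem IsSubsolution.monotoneOn_sphMax {p C₁ C₂ α : ℝ} {A : Euc n → Euc n → Euc n}
    {b f : Euc n → ℝ} (hn : 2 ≤ n) (hu : IsSubsolution p C₁ C₂ α A b f u) :
    MonotoneOn (sphMax u) (Ici 0) := by
  intro r hr s _ hrs
  have : Nontrivial (Euc n) := nontrivial_euc hn
  obtain ⟨x, hx, hxu⟩ := exists_norm_eq_and_eq_sphMax hu.contDiff.continuous hr
  exact hxu ▸ hu.le_sphMax_of_norm_le hn (hx.trans_le hrs)

end SphericalMaximum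

section RadialStep

variable {n : ℕ} {p C₁ C₂ α r δ H a B S : ℝ} {A : Euc n → Euc n → Euc n} {b f u : Euc n → ℝ}

namespace IsSubsolution

theorem sphMax_add_lt_of_growthConst_le (hn : 2 ≤ n) (hu : IsSubsolution p C₁ C₂ α A b f u)
    (hr : 0 ≤ r) (hδ : 0 < δ) (hH : 0 < H) (ha : 0 ≤ a) (hB : 0 ≤ B) (hS : 0 < S)
    (hsob : ∀ v : Euc n → ℝ, ContDiff ℝ 1 v → HasCompactSupport v → ∀ T, volume T ≠ ∞ →
      ∫ x in T, ‖v x‖ ≤ S * volume.real T ^ (1 / (n : ℝ)) * ∫ x, ‖fderiv ℝ v x‖)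
    (hBH : B * H * (H / δ) ^ (α - p) ≤ C₁ / 2)
    (hbf : ∀ᵐ x, r - δ < ‖x‖ → ‖x‖ < r + δ → b x ≤ B ∧ (sphMax u r - H < u x → a ≤ f x))
    (haH : growthConst n p C₁ C₂ S * (H / δ) ^ p ≤ a * H) :
    sphMax u r + H < sphMax u (r + δ) := by
  have : Nontrivial (Euc n) := nontrivial_euc hn
  obtain ⟨x₀, hx₀, hx₀u⟩ := exists_norm_eq_and_eq_sphMax hu.contDiff.continuous hr
  have hball : ∀ᵐ x, x ∈ ball x₀ δ → b x ≤ B ∧ (u x₀ - H < u x → a ≤ f x) := by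
    filter_upwards [hbf] with x hx hxδ
    have hdist := (abs_norm_sub_norm_le x x₀).trans_lt (mem_ball_iff_norm.1 hxδ)
    rw [hx₀, abs_lt] at hdist
    rw [hx₀u]
    exact hx (by linarith) (by linarith)
  obtain ⟨x, hx, hxu⟩ := hu.exists_add_lt_of_growthConst_le (by omega) hδ hH ha hB hS hsob hBH
    hball haH
  rw [hx₀u] at hxu
  refine hxu.trans_le (hu.le_sphMax_of_norm_le hn ?_)
  linarith [norm_le_norm_add_norm_sub' x x₀, mem_closedBall_iff_norm.1 hx]

theorem sphMax_add_lt_of_growthConst_le_div {N : ℕ} (hN : N ≠ 0) (hn : 2 ≤ n)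
    (hu : IsSubsolution p C₁ C₂ α A b f u)
    (hr : 0 ≤ r) (hδ : 0 < δ) (hH : 0 < H) (ha : 0 ≤ a) (hB : 0 ≤ B) (hS : 0 < S)
    (hsob : ∀ v : Euc n → ℝ, ContDiff ℝ 1 v → HasCompactSupport v → ∀ T, volume T ≠ ∞ →
      ∫ x in T, ‖v x‖ ≤ S * volume.real T ^ (1 / (n : ℝ)) * ∫ x, ‖fderiv ℝ v x‖)
    (hBH : B * (H / N) * (H / δ) ^ (α - p) ≤ C₁ / 2)
    (hbf : ∀ᵐ x, r - δ < ‖x‖ → ‖x‖ < r + δ → b x ≤ B ∧ (sphMax u r - H < u x → a ≤ f x))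
    (haH : growthConst n p C₁ C₂ S * (H / δ) ^ p ≤ a * (H / N)) :
    sphMax u r + H < sphMax u (r + δ) := by
  have hN₀ : (0 : ℝ) < N := by positivity
  have hN₁ : (1 : ℝ) ≤ N := by exact_mod_cast Nat.one_le_iff_ne_zero.2 hN
  have hslope : H / N / (δ / N) = H / δ := div_div_div_cancel_right₀ hN₀.ne' _ _
  have hlink (i : ℕ) (hi : i + 1 ≤ N) :
      sphMax u (r + i * (δ / N)) + H / N < sphMax u (r + (i + 1 : ℕ) * (δ / N)) := by
    have hiδ : (i + 1 : ℕ) * (δ / N) ≤ N * (δ / N) := by gcongr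
    rw [mul_div_cancel₀ _ hN₀.ne', Nat.cast_succ, add_one_mul] at hiδ
    have hi₀ : 0 ≤ i * (δ / N) := by positivity
    have hmono : sphMax u r ≤ sphMax u (r + i * (δ / N)) :=
      hu.monotoneOn_sphMax hn hr (add_nonneg hr hi₀) (le_add_of_nonneg_right hi₀)
    rw [Nat.cast_succ, add_one_mul, ← add_assoc]
    refine hu.sphMax_add_lt_of_growthConst_le hn (by positivity) (by positivity) (by positivity)
      ha hB hS hsob (hslope ▸ hBH) ?_ (hslope ▸ haH)
    filter_upwards [hbf] with x hx hlo hhi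
    have hHN := div_le_self hH.le hN₁
    refine (hx (by linarith) (by linarith)).imp_right fun h hlt ↦ h (by linarith)
  have hchain (i : ℕ) (hi : i ≤ N) : sphMax u r + i * (H / N) ≤ sphMax u (r + i * (δ / N)) := by
    induction i with
    | zero => simp
    | succ i ih =>
      refine le_trans ?_ (hlink i hi).le
      rw [Nat.cast_succ]
      linarith [ih (by omega)]
  obtain ⟨k, rfl⟩ := Nat.exists_eq_succ_of_ne_zero hN
  have hlast := hlink k le_rfl
  have hk := hchain k k.le_succ
  rw [mul_div_cancel₀ _ hN₀.ne'] at hlast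
  have hsum : (k : ℝ) * (H / (k + 1 : ℕ)) + H / (k + 1 : ℕ) = H := by
    push_cast
    field_simp
  linarith

theorem growthConst_mul_lt_of_sphMax_add_le (hn : 2 ≤ n) (hu : IsSubsolution p C₁ C₂ α A b f u)
    (hr : 0 ≤ r) (hδ : 0 < δ) (hH : 0 < H) (ha : 0 ≤ a) (hB : 0 ≤ B) (hS : 0 < S)
    (hsob : ∀ v : Euc n → ℝ, ContDiff ℝ 1 v → HasCompactSupport v → ∀ T, volume T ≠ ∞ →
      ∫ x in T, ‖v x‖ ≤ S * volume.real T ^ (1 / (n : ℝ)) * ∫ x, ‖fderiv ℝ v x‖)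
    (hbf : ∀ᵐ x, r - δ < ‖x‖ → ‖x‖ < r + δ → b x ≤ B ∧ (sphMax u r - H < u x → a ≤ f x))
    (hle : sphMax u (r + δ) ≤ sphMax u r + H) :
    a * H < growthConst n p C₁ C₂ S * (H / δ) ^ p *
      (2 + 2 * B * H * (H / δ) ^ (α - p) / C₁) := by
  have hC₁ := hu.C₁_pos
  have hΛ := growthConst_pos (n := n) (p := p) hu.C₁_pos hu.C₂_pos hS
  set t := 2 * B * H * (H / δ) ^ (α - p) / C₁ with ht
  have ht₀ : 0 ≤ t := by positivity
  by_contra! hcon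
  refine hle.not_gt (hu.sphMax_add_lt_of_growthConst_le_div (Nat.succ_ne_zero ⌈t⌉₊) hn hr hδ hH ha
    hB hS hsob ?_ hbf ?_)
  · have htN : t ≤ (⌈t⌉₊ + 1 : ℕ) := (Nat.le_ceil t).trans (by push_cast; linarith)
    rw [ht, div_le_iff₀ hC₁] at htN
    rw [mul_div_assoc', div_mul_eq_mul_div, div_le_iff₀ (by positivity)]
    linarith
  · have hNt : ((⌈t⌉₊ + 1 : ℕ) : ℝ) ≤ 2 + t := by
      push_cast
      linarith [Nat.ceil_lt_add_one ht₀]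
    rw [mul_div_assoc', le_div_iff₀ (by positivity)]
    exact (mul_le_mul_of_nonneg_left hNt (by positivity)).trans hcon

end IsSubsolution

theorem le_rpow_mul_of_mul_le_mul_div_rpow {e L : ℝ} (he : 0 < e) (hL : 0 ≤ L) (ha : 0 < a)
    (hδ : 0 < δ) (hH : 0 < H) (h : a * H ≤ L * (H / δ) ^ e) :
    δ ≤ L ^ (1 / e) * (H ^ ((e - 1) / e) * a ^ (-(1 / e))) := by
  have hδe : δ ^ e ≤ L * (H ^ (e - 1) * a⁻¹) := by
    rw [Real.div_rpow hH.le hδ.le, mul_div_assoc', le_div_iff₀ (by positivity)] at h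
    rw [Real.rpow_sub_one hH.ne']
    field_simp
    linarith
  rw [← Real.le_rpow_inv_iff_of_pos hδ.le (by positivity) he] at hδe
  refine hδe.trans_eq ?_
  rw [Real.mul_rpow hL (by positivity), Real.mul_rpow (by positivity) (by positivity),
    ← Real.rpow_mul hH.le, ← Real.rpow_neg_one a, ← Real.rpow_mul ha.le]
  ring_nf

theorem le_mul_add_of_mul_lt_mul_rpow {Λ : ℝ} (hp : 0 < p) (hα : 0 < α) (hΛ : 0 < Λ) (hC₁ : 0 < C₁)
    (hB : 0 ≤ B) (ha : 0 < a) (hδ : 0 < δ) (hH : 0 < H)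
    (h : a * H < Λ * (H / δ) ^ p * (2 + 2 * B * H * (H / δ) ^ (α - p) / C₁)) :
    δ ≤ ((4 * Λ) ^ (1 / p) + (4 * Λ / C₁) ^ (1 / α)) *
      (H ^ ((p - 1) / p) * a ^ (-(1 / p)) + B ^ (1 / α) * (H * a ^ (-(1 / α)))) := by
  have hsplit : a * H < 2 * Λ * (H / δ) ^ p + 2 * Λ / C₁ * (B * H) * (H / δ) ^ α := by
    refine h.trans_eq ?_
    rw [Real.rpow_sub (by positivity)]
    field_simp
  have hΛp : 0 ≤ (4 * Λ) ^ (1 / p) := by positivity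
  have hΛα : 0 ≤ (4 * Λ / C₁) ^ (1 / α) := by positivity
  have hX : 0 ≤ H ^ ((p - 1) / p) * a ^ (-(1 / p)) := by positivity
  have hY : 0 ≤ B ^ (1 / α) * (H * a ^ (-(1 / α))) := by positivity
  rw [add_mul]
  rcases le_total (2 * Λ / C₁ * (B * H) * (H / δ) ^ α) (2 * Λ * (H / δ) ^ p) with hdom | hdom
  · have hδp := le_rpow_mul_of_mul_le_mul_div_rpow hp (L := 4 * Λ) (by positivity) ha hδ hH
      (by linarith)
    nlinarith only [hδp, mul_nonneg hΛp hY, mul_nonneg hΛα hX, mul_nonneg hΛα hY]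
  · have hδα := le_rpow_mul_of_mul_le_mul_div_rpow hα (L := 4 * Λ / C₁ * (B * H)) (by positivity)
      ha hδ hH (by linarith [show 4 * Λ / C₁ * (B * H) * (H / δ) ^ α =
        2 * (2 * Λ / C₁ * (B * H) * (H / δ) ^ α) by ring])
    have hHH : H ^ (1 / α) * H ^ ((α - 1) / α) = H := by
      rw [← Real.rpow_add hH, ← add_div, add_sub_cancel, div_self hα.ne', Real.rpow_one]
    rw [Real.mul_rpow (by positivity) (by positivity), Real.mul_rpow hB hH.le] at hδα
    have hδα' : δ ≤ (4 * Λ / C₁) ^ (1 / α) * (B ^ (1 / α) * (H * a ^ (-(1 / α)))) := by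
      refine hδα.trans_eq ?_
      linear_combination (4 * Λ / C₁) ^ (1 / α) * B ^ (1 / α) * a ^ (-(1 / α)) * hHH
    nlinarith only [hδα', mul_nonneg hΛp hX, mul_nonneg hΛp hY, mul_nonneg hΛα hX]

theorem IsSubsolution.exists_radial_step_bound (hn : 2 ≤ n) (hp : 1 < p) (hC₁ : 0 < C₁)
    (hC₂ : 0 < C₂) (hα : p - 1 ≤ α) :
    ∃ c > 0, ∀ {A : Euc n → Euc n → Euc n} {b f u : Euc n → ℝ},
      IsSubsolution p C₁ C₂ α A b f u → ∀ {r δ H a B : ℝ}, 0 ≤ r → 0 < δ → 0 < H → 0 < a → 0 ≤ B →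
      (∀ᵐ x, r - δ < ‖x‖ → ‖x‖ < r + δ → b x ≤ B ∧ (sphMax u r - H < u x → a ≤ f x)) →
      sphMax u (r + δ) ≤ sphMax u r + H →
      δ ≤ c * (H ^ ((p - 1) / p) * a ^ (-(1 / p)) + B ^ (1 / α) * (H * a ^ (-(1 / α)))) := by
  have hfin : finrank ℝ (Euc n) = n := finrank_euclideanSpace_fin
  obtain ⟨S, hS, hsob⟩ := exists_setIntegral_norm_le_mul_integral_norm_fderiv (E := Euc n)
    (F := ℝ) volume (hfin.symm ▸ hn)
  rw [hfin] at hsob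
  have hΛ := growthConst_pos (n := n) (p := p) hC₁ hC₂ hS
  refine ⟨_, by positivity, fun hu _ _ _ _ _ hr hδ hH ha hB hbf hle ↦
    le_mul_add_of_mul_lt_mul_rpow (by linarith) (by linarith) hΛ hC₁ hB ha hδ hH
      (hu.growthConst_mul_lt_of_sphMax_add_le hn hr hδ hH ha.le hB hS hsob hbf hle)⟩

end RadialStep

theorem sub_mul_le_integral_Ioi_sub {φ : ℝ → ℝ} {a c m : ℝ} (hac : a ≤ c)
    (hφ : IntegrableOn φ (Ioi a)) (hm : ∀ t ∈ Ioc a c, m ≤ φ t) :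
    (c - a) * m ≤ (∫ t in Ioi a, φ t) - ∫ t in Ioi c, φ t := by
  have hIoc : IntegrableOn φ (Ioc a c) := hφ.mono_set Ioc_subset_Ioi_self
  have hle := setIntegral_ge_of_const_le_real measurableSet_Ioc measure_Ioc_lt_top.ne hm hIoc
  rw [Real.volume_real_Ioc_of_le hac] at hle
  rw [← Ioc_union_Ioi_eq_Ioi hac, setIntegral_union Ioc_disjoint_Ioi_same measurableSet_Ioi hIoc
    (hφ.mono_set (Ioi_subset_Ioi hac))]
  linarith

theorem integrableOn_Ioi_of_lintegral_ofReal_lt_top {φ : ℝ → ℝ} {a c ξ C : ℝ}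
    (hmeas : AEMeasurable φ (volume.restrict (Ioi a))) (hφ : ∀ t ∈ Ioi a, 0 ≤ φ t) (haξ : a ≤ ξ)
    (hac : a ≤ c) (hC : ∀ t ∈ Ioc ξ c, φ t ≤ C)
    (hfin : ∫⁻ t in Ioi c, ENNReal.ofReal (φ t) < ∞) : IntegrableOn φ (Ioi ξ) := by
  have htail : IntegrableOn φ (Ioi c) := by
    refine ⟨(hmeas.mono_set (Ioi_subset_Ioi hac)).aestronglyMeasurable, ?_⟩
    rwa [hasFiniteIntegral_iff_ofReal]
    filter_upwards [ae_restrict_mem measurableSet_Ioi] with t ht using hφ t (hac.trans_lt ht)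
  have hhead : IntegrableOn φ (Ioc ξ c) := by
    refine IntegrableOn.of_bound measure_Ioc_lt_top (hmeas.mono_set
      (Ioc_subset_Ioi_self.trans (Ioi_subset_Ioi haξ))).aestronglyMeasurable C ?_
    filter_upwards [ae_restrict_mem measurableSet_Ioc] with t ht
    rw [Real.norm_of_nonneg (hφ t (haξ.trans_lt ht.1))]
    exact hC t ht
  exact (hhead.union htail).mono_set fun t ht ↦ (le_or_gt t c).imp (fun htc ↦ ⟨ht, htc⟩) id

section LocalInfimum

variable {g : ℝ → ℝ} {θ t s : ℝ}

theorem ginf_le (hg : ∀ t, 0 < t → 0 < g t) (hθ : 1 < θ) (ht : 0 < t)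
    (hs : s ∈ Ioo (t / θ) (θ * t)) : ginf g θ t ≤ g s := by
  refine csInf_le ⟨0, ?_⟩ (mem_image_of_mem g hs)
  rintro _ ⟨r, hr, rfl⟩
  exact (hg r ((div_pos ht (by linarith)).trans hr.1)).le

theorem self_mem_Ioo_div_mul (hθ : 1 < θ) (ht : 0 < t) : t ∈ Ioo (t / θ) (θ * t) :=
  ⟨div_lt_self ht hθ, lt_mul_of_one_lt_left ht hθ⟩

theorem exists_pos_forall_le_ginf (hcont : ContinuousOn g (Ici 0)) (hg : ∀ t, 0 < t → 0 < g t)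
    (hθ : 1 < θ) {a c : ℝ} (ha : 0 < a) : ∃ m > 0, ∀ t ∈ Icc a c, m ≤ ginf g θ t := by
  rcases lt_or_ge c a with hac | hac
  · exact ⟨1, one_pos, fun t ht ↦ absurd (ht.1.trans ht.2) hac.not_ge⟩
  have haθ : 0 < a / θ := by positivity
  obtain ⟨s, hs, hmin⟩ := (isCompact_Icc (a := a / θ) (b := θ * c)).exists_isMinOn
    ⟨a, div_le_self ha.le hθ.le, hac.trans (le_mul_of_one_le_left (ha.le.trans hac) hθ.le)⟩
    (hcont.mono fun s hs ↦ haθ.le.trans hs.1)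
  refine ⟨g s, hg s (haθ.trans_le hs.1), fun t ht ↦ le_csInf
    ⟨_, mem_image_of_mem g (self_mem_Ioo_div_mul hθ (ha.trans_le ht.1))⟩ ?_⟩
  rintro _ ⟨r, hr, rfl⟩
  exact hmin ⟨le_trans (by gcongr; exact ht.1) hr.1.le, hr.2.le.trans (by gcongr; exact ht.2)⟩

theorem ginf_pos (hcont : ContinuousOn g (Ici 0)) (hg : ∀ t, 0 < t → 0 < g t) (hθ : 1 < θ)
    (ht : 0 < t) : 0 < ginf g θ t := by
  obtain ⟨m, hm, hle⟩ := exists_pos_forall_le_ginf hcont hg hθ ht (c := t)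
  exact hm.trans_le (hle t (left_mem_Icc.2 le_rfl))

theorem upperSemicontinuousOn_ginf (hg : ∀ t, 0 < t → 0 < g t) (hθ : 1 < θ) :
    UpperSemicontinuousOn (ginf g θ) (Ioi 0) := by
  intro t ht c hc
  obtain ⟨_, ⟨s, hs, rfl⟩, hsc⟩ := exists_lt_of_csInf_lt
    ⟨_, mem_image_of_mem g (self_mem_Ioo_div_mul hθ ht)⟩ hc
  have hlo : ∀ᶠ r in 𝓝[Ioi 0] t, r / θ < s :=
    ((continuous_id.div_const θ).tendsto t).mono_left nhdsWithin_le_nhds |>.eventually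
      (gt_mem_nhds hs.1)
  have hhi : ∀ᶠ r in 𝓝[Ioi 0] t, s < θ * r :=
    ((continuous_const_mul θ).tendsto t).mono_left nhdsWithin_le_nhds |>.eventually
      (lt_mem_nhds hs.2)
  filter_upwards [hlo, hhi, self_mem_nhdsWithin] with r h₁ h₂ hr
  exact (ginf_le hg hθ hr ⟨h₁, h₂⟩).trans_lt hsc

theorem aemeasurable_ginf (hg : ∀ t, 0 < t → 0 < g t) (hθ : 1 < θ) :
    AEMeasurable (ginf g θ) (volume.restrict (Ioi 0)) :=
  aemeasurable_restrict_of_measurable_subtype measurableSet_Ioi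
    (upperSemicontinuousOn_iff_restrict.2 (upperSemicontinuousOn_ginf hg hθ)).measurable

end LocalInfimum

/-- The growth conditions of Keller–Osserman type on the absorption `g`: both tails that enter
`Fzero` converge. -/
structure KellerOsserman (g : ℝ → ℝ) (θ p α : ℝ) : Prop where
  one_lt_θ : 1 < θ
  one_lt_p : 1 < p
  α_pos : 0 < α
  continuousOn : ContinuousOn g (Ici 0)
  pos : ∀ t, 0 < t → 0 < g t
  diffusion_lt_top : ∫⁻ t in Ioi 1, ENNReal.ofReal ((ginf g θ t * t) ^ (-(1 / p))) < ∞
  drift_lt_top : ∫⁻ t in Ioi 1, ENNReal.ofReal (ginf g θ t ^ (-(1 / α))) < ∞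

/-- The tail in `Fzero` that measures growth driven by the divergence term. -/
def diffusionTail (g : ℝ → ℝ) (θ p ξ : ℝ) : ℝ := ∫ t in Ioi ξ, (ginf g θ t * t) ^ (-(1 / p))

/-- The tail in `Fzero` that measures growth driven by the gradient term. -/
def driftTail (g : ℝ → ℝ) (θ α ξ : ℝ) : ℝ := ∫ t in Ioi ξ, ginf g θ t ^ (-(1 / α))

theorem Fzero_eq_diffusionTail_add_driftTail (g : ℝ → ℝ) (θ p α ξ : ℝ) :
    Fzero g θ p α ξ = diffusionTail g θ p ξ ^ (p / (p - 1)) + driftTail g θ α ξ := rfl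

/-- The infimum of `g` over the values within the factor `κ` above `t`, and as far below `t`. For
`κ` close to `1` it dominates `ginf g θ` on `[t, κt]`. -/
def nearInf (g : ℝ → ℝ) (κ t : ℝ) : ℝ := sInf (g '' Icc ((2 - κ) * t) (κ * t))

/-- The radial distance that `M` needs to grow from `t` to `s` against the divergence term, up to
a factor depending on the coefficients. -/
def diffusionCost (g : ℝ → ℝ) (κ p t s : ℝ) : ℝ :=
  (s - t) ^ ((p - 1) / p) * nearInf g κ t ^ (-(1 / p))

/-- The radial distance that `M` needs to grow from `t` to `s` against the gradient term, up to a
factor depending on the coefficients. -/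
def driftCost (g : ℝ → ℝ) (κ α t s : ℝ) : ℝ := (s - t) * nearInf g κ t ^ (-(1 / α))

namespace KellerOsserman

variable {g : ℝ → ℝ} {θ p α κ l t s a c d : ℝ}

theorem integrableOn_Ioi_diffusion (h : KellerOsserman g θ p α) (ht : 0 < t) :
    IntegrableOn (fun s ↦ (ginf g θ s * s) ^ (-(1 / p))) (Ioi t) := by
  obtain ⟨m, hm, hle⟩ := exists_pos_forall_le_ginf h.continuousOn h.pos h.one_lt_θ ht (c := 1)
  have hp := zero_lt_one.trans h.one_lt_p
  refine integrableOn_Ioi_of_lintegral_ofReal_lt_top (C := (m * t) ^ (-(1 / p)))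
    (((aemeasurable_ginf h.pos h.one_lt_θ).mul aemeasurable_id).pow_const _) (fun s hs ↦ ?_) ht.le
    zero_le_one (fun s hs ↦ ?_) h.diffusion_lt_top
  · exact Real.rpow_nonneg
      (mul_nonneg (ginf_pos h.continuousOn h.pos h.one_lt_θ hs).le (le_of_lt hs)) _
  · refine Real.rpow_le_rpow_of_nonpos (by positivity) ?_ (neg_nonpos.2 (by positivity))
    exact mul_le_mul (hle s (Ioc_subset_Icc_self hs)) hs.1.le ht.le
      (hm.le.trans (hle s (Ioc_subset_Icc_self hs)))

theorem integrableOn_Ioi_drift (h : KellerOsserman g θ p α) (ht : 0 < t) :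
    IntegrableOn (fun s ↦ ginf g θ s ^ (-(1 / α))) (Ioi t) := by
  obtain ⟨m, hm, hle⟩ := exists_pos_forall_le_ginf h.continuousOn h.pos h.one_lt_θ ht (c := 1)
  have hα := h.α_pos
  exact integrableOn_Ioi_of_lintegral_ofReal_lt_top (C := m ^ (-(1 / α)))
    ((aemeasurable_ginf h.pos h.one_lt_θ).pow_const _)
    (fun s hs ↦ Real.rpow_nonneg (ginf_pos h.continuousOn h.pos h.one_lt_θ hs).le _) ht.le
    zero_le_one (fun s hs ↦ Real.rpow_le_rpow_of_nonpos hm (hle s (Ioc_subset_Icc_self hs))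
      (neg_nonpos.2 (by positivity))) h.drift_lt_top

theorem sub_mul_le_diffusionTail_sub (h : KellerOsserman g θ p α) {G : ℝ} (ha : 0 < a)
    (hac : a ≤ c) (hcd : c ≤ d) (hG : ∀ r ∈ Ioc a c, ginf g θ r ≤ G) :
    (c - a) * (G * d) ^ (-(1 / p)) ≤ diffusionTail g θ p a - diffusionTail g θ p c := by
  refine sub_mul_le_integral_Ioi_sub hac (h.integrableOn_Ioi_diffusion ha) fun r hr ↦ ?_
  have hr₀ : 0 < r := ha.trans hr.1
  have hg₀ := ginf_pos h.continuousOn h.pos h.one_lt_θ hr₀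
  have hp := zero_lt_one.trans h.one_lt_p
  refine Real.rpow_le_rpow_of_nonpos (by positivity) ?_ (neg_nonpos.2 (by positivity))
  exact mul_le_mul (hG r hr) (hr.2.trans hcd) hr₀.le (hg₀.le.trans (hG r hr))

theorem sub_mul_le_driftTail_sub (h : KellerOsserman g θ p α) {G : ℝ} (ha : 0 < a)
    (hac : a ≤ c) (hG : ∀ r ∈ Ioc a c, ginf g θ r ≤ G) :
    (c - a) * G ^ (-(1 / α)) ≤ driftTail g θ α a - driftTail g θ α c :=
  sub_mul_le_integral_Ioi_sub hac (h.integrableOn_Ioi_drift ha) fun r hr ↦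
    Real.rpow_le_rpow_of_nonpos
      (ginf_pos h.continuousOn h.pos h.one_lt_θ (ha.trans hr.1)) (hG r hr)
      (neg_nonpos.2 (one_div_pos.2 h.α_pos).le)

theorem diffusionTail_nonneg (h : KellerOsserman g θ p α) (ht : 0 < t) :
    0 ≤ diffusionTail g θ p t :=
  setIntegral_nonneg measurableSet_Ioi fun _ hs ↦ Real.rpow_nonneg (mul_nonneg
    (ginf_pos h.continuousOn h.pos h.one_lt_θ (ht.trans hs)).le (ht.trans hs).le) _

theorem diffusionTail_antitoneOn (h : KellerOsserman g θ p α) :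
    AntitoneOn (diffusionTail g θ p) (Ioi 0) := fun t (ht : 0 < t) _ _ hts ↦
  setIntegral_mono_set (h.integrableOn_Ioi_diffusion ht)
    (by
      filter_upwards [ae_restrict_mem measurableSet_Ioi] with r hr
      have hr₀ := ht.trans hr
      exact Real.rpow_nonneg
        (mul_nonneg (ginf_pos h.continuousOn h.pos h.one_lt_θ hr₀).le hr₀.le) _)
    (Ioi_subset_Ioi hts).eventuallyLE

theorem driftTail_antitoneOn (h : KellerOsserman g θ p α) :
    AntitoneOn (driftTail g θ α) (Ioi 0) := fun t (ht : 0 < t) _ _ hts ↦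
  setIntegral_mono_set (h.integrableOn_Ioi_drift ht)
    (by
      filter_upwards [ae_restrict_mem measurableSet_Ioi] with r hr
      exact Real.rpow_nonneg (ginf_pos h.continuousOn h.pos h.one_lt_θ (ht.trans hr)).le _)
    (Ioi_subset_Ioi hts).eventuallyLE

theorem Fzero_antitoneOn (h : KellerOsserman g θ p α) : AntitoneOn (Fzero g θ p α) (Ioi 0) :=
  fun _ ht _ hs hts ↦ add_le_add
    (Real.rpow_le_rpow (h.diffusionTail_nonneg hs) (h.diffusionTail_antitoneOn ht hs hts)
      (div_nonneg (zero_lt_one.trans h.one_lt_p).le (sub_nonneg.2 h.one_lt_p.le)))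
    (h.driftTail_antitoneOn ht hs hts)

end KellerOsserman

section NearInf

variable {g : ℝ → ℝ} {θ κ t s : ℝ}

theorem nearInf_le (hg : ∀ t, 0 < t → 0 < g t) (hκ : κ < 2) (ht : 0 < t)
    (hs : s ∈ Icc ((2 - κ) * t) (κ * t)) : nearInf g κ t ≤ g s := by
  refine csInf_le ⟨0, ?_⟩ (mem_image_of_mem g hs)
  rintro _ ⟨r, hr, rfl⟩
  exact (hg r ((mul_pos (sub_pos.2 hκ) ht).trans_le hr.1)).le

theorem exists_mem_Icc_nearInf_eq (hcont : ContinuousOn g (Ici 0)) (hκ₁ : 1 ≤ κ) (hκ₂ : κ < 2)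
    (ht : 0 < t) : ∃ s ∈ Icc ((2 - κ) * t) (κ * t), nearInf g κ t = g s :=
  isCompact_Icc.exists_sInf_image_eq (nonempty_Icc.2 (by gcongr; linarith))
    (hcont.mono fun _ hs ↦ (mul_pos (sub_pos.2 hκ₂) ht).le.trans hs.1)

theorem nearInf_pos (hcont : ContinuousOn g (Ici 0)) (hg : ∀ t, 0 < t → 0 < g t) (hκ₁ : 1 ≤ κ)
    (hκ₂ : κ < 2) (ht : 0 < t) : 0 < nearInf g κ t := by
  obtain ⟨s, hs, hgs⟩ := exists_mem_Icc_nearInf_eq hcont hκ₁ hκ₂ ht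
  exact hgs ▸ hg s ((mul_pos (sub_pos.2 hκ₂) ht).trans_le hs.1)

theorem ginf_le_nearInf (hcont : ContinuousOn g (Ici 0)) (hg : ∀ t, 0 < t → 0 < g t)
    (hθ : 1 < θ) (hκ₁ : 1 ≤ κ) (hκθ : κ * (θ + 1) < 2 * θ) (ht : 0 < t)
    (hs : s ∈ Icc t (κ * t)) : ginf g θ s ≤ nearInf g κ t := by
  have hκ₂ : κ < 2 := by nlinarith
  obtain ⟨r, hr, hgr⟩ := exists_mem_Icc_nearInf_eq hcont hκ₁ hκ₂ ht
  refine hgr ▸ ginf_le hg hθ (ht.trans_le hs.1) ⟨?_, ?_⟩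
  · calc s / θ ≤ κ * t / θ := by gcongr; exact hs.2
      _ < (2 - κ) * t := by rw [div_lt_iff₀ (by linarith)]; nlinarith
      _ ≤ r := hr.1
  · calc r ≤ κ * t := hr.2
      _ < θ * t := by gcongr; nlinarith
      _ ≤ θ * s := by gcongr; exact hs.1

end NearInf

theorem mul_rpow_neg_rpow_mul_self {p c N x : ℝ} (hp : 1 < p) (hc : 0 ≤ c) (hN : 0 < N)
    (hx : 0 < x) :
    (c * (N * x) ^ (-(1 / p))) ^ (1 / (p - 1)) * (N * x) ^ (-(1 / p)) =
      (c / x) ^ (1 / (p - 1)) * N ^ (-(1 / (p - 1))) := by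
  have : 0 < p := zero_lt_one.trans hp
  have hp₁ := sub_pos.2 hp
  have hpow : ((N * x) ^ (-(1 / p))) ^ (1 / (p - 1)) * (N * x) ^ (-(1 / p)) =
      (N * x) ^ (-(1 / (p - 1))) := by
    rw [← Real.rpow_add_one (by positivity), ← Real.rpow_mul (by positivity)]
    congr 1
    field_simp
    ring
  rw [Real.mul_rpow hc (by positivity), mul_assoc, hpow, Real.div_rpow hc hx.le,
    Real.mul_rpow hN.le hx.le, Real.rpow_neg hx.le]
  ring

theorem rpow_mul_sub_le_rpow_sub_rpow {x y e : ℝ} (he : 0 ≤ e) (hx : 0 ≤ x) (hxy : x ≤ y) :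
    x ^ e * (y - x) ≤ y ^ (e + 1) - x ^ (e + 1) := by
  rw [Real.rpow_add_one' hx (by positivity), Real.rpow_add_one' (hx.trans hxy) (by positivity)]
  have := mul_le_mul_of_nonneg_right (Real.rpow_le_rpow hx hxy he) (hx.trans hxy)
  linarith

namespace KellerOsserman

variable {g : ℝ → ℝ} {θ p α κ l t s a c d : ℝ}

theorem driftCost_le_driftTail_sub (h : KellerOsserman g θ p α) (hκ : 1 ≤ κ)
    (hκθ : κ * (θ + 1) < 2 * θ) (ht : 0 < t) (hts : t ≤ s) (hs : s ≤ κ * t) :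
    driftCost g κ α t s ≤ driftTail g θ α t - driftTail g θ α s :=
  h.sub_mul_le_driftTail_sub ht hts fun _ hr ↦
    ginf_le_nearInf h.continuousOn h.pos h.one_lt_θ hκ hκθ ht ⟨hr.1.le, hr.2.trans hs⟩

theorem diffusionCost_le_of_mul_le (h : KellerOsserman g θ p α) (hκ : 1 ≤ κ)
    (hκθ : κ * (θ + 1) < 2 * θ) (ht : 0 < t) (hl : 1 < l) (hls : l * t ≤ s) (hs : s ≤ κ * t) :
    diffusionCost g κ p t s ≤
      (l / (l - 1)) ^ (1 / p) * (diffusionTail g θ p t - diffusionTail g θ p s) := by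
  have hN : 0 < nearInf g κ t :=
    nearInf_pos h.continuousOn h.pos hκ (by nlinarith [h.one_lt_θ]) ht
  have hp := zero_lt_one.trans h.one_lt_p
  have hts : t < s := by nlinarith
  have hst : 0 < s - t := sub_pos.2 hts
  have hl₁ : 0 < l - 1 := sub_pos.2 hl
  have hs_le : s ≤ l / (l - 1) * (s - t) := by
    rw [div_mul_eq_mul_div, le_div_iff₀ hl₁]
    linarith
  have htail := h.sub_mul_le_diffusionTail_sub ht hts.le hs_le fun _ hr ↦
    ginf_le_nearInf h.continuousOn h.pos h.one_lt_θ hκ hκθ ht ⟨hr.1.le, hr.2.trans hs⟩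
  calc diffusionCost g κ p t s
      = (l / (l - 1)) ^ (1 / p) *
          ((s - t) * (nearInf g κ t * (l / (l - 1) * (s - t))) ^ (-(1 / p))) := by
        have hsplit : (s - t) ^ ((p - 1) / p) = (s - t) * (s - t) ^ (-(1 / p)) := by
          rw [show (p - 1) / p = 1 + -(1 / p) by field_simp; ring, Real.rpow_add hst,
            Real.rpow_one]
        rw [diffusionCost, hsplit, Real.mul_rpow hN.le (by positivity),
          Real.mul_rpow (by positivity) hst.le, Real.rpow_neg (x := l / (l - 1)) (by positivity)]
        field_simp
    _ ≤ _ := by gcongr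

theorem diffusionCost_rpow_conjExponent (h : KellerOsserman g θ p α) (hκ : 1 ≤ κ)
    (hκ₂ : κ < 2) (ht : 0 < t) (hts : t ≤ s) :
    diffusionCost g κ p t s ^ (p / (p - 1)) = (s - t) * nearInf g κ t ^ (-(1 / (p - 1))) := by
  have hN : 0 < nearInf g κ t := nearInf_pos h.continuousOn h.pos hκ hκ₂ ht
  have hp := zero_lt_one.trans h.one_lt_p
  have hp₁ := sub_pos.2 h.one_lt_p
  have hst := sub_nonneg.2 hts
  rw [diffusionCost, Real.mul_rpow (by positivity) (by positivity), ← Real.rpow_mul hst,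
    ← Real.rpow_mul hN.le, show (p - 1) / p * (p / (p - 1)) = 1 by field_simp,
    show -(1 / p) * (p / (p - 1)) = -(1 / (p - 1)) by field_simp, Real.rpow_one]

theorem mul_rpow_le_diffusionTail (h : KellerOsserman g θ p α) (hκθ : κ * (θ + 1) < 2 * θ)
    (ht : 0 < t) (hlκ : l ≤ κ) (hts : t ≤ s) (hs : s ≤ l * t) :
    (κ - l) * t * (nearInf g κ t * (κ * t)) ^ (-(1 / p)) ≤ diffusionTail g θ p s := by
  have hκ : 1 ≤ κ := ((le_mul_iff_one_le_left ht).1 (hts.trans hs)).trans hlκ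
  have hN := nearInf_pos h.continuousOn h.pos hκ (by nlinarith [h.one_lt_θ]) ht
  have hs₀ : 0 < s := ht.trans_le hts
  have hsκ : s ≤ κ * t := hs.trans (by gcongr)
  have htail := h.sub_mul_le_diffusionTail_sub hs₀ hsκ le_rfl fun _ hr ↦
    ginf_le_nearInf h.continuousOn h.pos h.one_lt_θ hκ hκθ ht ⟨hts.trans hr.1.le, hr.2⟩
  calc (κ - l) * t * (nearInf g κ t * (κ * t)) ^ (-(1 / p))
      ≤ (κ * t - s) * (nearInf g κ t * (κ * t)) ^ (-(1 / p)) := by gcongr; linarith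
    _ ≤ diffusionTail g θ p s - diffusionTail g θ p (κ * t) := htail
    _ ≤ diffusionTail g θ p s := sub_le_self _ (h.diffusionTail_nonneg (hs₀.trans_le hsκ))

theorem diffusionCost_rpow_le_of_le_mul (h : KellerOsserman g θ p α) (hκθ : κ * (θ + 1) < 2 * θ)
    (ht : 0 < t) (hl : 1 ≤ l) (hlκ : l < κ) (hts : t ≤ s) (hs : s ≤ l * t) :
    diffusionCost g κ p t s ^ (p / (p - 1)) ≤ (κ / (κ - l)) ^ (1 / (p - 1)) *
      (diffusionTail g θ p t ^ (p / (p - 1)) - diffusionTail g θ p s ^ (p / (p - 1))) := by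
  have hκ : 1 ≤ κ := hl.trans hlκ.le
  have hκ₂ : κ < 2 := by nlinarith [h.one_lt_θ]
  have hN : 0 < nearInf g κ t := nearInf_pos h.continuousOn h.pos hκ hκ₂ ht
  have hp₁ := sub_pos.2 h.one_lt_p
  have : 0 ≤ s - t := sub_nonneg.2 hts
  have hκl := sub_pos.2 hlκ
  have hs₀ : 0 < s := ht.trans_le hts
  have hsκ : s ≤ κ * t := hs.trans (by gcongr)
  set W := (nearInf g κ t * (κ * t)) ^ (-(1 / p)) with hW
  have hdiff : (s - t) * W ≤ diffusionTail g θ p t - diffusionTail g θ p s :=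
    h.sub_mul_le_diffusionTail_sub ht hts hsκ fun r hr ↦
      ginf_le_nearInf h.continuousOn h.pos h.one_lt_θ hκ hκθ ht ⟨hr.1.le, hr.2.trans hsκ⟩
  have hrest : (κ - l) * t * W ≤ diffusionTail g θ p s :=
    h.mul_rpow_le_diffusionTail hκθ ht hlκ.le hts hs
  rw [h.diffusionCost_rpow_conjExponent hκ hκ₂ ht hts]
  calc (s - t) * nearInf g κ t ^ (-(1 / (p - 1)))
      = (κ / (κ - l)) ^ (1 / (p - 1)) *
          (((κ - l) * t * W) ^ (1 / (p - 1)) * ((s - t) * W)) := by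
        have hcancel : (κ / (κ - l)) ^ (1 / (p - 1)) * ((κ - l) / κ) ^ (1 / (p - 1)) = 1 := by
          rw [← Real.mul_rpow (by positivity) (by positivity), div_mul_div_cancel₀ hκl.ne',
            div_self (by positivity), Real.one_rpow]
        have hW₁ := mul_rpow_neg_rpow_mul_self h.one_lt_p (c := (κ - l) * t) (by positivity) hN
          (mul_pos (zero_lt_one.trans_le hκ) ht)
        rw [mul_div_mul_right _ _ ht.ne', ← hW] at hW₁
        linear_combination (-(s - t) * nearInf g κ t ^ (-(1 / (p - 1)))) * hcancel -
          (κ / (κ - l)) ^ (1 / (p - 1)) * (s - t) * hW₁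
    _ ≤ _ := by
        rw [show p / (p - 1) = 1 / (p - 1) + 1 by field_simp; ring]
        gcongr
        exact (mul_le_mul (Real.rpow_le_rpow (by positivity) hrest (by positivity)) hdiff
          (by positivity) (Real.rpow_nonneg (h.diffusionTail_nonneg hs₀) _)).trans
          (rpow_mul_sub_le_rpow_sub_rpow (by positivity) (h.diffusionTail_nonneg hs₀)
            (h.diffusionTail_antitoneOn ht hs₀ hts))

end KellerOsserman

/-- Increasing `M` by a factor less than `κ` inside `[ρ, ρ₁]` costs no more than the weighted sum
of the diffusion and drift costs. The weights `P` and `R` depend on the coefficients only. -/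
def RadialStepBound (g M : ℝ → ℝ) (p α κ P R ρ ρ₁ : ℝ) : Prop :=
  ∀ ⦃r s⦄, ρ ≤ r → r ≤ s → s ≤ ρ₁ → M s < κ * M r →
    s - r ≤ P * diffusionCost g κ p (M r) (M s) + R * driftCost g κ α (M r) (M s)

theorem sub_le_sub_of_mul_le {M Ψ : ℝ → ℝ} {l ρ ρ₁ : ℝ} (hl : 1 < l) (hρ : ρ ≤ ρ₁)
    (hM : 0 < M ρ) (hcont : ContinuousOn M (Icc ρ ρ₁)) (hfast : l * M ρ ≤ M ρ₁)
    (hstep : ∀ r s, ρ ≤ r → r ≤ s → s ≤ ρ₁ → l * M r ≤ M s → M s < l ^ 2 * M r →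
      s - r ≤ Ψ r - Ψ s) : ρ₁ - ρ ≤ Ψ ρ - Ψ ρ₁ := by
  obtain ⟨j, hj⟩ := pow_unbounded_of_one_lt (M ρ₁ / M ρ) hl
  rw [div_lt_iff₀ hM] at hj
  induction j generalizing ρ with
  | zero => nlinarith
  | succ j ih =>
    rcases lt_or_ge (M ρ₁) (l ^ 2 * M ρ) with hslow | hfast'
    · exact hstep ρ ρ₁ le_rfl hρ le_rfl hfast hslow
    obtain ⟨r, hr, hMr⟩ := intermediate_value_Icc hρ hcont ⟨by nlinarith, hfast⟩
    have hfirst := hstep ρ r le_rfl hr.1 hr.2 hMr.ge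
      (by rw [hMr]; gcongr; exact lt_self_pow₀ hl one_lt_two)
    have hrest := ih hr.2 (hMr ▸ by positivity) (hcont.mono (Icc_subset_Icc_left hr.1))
      (by rw [hMr]; linarith) (fun s t hs ↦ hstep s t (hr.1.trans hs))
      (by rwa [hMr, ← mul_assoc, ← pow_succ])
    linarith

namespace KellerOsserman

variable {g M : ℝ → ℝ} {θ p α l P R ρ ρ₁ : ℝ}

theorem exists_bound_of_mul_le (h : KellerOsserman g θ p α) (hl : 1 < l)
    (hlθ : l ^ 2 * (θ + 1) < 2 * θ) (hP : 0 ≤ P) (hR : 0 ≤ R) (hρ : ρ ≤ ρ₁) (hM : 0 < M ρ)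
    (hmono : MonotoneOn M (Icc ρ ρ₁)) (hcont : ContinuousOn M (Icc ρ ρ₁))
    (hstep : RadialStepBound g M p α (l ^ 2) P R ρ ρ₁) (hfast : l * M ρ ≤ M ρ₁) :
    ∃ X ≥ 0, ∃ Y ≥ 0, ρ₁ - ρ ≤ P * X + R * Y ∧ X ^ (p / (p - 1)) + Y ≤
      (l / (l - 1)) ^ (1 / (p - 1)) * (Fzero g θ p α (M ρ) - Fzero g θ p α (M ρ₁)) := by
  have hp₁ := sub_pos.2 h.one_lt_p
  have hp : 0 < p := zero_lt_one.trans h.one_lt_p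
  have hl₁ := sub_pos.2 hl
  set c := (l / (l - 1)) ^ (1 / p) with hc
  have hgrow : M ρ ≤ M ρ₁ := hmono (left_mem_Icc.2 hρ) (right_mem_Icc.2 hρ) hρ
  have hX := sub_nonneg.2 (h.diffusionTail_antitoneOn hM (hM.trans_le hgrow) hgrow)
  have hY := sub_nonneg.2 (h.driftTail_antitoneOn hM (hM.trans_le hgrow) hgrow)
  refine ⟨c * (diffusionTail g θ p (M ρ) - diffusionTail g θ p (M ρ₁)), by positivity,
    driftTail g θ α (M ρ) - driftTail g θ α (M ρ₁), hY, ?_, ?_⟩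
  · refine (sub_le_sub_of_mul_le (Ψ := fun r ↦ P * (c * diffusionTail g θ p (M r)) +
      R * driftTail g θ α (M r)) hl hρ hM hcont hfast fun r s hr hrs hs hlo hhi ↦ ?_).trans_eq
      (by ring)
    have hMr : 0 < M r := hM.trans_le (hmono (left_mem_Icc.2 hρ) ⟨hr, hrs.trans hs⟩ hr)
    have hdiffusion := h.diffusionCost_le_of_mul_le (one_le_pow₀ hl.le) hlθ hMr hl hlo hhi.le
    have hdrift := h.driftCost_le_driftTail_sub (one_le_pow₀ hl.le) hlθ hMr
      (hmono ⟨hr, hrs.trans hs⟩ ⟨hr.trans hrs, hs⟩ hrs) hhi.le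
    calc s - r ≤ P * diffusionCost g (l ^ 2) p (M r) (M s) +
          R * driftCost g (l ^ 2) α (M r) (M s) := hstep hr hrs hs hhi
      _ ≤ P * (c * (diffusionTail g θ p (M r) - diffusionTail g θ p (M s))) +
          R * (driftTail g θ α (M r) - driftTail g θ α (M s)) := by gcongr
      _ = _ := by ring
  · have hcpow : c ^ (p / (p - 1)) = (l / (l - 1)) ^ (1 / (p - 1)) := by
      rw [hc, ← Real.rpow_mul (by positivity)]
      congr 1
      field_simp
    have hone : 1 ≤ (l / (l - 1)) ^ (1 / (p - 1)) :=
      Real.one_le_rpow ((one_le_div hl₁).2 (by linarith)) (by positivity)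
    have hsuper := Real.add_rpow_le_rpow_add hX (h.diffusionTail_nonneg (hM.trans_le hgrow))
      (p := p / (p - 1)) ((one_le_div hp₁).2 (by linarith))
    rw [sub_add_cancel] at hsuper
    rw [Real.mul_rpow (by positivity) hX, hcpow, Fzero_eq_diffusionTail_add_driftTail,
      Fzero_eq_diffusionTail_add_driftTail, add_sub_add_comm, mul_add]
    exact add_le_add (by gcongr; linarith) (le_mul_of_one_le_left hY hone)

theorem exists_bound_of_le_mul (h : KellerOsserman g θ p α) (hl : 1 < l)
    (hlθ : l ^ 2 * (θ + 1) < 2 * θ) (hρ : ρ ≤ ρ₁) (hM : 0 < M ρ) (hgrow : M ρ ≤ M ρ₁)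
    (hstep : RadialStepBound g M p α (l ^ 2) P R ρ ρ₁) (hslow : M ρ₁ ≤ l * M ρ) :
    ∃ X ≥ 0, ∃ Y ≥ 0, ρ₁ - ρ ≤ P * X + R * Y ∧ X ^ (p / (p - 1)) + Y ≤
      (l / (l - 1)) ^ (1 / (p - 1)) * (Fzero g θ p α (M ρ) - Fzero g θ p α (M ρ₁)) := by
  have hp₁ := sub_pos.2 h.one_lt_p
  have hl₁ := sub_pos.2 hl
  have hll : l < l ^ 2 := by nlinarith
  have hsub := sub_nonneg.2 hgrow
  have hN : 0 < nearInf g (l ^ 2) (M ρ) :=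
    nearInf_pos h.continuousOn h.pos (hl.trans hll).le (by nlinarith [h.one_lt_θ]) hM
  have hlt : M ρ₁ < l ^ 2 * M ρ := hslow.trans_lt (by gcongr)
  have hdiffusion := h.diffusionCost_rpow_le_of_le_mul hlθ hM hl.le hll hgrow hslow
  have hdrift := h.driftCost_le_driftTail_sub (hl.trans hll).le hlθ hM hgrow hlt.le
  have hY := sub_nonneg.2 (h.driftTail_antitoneOn hM (hM.trans_le hgrow) hgrow)
  have hone : 1 ≤ (l / (l - 1)) ^ (1 / (p - 1)) :=
    Real.one_le_rpow ((one_le_div hl₁).2 (by linarith)) (by positivity)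
  rw [show l ^ 2 / (l ^ 2 - l) = l / (l - 1) by
    rw [show l ^ 2 - l = l * (l - 1) by ring, sq, mul_div_mul_left _ _ (by positivity)]]
    at hdiffusion
  refine ⟨_, ?_, _, ?_, hstep le_rfl hρ le_rfl hlt, ?_⟩
  · exact mul_nonneg (by positivity) (by positivity)
  · exact mul_nonneg hsub (by positivity)
  · rw [Fzero_eq_diffusionTail_add_driftTail, Fzero_eq_diffusionTail_add_driftTail,
      add_sub_add_comm, mul_add]
    exact add_le_add hdiffusion (hdrift.trans (le_mul_of_one_le_left hY hone))

theorem exists_bound_of_radialStepBound (h : KellerOsserman g θ p α) (hl : 1 < l)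
    (hlθ : l ^ 2 * (θ + 1) < 2 * θ) (hP : 0 ≤ P) (hR : 0 ≤ R) (hρ : ρ ≤ ρ₁) (hM : 0 < M ρ)
    (hmono : MonotoneOn M (Icc ρ ρ₁)) (hcont : ContinuousOn M (Icc ρ ρ₁))
    (hstep : RadialStepBound g M p α (l ^ 2) P R ρ ρ₁) :
    ∃ X ≥ 0, ∃ Y ≥ 0, ρ₁ - ρ ≤ P * X + R * Y ∧ X ^ (p / (p - 1)) + Y ≤
      (l / (l - 1)) ^ (1 / (p - 1)) * (Fzero g θ p α (M ρ) - Fzero g θ p α (M ρ₁)) := by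
  rcases le_total (l * M ρ) (M ρ₁) with hfast | hslow
  · exact h.exists_bound_of_mul_le hl hlθ hP hR hρ hM hmono hcont hstep hfast
  · exact h.exists_bound_of_le_mul hl hlθ hρ hM
      (hmono (left_mem_Icc.2 hρ) (right_mem_Icc.2 hρ) hρ) hstep hslow

end KellerOsserman

theorem exists_one_lt_sq_mul_lt {θ : ℝ} (hθ : 1 < θ) : ∃ l, 1 < l ∧ l ^ 2 * (θ + 1) < 2 * θ := by
  have hθ₁ : 0 < θ + 1 := by linarith
  have hroot : 1 < √(2 * θ / (θ + 1)) := by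
    rw [Real.lt_sqrt zero_le_one, one_pow, one_lt_div hθ₁]
    linarith
  obtain ⟨l, hl, hlroot⟩ := exists_between hroot
  exact ⟨l, hl, (lt_div_iff₀ hθ₁).1 ((Real.lt_sqrt (by linarith)).1 hlroot)⟩

theorem radialCost_mul_eq {p α c H Q B N : ℝ} (hQ : 0 ≤ Q) (hB : 0 ≤ B) (hN : 0 ≤ N) :
    c * (H ^ ((p - 1) / p) * (Q * N) ^ (-(1 / p)) +
      B ^ (1 / α) * (H * (Q * N) ^ (-(1 / α)))) =
    c * Q ^ (-(1 / p)) * (H ^ ((p - 1) / p) * N ^ (-(1 / p))) +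
      c * (B / Q) ^ (1 / α) * (H * N ^ (-(1 / α))) := by
  rw [Real.mul_rpow hQ hN, Real.mul_rpow hQ hN, Real.div_rpow hB hQ, Real.rpow_neg hQ (1 / α)]
  ring

theorem le_radialCost_of_forall_mem_Ioo {e V W H₀ H₁ δ : ℝ} (he : 0 ≤ e) (hH : H₀ < H₁)
    (hδ : ∀ H ∈ Ioo H₀ H₁, δ ≤ V * H ^ e + W * H) : δ ≤ V * H₀ ^ e + W * H₀ := by
  have hcont : Continuous fun H : ℝ ↦ V * H ^ e + W * H :=
    ((Real.continuous_rpow_const he).const_mul V).add (continuous_const_mul W)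
  refine ge_of_tendsto (hcont.continuousAt.mono_left (nhdsWithin_le_nhds (s := Ioi H₀))) ?_
  filter_upwards [Ioo_mem_nhdsGT hH] with H using hδ H

theorem IsSubsolution.exists_radialStepBound {n : ℕ} {p C₁ C₂ α : ℝ} (hn : 2 ≤ n) (hp : 1 < p)
    (hC₁ : 0 < C₁) (hC₂ : 0 < C₂) (hα : p - 1 ≤ α) :
    ∃ c > 0, ∀ {A : Euc n → Euc n → Euc n} {b q u : Euc n → ℝ} {g : ℝ → ℝ},
      IsSubsolution p C₁ C₂ α A b (fun x ↦ q x * g (u x)) u → ContinuousOn g (Ici 0) →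
      (∀ t, 0 < t → 0 < g t) → ∀ {κ Q B ρ ρ₁ : ℝ}, κ < 2 → 0 < Q → 0 ≤ B → 0 ≤ ρ →
      0 < sphMax u ρ → (∀ᵐ x, 2 * ρ - ρ₁ < ‖x‖ → ‖x‖ < ρ₁ → b x ≤ B ∧ Q ≤ q x) →
      RadialStepBound g (sphMax u) p α κ (c * Q ^ (-(1 / p))) (c * (B / Q) ^ (1 / α)) ρ ρ₁ := by
  obtain ⟨c, hc, hbound⟩ := IsSubsolution.exists_radial_step_bound hn hp hC₁ hC₂ hα
  refine ⟨c, hc, fun {A b q u g} hu hcont hg κ Q B ρ ρ₁ hκ hQ hB hρ hM hcoef r s hρr hrs hsρ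
    hslow ↦ ?_⟩
  rcases hrs.eq_or_lt with rfl | hlt
  · simp [diffusionCost, driftCost, (sub_pos.2 hp).ne', (zero_lt_one.trans hp).ne']
  have hr : 0 ≤ r := hρ.trans hρr
  have hMr : 0 < sphMax u r := hM.trans_le (hu.monotoneOn_sphMax hn hρ hr hρr)
  have hMrs : sphMax u r ≤ sphMax u s := hu.monotoneOn_sphMax hn hr (hr.trans hrs) hrs
  have hN : 0 < nearInf g κ (sphMax u r) := nearInf_pos hcont hg (by nlinarith) hκ hMr
  have hcost := le_radialCost_of_forall_mem_Ioo (e := (p - 1) / p)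
    (V := c * Q ^ (-(1 / p)) * nearInf g κ (sphMax u r) ^ (-(1 / p)))
    (W := c * (B / Q) ^ (1 / α) * nearInf g κ (sphMax u r) ^ (-(1 / α)))
    (H₀ := sphMax u s - sphMax u r) (H₁ := (κ - 1) * sphMax u r) (δ := s - r)
    (div_nonneg (sub_nonneg.2 hp.le) (zero_lt_one.trans hp).le) (by linarith) fun H hH ↦ ?_
  · rw [diffusionCost, driftCost]
    linarith
  have hstep := hbound hu hr (sub_pos.2 hlt) ((sub_nonneg.2 hMrs).trans_lt hH.1)
    (mul_pos hQ hN) hB ?_ (by rw [add_sub_cancel]; linarith [hH.1])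
  · rw [radialCost_mul_eq hQ.le hB hN.le] at hstep
    linarith
  filter_upwards [hcoef] with x hx hlo hhi
  rw [add_sub_cancel] at hhi
  obtain ⟨hbx, hqx⟩ := hx (by linarith) (by linarith)
  refine ⟨hbx, fun hux ↦ mul_le_mul hqx (nearInf_le hg hκ hMr ⟨by linarith [hH.2], ?_⟩) hN.le
    (hQ.le.trans hqx)⟩
  exact (hu.le_sphMax_of_norm_le hn hhi.le).trans hslow.le

theorem mul_rpow_le_of_le_diffusion {p c κ D Q X s : ℝ} (hp : 1 < p) (hc : 0 ≤ c) (hκ : 0 ≤ κ)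
    (hD : 0 ≤ D) (hQ : 0 < Q) (hX : 0 ≤ X) (hs : 0 ≤ s) (hsD : s ≤ κ * D * Q)
    (hDX : D ≤ c * (Q ^ (-(1 / p)) * X)) :
    D * s ^ (1 / (p - 1)) ≤ κ ^ (1 / (p - 1)) * c ^ (p / (p - 1)) * X ^ (p / (p - 1)) := by
  have : 0 < p := zero_lt_one.trans hp
  have hp₁ := sub_pos.2 hp
  have hexp : p / (p - 1) = 1 + 1 / (p - 1) := by field_simp; ring
  have hQpow : (Q ^ (-(1 / p))) ^ (p / (p - 1)) * Q ^ (1 / (p - 1)) = 1 := by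
    rw [← Real.rpow_mul hQ.le, ← Real.rpow_add hQ,
      show -(1 / p) * (p / (p - 1)) + 1 / (p - 1) = 0 by field_simp; ring, Real.rpow_zero]
  calc D * s ^ (1 / (p - 1)) ≤ D * (κ * D * Q) ^ (1 / (p - 1)) := by gcongr
    _ = κ ^ (1 / (p - 1)) * D ^ (p / (p - 1)) * Q ^ (1 / (p - 1)) := by
      rw [Real.mul_rpow (by positivity) hQ.le, Real.mul_rpow hκ hD, hexp,
        Real.rpow_one_add' hD (by positivity)]
      ring
    _ ≤ κ ^ (1 / (p - 1)) * (c * (Q ^ (-(1 / p)) * X)) ^ (p / (p - 1)) * Q ^ (1 / (p - 1)) := by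
      gcongr
    _ = κ ^ (1 / (p - 1)) * c ^ (p / (p - 1)) * X ^ (p / (p - 1)) := by
      rw [Real.mul_rpow hc (by positivity), Real.mul_rpow (by positivity) hX]
      linear_combination κ ^ (1 / (p - 1)) * c ^ (p / (p - 1)) * X ^ (p / (p - 1)) * hQpow

theorem mul_rpow_le_of_le_drift {p α c D Q β Y s : ℝ} (hp : 1 < p) (hα : 0 < α) (hc : 0 ≤ c)
    (hQ : 0 < Q) (hβ : 0 ≤ β) (hY : 0 ≤ Y) (hs : 0 ≤ s) (hsβ : s * β ≤ Q ^ ((p - 1) / α))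
    (hDY : D ≤ c * ((β ^ (α / (p - 1)) / Q) ^ (1 / α) * Y)) :
    D * s ^ (1 / (p - 1)) ≤ c * Y := by
  have hp₁ := sub_pos.2 hp
  have hone : (β ^ (α / (p - 1)) / Q) ^ (1 / α) * s ^ (1 / (p - 1)) ≤ 1 := by
    calc (β ^ (α / (p - 1)) / Q) ^ (1 / α) * s ^ (1 / (p - 1))
        = (s * β) ^ (1 / (p - 1)) / Q ^ (1 / α) := by
          rw [Real.div_rpow (by positivity) hQ.le, ← Real.rpow_mul hβ,
            show α / (p - 1) * (1 / α) = 1 / (p - 1) by field_simp, Real.mul_rpow hs hβ]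
          ring
      _ ≤ (Q ^ ((p - 1) / α)) ^ (1 / (p - 1)) / Q ^ (1 / α) := by gcongr
      _ = 1 := by
          rw [← Real.rpow_mul hQ.le, show (p - 1) / α * (1 / (p - 1)) = 1 / α by field_simp]
          exact div_self (by positivity)
  calc D * s ^ (1 / (p - 1))
      ≤ c * ((β ^ (α / (p - 1)) / Q) ^ (1 / α) * Y) * s ^ (1 / (p - 1)) := by gcongr
    _ = c * Y * ((β ^ (α / (p - 1)) / Q) ^ (1 / α) * s ^ (1 / (p - 1))) := by ring
    _ ≤ c * Y := mul_le_of_le_one_right (by positivity) hone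

theorem mul_rpow_le_of_le_diffusion_add_drift {p α c κ D Q β X Y s : ℝ} (hp : 1 < p)
    (hα : 0 < α) (hc : 0 ≤ c) (hκ : 0 ≤ κ) (hD : 0 ≤ D) (hQ : 0 < Q) (hβ : 0 ≤ β) (hX : 0 ≤ X)
    (hY : 0 ≤ Y) (hs : 0 ≤ s) (hsD : s ≤ κ * D * Q) (hsβ : s * β ≤ Q ^ ((p - 1) / α))
    (hDXY : D ≤ c * Q ^ (-(1 / p)) * X + c * (β ^ (α / (p - 1)) / Q) ^ (1 / α) * Y) :
    D * s ^ (1 / (p - 1)) ≤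
      (κ ^ (1 / (p - 1)) * (2 * c) ^ (p / (p - 1)) + 2 * c) * (X ^ (p / (p - 1)) + Y) := by
  have hX' : 0 ≤ X ^ (p / (p - 1)) := by positivity
  have hK : 0 ≤ κ ^ (1 / (p - 1)) * (2 * c) ^ (p / (p - 1)) := by positivity
  rcases le_total (Q ^ (-(1 / p)) * X) ((β ^ (α / (p - 1)) / Q) ^ (1 / α) * Y) with hle | hle
  · have hDY : D ≤ 2 * c * ((β ^ (α / (p - 1)) / Q) ^ (1 / α) * Y) := by
      linarith [mul_le_mul_of_nonneg_left hle hc]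
    have := mul_rpow_le_of_le_drift hp hα (by positivity) hQ hβ hY hs hsβ hDY
    nlinarith
  · have hDX : D ≤ 2 * c * (Q ^ (-(1 / p)) * X) := by
      linarith [mul_le_mul_of_nonneg_left hle hc]
    have := mul_rpow_le_of_le_diffusion hp (by positivity) hκ hD hQ hX hs hsD hDX
    nlinarith

theorem IsSubsolution.exists_mul_rpow_le_Fzero_sub {n : ℕ} {p C₁ C₂ α θ κ : ℝ} (hn : 2 ≤ n)
    (hp : 1 < p) (hC₁ : 0 < C₁) (hC₂ : 0 < C₂) (hα : p - 1 ≤ α) (hθ : 1 < θ) (hκ : 0 ≤ κ) :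
    ∃ C > 0, ∀ {A : Euc n → Euc n → Euc n} {b q u : Euc n → ℝ} {g : ℝ → ℝ},
      IsSubsolution p C₁ C₂ α A b (fun x ↦ q x * g (u x)) u → KellerOsserman g θ p α →
      ∀ {Q β s ρ ρ₁ : ℝ}, 0 < Q → 0 ≤ β → 0 ≤ s → 0 ≤ ρ → ρ ≤ ρ₁ → 0 < sphMax u ρ →
      (∀ᵐ x, 2 * ρ - ρ₁ < ‖x‖ → ‖x‖ < ρ₁ → b x ≤ β ^ (α / (p - 1)) ∧ Q ≤ q x) →
      s ≤ κ * (ρ₁ - ρ) * Q → s * β ≤ Q ^ ((p - 1) / α) →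
      C * ((ρ₁ - ρ) * s ^ (1 / (p - 1))) ≤
        Fzero g θ p α (sphMax u ρ) - Fzero g θ p α (sphMax u ρ₁) := by
  obtain ⟨l, hl, hlθ⟩ := exists_one_lt_sq_mul_lt hθ
  obtain ⟨c, hc, hstep⟩ := IsSubsolution.exists_radialStepBound hn hp hC₁ hC₂ hα
  have : 0 < p - 1 := sub_pos.2 hp
  have : 0 < l - 1 := sub_pos.2 hl
  set K := κ ^ (1 / (p - 1)) * (2 * c) ^ (p / (p - 1)) + 2 * c
  have : 0 < K := by positivity
  refine ⟨(K * (l / (l - 1)) ^ (1 / (p - 1)))⁻¹, by positivity,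
    fun {A b q u g} hu h Q β s ρ ρ₁ hQ hβ hs hρ hρρ₁ hM hcoef hsD hsβ ↦ ?_⟩
  have : Nontrivial (Euc n) := nontrivial_euc hn
  have hsubset : Icc ρ ρ₁ ⊆ Ici 0 := fun r hr ↦ hρ.trans hr.1
  obtain ⟨X, hX, Y, hY, hXY, hF⟩ := h.exists_bound_of_radialStepBound hl hlθ
    (by positivity) (by positivity) hρρ₁ hM ((hu.monotoneOn_sphMax hn).mono hsubset)
    ((continuousOn_sphMax hu.contDiff.continuous).mono hsubset)
    (hstep hu h.continuousOn h.pos (by nlinarith) hQ (by positivity) hρ hM hcoef)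
  rw [inv_mul_le_iff₀ (by positivity)]
  calc (ρ₁ - ρ) * s ^ (1 / (p - 1)) ≤ K * (X ^ (p / (p - 1)) + Y) :=
        mul_rpow_le_of_le_diffusion_add_drift hp h.α_pos hc.le hκ (sub_nonneg.2 hρρ₁) hQ hβ hX hY
          hs hsD hsβ hXY
    _ ≤ _ := by rw [mul_assoc]; gcongr

section Weight

variable {n : ℕ} {q b : Euc n → ℝ} {p α σ r : ℝ}

/-- The essential supremum of `b ^ ((p - 1) / α)` that enters the denominator of `fdef`. -/
def driftSup (b : Euc n → ℝ) (p α σ r : ℝ) : ℝ :=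
  essSup (fun x ↦ b x ^ ((p - 1) / α)) (volume.restrict (Ann n (r / σ) (σ * r)))

theorem fdef_eq_div (q b : Euc n → ℝ) (p α σ r : ℝ) :
    fdef q b p α σ r =
      qinf q σ r / (1 + r * qinf q σ r ^ ((α - p + 1) / α) * driftSup b p α σ r) := rfl

theorem measurableSet_ann (r₁ r₂ : ℝ) : MeasurableSet (Ann n r₁ r₂) :=
  (measurableSet_lt measurable_const measurable_norm).inter
    (measurableSet_lt measurable_norm measurable_const)

theorem qinf_nonneg (hq : ∀ x, 0 ≤ q x) : 0 ≤ qinf q σ r := by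
  rw [qinf, essInf, liminf_eq]
  exact Real.sSup_nonneg' ⟨0, mem_ofPred_eq ▸ Eventually.of_forall hq, le_rfl⟩

theorem ae_qinf_le (hq : ∀ x, 0 ≤ q x) :
    ∀ᵐ x : Euc n, x ∈ Ann n (r / σ) (σ * r) → qinf q σ r ≤ q x :=
  (ae_restrict_iff' (measurableSet_ann _ _)).1
    (ae_essInf_le ⟨0, eventually_map.2 (Eventually.of_forall hq)⟩)

theorem driftSup_nonneg (hb : ∀ x, 0 ≤ b x) : 0 ≤ driftSup b p α σ r := by
  rw [driftSup, essSup, limsup_eq]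
  rcases (ae (volume.restrict (Ann n (r / σ) (σ * r)))).eq_or_neBot with hbot | _
  · simp [hbot]
  · refine Real.sInf_nonneg fun a ha ↦ ?_
    obtain ⟨x, hx⟩ := Eventually.exists (mem_ofPred_eq ▸ ha)
    exact (Real.rpow_nonneg (hb x) _).trans hx

theorem ae_le_driftSup_rpow (hp : 1 < p) (hα : 0 < α) (hb : ∀ x, 0 ≤ b x) (hbdd : LocBdd b) :
    ∀ᵐ x : Euc n, x ∈ Ann n (r / σ) (σ * r) → b x ≤ driftSup b p α σ r ^ (α / (p - 1)) := by
  have hp₁ := sub_pos.2 hp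
  obtain ⟨K, hK⟩ := hbdd (closedBall 0 (σ * r)) (isCompact_closedBall _ _)
  have hle := ae_le_essSup (μ := volume.restrict (Ann n (r / σ) (σ * r)))
    (f := fun x ↦ b x ^ ((p - 1) / α)) ⟨K ^ ((p - 1) / α), eventually_map.2 <|
      (ae_restrict_iff' (measurableSet_ann _ _)).2 <| .of_forall fun x hx ↦
        Real.rpow_le_rpow (hb x) (hK x (mem_closedBall_zero_iff.2 hx.2.le)) (by positivity)⟩
  filter_upwards [(ae_restrict_iff' (measurableSet_ann _ _)).1 hle] with x hx hmem
  have := Real.rpow_le_rpow (Real.rpow_nonneg (hb x) _) (hx hmem)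
    (z := α / (p - 1)) (by positivity)
  rwa [← Real.rpow_mul (hb x), div_mul_div_cancel₀ hα.ne', div_self hp₁.ne', Real.rpow_one] at this

theorem fdef_nonneg (hq : ∀ x, 0 ≤ q x) (hb : ∀ x, 0 ≤ b x) (hr : 0 ≤ r) :
    0 ≤ fdef q b p α σ r := by
  have := qinf_nonneg (σ := σ) (r := r) hq
  have := driftSup_nonneg (p := p) (α := α) (σ := σ) (r := r) hb
  rw [fdef_eq_div]
  positivity

theorem fdef_le_qinf (hq : ∀ x, 0 ≤ q x) (hb : ∀ x, 0 ≤ b x) (hr : 0 ≤ r) :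
    fdef q b p α σ r ≤ qinf q σ r := by
  have hQ := qinf_nonneg (σ := σ) (r := r) hq
  have := driftSup_nonneg (p := p) (α := α) (σ := σ) (r := r) hb
  exact div_le_self hQ (le_add_of_nonneg_right (by positivity))

theorem mul_fdef_mul_driftSup_le (hα : 0 < α) (hq : ∀ x, 0 ≤ q x) (hb : ∀ x, 0 ≤ b x)
    (hr : 0 ≤ r) : r * fdef q b p α σ r * driftSup b p α σ r ≤ qinf q σ r ^ ((p - 1) / α) := by
  have hQ := qinf_nonneg (σ := σ) (r := r) hq
  have hβ := driftSup_nonneg (p := p) (α := α) (σ := σ) (r := r) hb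
  rw [fdef_eq_div]
  set Q := qinf q σ r
  set β := driftSup b p α σ r
  have hsplit : Q = Q ^ ((p - 1) / α) * Q ^ ((α - p + 1) / α) := by
    have hsum : (p - 1) / α + (α - p + 1) / α = 1 := by field_simp; ring
    rw [← Real.rpow_add' hQ (by simp [hsum]), hsum, Real.rpow_one]
  have : 0 ≤ r * Q ^ ((α - p + 1) / α) * β := by positivity
  rw [mul_div_assoc', div_mul_eq_mul_div, div_le_iff₀ (by positivity)]
  calc r * Q * β = Q ^ ((p - 1) / α) * (r * Q ^ ((α - p + 1) / α) * β) := by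
        nth_rw 1 [hsplit]; ring
    _ ≤ _ := by gcongr; linarith

end Weight

theorem IsSubsolution.exists_mul_rpow_mul_fdef_le_Fzero_sub {n : ℕ} {p C₁ C₂ α θ σ τ : ℝ}
    (hn : 2 ≤ n) (hp : 1 < p) (hC₁ : 0 < C₁) (hC₂ : 0 < C₂) (hα : p - 1 ≤ α) (hθ : 1 < θ)
    (hσ : 0 < σ) (hτ : 1 < τ) (hτσ : τ ≤ σ * (2 - τ)) :
    ∃ C > 0, ∀ {A : Euc n → Euc n → Euc n} {b q u : Euc n → ℝ} {g : ℝ → ℝ},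
      IsSubsolution p C₁ C₂ α A b (fun x ↦ q x * g (u x)) u → KellerOsserman g θ p α →
      (∀ x, 0 ≤ q x) → ∀ {ρ ξ : ℝ}, 0 < ρ → 0 < sphMax u ρ → ξ ∈ Ioc ρ (τ * ρ) →
      C * ((τ * ρ - ρ) * (ξ * fdef q b p α σ ξ) ^ (1 / (p - 1))) ≤
        Fzero g θ p α (sphMax u ρ) - Fzero g θ p α (sphMax u (τ * ρ)) := by
  have hτ₁ := sub_pos.2 hτ
  obtain ⟨C, hC, hbound⟩ := IsSubsolution.exists_mul_rpow_le_Fzero_sub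
    (κ := τ / (τ - 1)) hn hp hC₁ hC₂ hα hθ (by positivity)
  refine ⟨C, hC, fun {A b q u g} hu h hq ρ ξ hρ hM hξ ↦ ?_⟩
  have hξ₀ : 0 < ξ := hρ.trans hξ.1
  have hρτ : ρ ≤ τ * ρ := le_mul_of_one_le_left hρ.le hτ.le
  have hf := fdef_nonneg (p := p) (α := α) (σ := σ) hq hu.b_nonneg hξ₀.le
  have hfQ := fdef_le_qinf (p := p) (α := α) (σ := σ) hq hu.b_nonneg hξ₀.le
  rcases (qinf_nonneg (σ := σ) (r := ξ) hq).eq_or_lt with hQ | hQ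
  · have hmono := hu.monotoneOn_sphMax hn hρ.le (hρ.le.trans hρτ) hρτ
    rw [le_antisymm (hfQ.trans hQ.ge) hf, mul_zero,
      Real.zero_rpow (one_div_pos.2 (sub_pos.2 hp)).ne', mul_zero, mul_zero]
    exact sub_nonneg.2 (h.Fzero_antitoneOn hM (hM.trans_le hmono) hmono)
  refine hbound hu h hQ (driftSup_nonneg hu.b_nonneg) (mul_nonneg hξ₀.le hf) hρ.le hρτ hM ?_ ?_
    (mul_fdef_mul_driftSup_le h.α_pos hq hu.b_nonneg hξ₀.le)
  · filter_upwards [ae_le_driftSup_rpow (σ := σ) (r := ξ) hp h.α_pos hu.b_nonneg hu.b_locBdd,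
      ae_qinf_le (σ := σ) (r := ξ) hq] with x hbx hqx hlo hhi
    have hmem : x ∈ Ann n (ξ / σ) (σ * ξ) := by
      refine ⟨((div_le_iff₀ hσ).2 ?_).trans_lt hlo, hhi.trans_le ?_⟩
      · nlinarith [hξ.2]
      · nlinarith [hξ.1]
    exact ⟨hbx hmem, hqx hmem⟩
  · calc ξ * fdef q b p α σ ξ ≤ τ * ρ * qinf q σ ξ := by gcongr; exact hξ.2
      _ = τ / (τ - 1) * (τ * ρ - ρ) * qinf q σ ξ := by field_simp

theorem lintegral_Ioi_le_of_lintegral_Ioc_add_le {φ : ℝ → ℝ≥0∞} {s : ℕ → ℝ} {c : ℕ → ℝ≥0∞}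
    (hs : Monotone s) (hs_top : Tendsto s atTop atTop)
    (hstep : ∀ j, (∫⁻ ξ in Ioc (s j) (s (j + 1)), φ ξ) + c (j + 1) ≤ c j) :
    ∫⁻ ξ in Ioi (s 0), φ ξ ≤ c 0 := by
  have hunion : ⋃ j, Ioc (s j) (s (j + 1)) = Ioi (s 0) :=
    iUnion_Ioc_map_succ_eq_Ioi (fun j ↦ hs (Nat.zero_le j)) (not_bddAbove_of_tendsto_atTop hs_top)
  have hsum (N : ℕ) :
      (∑ j ∈ Finset.range N, ∫⁻ ξ in Ioc (s j) (s (j + 1)), φ ξ) + c N ≤ c 0 := by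
    induction N with
    | zero => simp
    | succ N ih =>
      rw [Finset.sum_range_succ, add_assoc]
      exact (add_le_add_right (hstep N) _).trans ih
  rw [← hunion]
  exact (lintegral_iUnion_le _ _).trans
    (ENNReal.tsum_le_of_sum_range_le fun N ↦ le_self_add.trans (hsum N))

theorem ofReal_mul_lintegral_Ioc_le_ofReal {w : ℝ → ℝ} {C Δ a b : ℝ} (hC : 0 ≤ C) (hab : a < b)
    (hw : ∀ ξ ∈ Ioc a b, C * ((b - a) * w ξ) ≤ Δ) :
    ENNReal.ofReal C * ∫⁻ ξ in Ioc a b, ENNReal.ofReal (w ξ) ≤ ENNReal.ofReal Δ := by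
  have hba := sub_pos.2 hab
  rw [← lintegral_const_mul' _ _ ENNReal.ofReal_ne_top]
  calc ∫⁻ ξ in Ioc a b, ENNReal.ofReal C * ENNReal.ofReal (w ξ)
      ≤ ∫⁻ _ in Ioc a b, ENNReal.ofReal (Δ / (b - a)) := by
        refine setLIntegral_mono measurable_const fun ξ hξ ↦ ?_
        rw [← ENNReal.ofReal_mul hC]
        refine ENNReal.ofReal_le_ofReal ((le_div_iff₀ hba).2 ?_)
        linarith [hw ξ hξ]
    _ = ENNReal.ofReal Δ := by
        rw [setLIntegral_const, Real.volume_Ioc, ← ENNReal.ofReal_mul' hba.le,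
          div_mul_cancel₀ _ hba.ne']

theorem mul_integral_le_of_ofReal_mul_lintegral_le {X : Type*} [MeasurableSpace X] {μ : Measure X}
    {f : X → ℝ} {C F : ℝ} (hC : 0 ≤ C) (hF : 0 ≤ F)
    (h : ENNReal.ofReal C * ∫⁻ x, ENNReal.ofReal (f x) ∂μ ≤ ENNReal.ofReal F) :
    C * ∫ x, f x ∂μ ≤ F := by
  rw [← integral_const_mul]
  by_cases hint : Integrable (fun x ↦ C * f x) μ
  · rw [← lintegral_const_mul' _ _ ENNReal.ofReal_ne_top] at h
    simp only [← ENNReal.ofReal_mul hC] at h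
    rw [integral_eq_lintegral_pos_part_sub_lintegral_neg_part hint]
    exact (sub_le_self _ ENNReal.toReal_nonneg).trans (ENNReal.toReal_le_of_le_ofReal hF h)
  · rwa [integral_undef hint]

theorem sphMax_nonneg {n : ℕ} {u : Euc n → ℝ} (hu : ∀ x, 0 ≤ u x) (r : ℝ) : 0 ≤ sphMax u r :=
  Real.sSup_nonneg (forall_mem_image.2 fun x _ ↦ hu x)

theorem Fzero_nonneg {g : ℝ → ℝ} {θ p α ξ : ℝ} (hg : ∀ t ∈ Ici (0 : ℝ), 0 ≤ g t) (hθ : 0 ≤ θ)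
    (hξ : 0 ≤ ξ) : 0 ≤ Fzero g θ p α ξ := by
  have ht₀ {t : ℝ} (ht : t ∈ Ioi ξ) : 0 ≤ t := hξ.trans (le_of_lt ht)
  have hginf {t : ℝ} (ht : t ∈ Ioi ξ) : 0 ≤ ginf g θ t :=
    Real.sInf_nonneg (forall_mem_image.2 fun s hs ↦ hg s ((div_nonneg (ht₀ ht) hθ).trans hs.1.le))
  exact add_nonneg
    (Real.rpow_nonneg (setIntegral_nonneg measurableSet_Ioi fun t ht ↦
      Real.rpow_nonneg (mul_nonneg (hginf ht) (ht₀ ht)) _) _)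
    (setIntegral_nonneg measurableSet_Ioi fun t ht ↦ Real.rpow_nonneg (hginf ht) _)

theorem LocBdd.mul_continuous {n : ℕ} {q h : Euc n → ℝ} (hq : LocBdd q) (hq₀ : ∀ x, 0 ≤ q x)
    (hh : Continuous h) (hh₀ : ∀ x, 0 ≤ h x) : LocBdd fun x ↦ q x * h x := by
  intro K hK
  obtain ⟨a, ha⟩ := hq K hK
  obtain ⟨d, hd⟩ := hK.bddAbove_image hh.continuousOn
  exact ⟨a * d, fun x hx ↦ mul_le_mul (ha x hx) (hd (mem_image_of_mem h hx)) (hh₀ x)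
    ((hq₀ x).trans (ha x hx))⟩

theorem ofReal_mul_lintegral_Ioi_le_ofReal {w Φ : ℝ → ℝ} {C τ r : ℝ} (hC : 0 ≤ C) (hτ : 1 < τ)
    (hr : 0 < r) (hΦ₀ : ∀ ρ ∈ Ici r, 0 ≤ Φ ρ) (hΦ : AntitoneOn Φ (Ici r))
    (hw : ∀ ρ ∈ Ici r, ∀ ξ ∈ Ioc ρ (τ * ρ), C * ((τ * ρ - ρ) * w ξ) ≤ Φ ρ - Φ (τ * ρ)) :
    ENNReal.ofReal C * ∫⁻ ξ in Ioi r, ENNReal.ofReal (w ξ) ≤ ENNReal.ofReal (Φ r) := by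
  have hmono : Monotone fun j : ℕ ↦ τ ^ j * r :=
    (pow_right_mono₀ hτ.le).mul_const hr.le
  have hmem (j : ℕ) : τ ^ j * r ∈ Ici r := le_mul_of_one_le_left hr.le (one_le_pow₀ hτ.le)
  have hstep (j : ℕ) : (∫⁻ ξ in Ioc (τ ^ j * r) (τ ^ (j + 1) * r),
      ENNReal.ofReal C * ENNReal.ofReal (w ξ)) + ENNReal.ofReal (Φ (τ ^ (j + 1) * r)) ≤
        ENNReal.ofReal (Φ (τ ^ j * r)) := by
    have hsucc : τ ^ (j + 1) * r = τ * (τ ^ j * r) := by ring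
    have hdecr := sub_nonneg.2 (hΦ (hmem j) (hmem (j + 1)) (hmono j.le_succ))
    rw [lintegral_const_mul' _ _ ENNReal.ofReal_ne_top,
      ← sub_add_cancel (Φ (τ ^ j * r)) (Φ (τ ^ (j + 1) * r)),
      ENNReal.ofReal_add hdecr (hΦ₀ _ (hmem (j + 1)))]
    gcongr
    rw [hsucc]
    exact ofReal_mul_lintegral_Ioc_le_ofReal hC
      (lt_mul_of_one_lt_left (hr.trans_le (hmem j)) hτ) (hw _ (hmem j))
  have hsum := lintegral_Ioi_le_of_lintegral_Ioc_add_le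
    (c := fun j ↦ ENNReal.ofReal (Φ (τ ^ j * r))) hmono
    ((tendsto_pow_atTop_atTop_of_one_lt hτ).atTop_mul_const hr) hstep
  rwa [pow_zero, one_mul, lintegral_const_mul' _ _ ENNReal.ofReal_ne_top] at hsum

theorem stmt_2_general (n : ℕ) (hn : 2 ≤ n) (p C₁ C₂ α : ℝ) (hp : 1 < p) (hC₁ : 0 < C₁)
    (hC₂ : 0 < C₂) (hα₁ : p - 1 ≤ α) (hα₂ : α ≤ p) (θ σ : ℝ) (hθ : 1 < θ) (hσ : 1 < σ) :
    ∃ C : ℝ, 0 < C ∧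
      ∀ (A : Euc n → Euc n → Euc n), StructCond A p C₁ C₂ →
      ∀ (b : Euc n → ℝ), Measurable b → (∀ x, 0 ≤ b x) → LocBdd b →
      ∀ (q : Euc n → ℝ), Measurable q → (∀ x, 0 ≤ q x) → LocBdd q →
      ∀ (g : ℝ → ℝ), ContinuousOn g (Ici 0) → (∀ t ∈ Ici (0 : ℝ), 0 ≤ g t) →
        (∀ t : ℝ, 0 < t → 0 < g t) →
      ∫⁻ t in Ioi (1 : ℝ), ENNReal.ofReal ((ginf g θ t * t) ^ (-(1 / p))) < ∞ →
      ∫⁻ t in Ioi (1 : ℝ), ENNReal.ofReal (ginf g θ t ^ (-(1 / α))) < ∞ →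
      ∀ u : Euc n → ℝ, ContDiff ℝ 1 u → (∀ x, 0 ≤ u x) →
        IsWeakSol A b α (fun x ↦ q x * g (u x)) univ u →
        ∀ r : ℝ, 0 < r → sphMax u r = 0 ∨
          ENNReal.ofReal C *
              ∫⁻ ξ in Ioi r, ENNReal.ofReal ((ξ * fdef q b p α σ ξ) ^ (1 / (p - 1))) ≤
            ENNReal.ofReal (Fzero g θ p α (sphMax u r)) := by
  have hτ : 1 < 2 * σ / (σ + 1) := by rw [one_lt_div] <;> linarith
  obtain ⟨C, hC, hstep⟩ := IsSubsolution.exists_mul_rpow_mul_fdef_le_Fzero_sub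
    hn hp hC₁ hC₂ hα₁ hθ (zero_lt_one.trans hσ) hτ (by field_simp; linarith)
  refine ⟨C, hC, fun A hA b hb hb₀ hbbdd q hq hq₀ hqbdd g hg hg₀ hgpos hdiff hdrift u hu hu₀ hsol
    r hr ↦ (sphMax_nonneg hu₀ r).eq_or_lt.imp Eq.symm fun hM ↦ ?_⟩
  have hgu : Continuous fun x ↦ g (u x) := hg.comp_continuous hu.continuous hu₀
  have hgu₀ (x : Euc n) : 0 ≤ g (u x) := hg₀ _ (hu₀ x)
  have hsub : IsSubsolution p C₁ C₂ α A b (fun x ↦ q x * g (u x)) u :=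
    ⟨hp, hC₁, hC₂, hα₁, hα₂, hA, hb, hb₀, hbbdd, hq.mul hgu.measurable,
      fun x ↦ mul_nonneg (hq₀ x) (hgu₀ x), hqbdd.mul_continuous hq₀ hgu hgu₀, hu, hsol⟩
  have h : KellerOsserman g θ p α := ⟨hθ, hp, hsub.α_pos, hg, hgpos, hdiff, hdrift⟩
  have hmono : MonotoneOn (sphMax u) (Ici r) :=
    (hsub.monotoneOn_sphMax hn).mono (Ici_subset_Ici.2 hr.le)
  have hpos : MapsTo (sphMax u) (Ici r) (Ioi 0) :=
    fun ρ hρ ↦ hM.trans_le (hmono self_mem_Ici hρ hρ)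
  exact ofReal_mul_lintegral_Ioi_le_ofReal hC.le hτ hr
    (fun ρ hρ ↦ Fzero_nonneg hg₀ (zero_lt_one.trans hθ).le (hpos hρ).le)
    (fun ρ hρ ρ' hρ' hle ↦ h.Fzero_antitoneOn (hpos hρ) (hpos hρ') (hmono hρ hρ' hle))
    fun ρ hρ ξ hξ ↦ hstep hsub h hq₀ (hr.trans_le hρ) (hpos hρ) hξ

/-- Theorem 2.3 (upper a priori estimate): if both `g_θ` integrals converge while the `f_σ`
integral converges, there is a constant `C > 0` depending only on `n, p, θ, σ, α, C₁, C₂`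
such that every nonnegative solution satisfies, for all sufficiently large `r`, either
`M(r;u) = 0` or `F₀(M(r;u)) ≥ C ∫_r^∞ (ξ f_σ(ξ))^{1/(p-1)} dξ`. -/
theorem stmt_2 (n : ℕ) (hn : 2 ≤ n) (p C₁ C₂ α : ℝ) (hp : 1 < p)
    (hC₁ : 0 < C₁) (hC₂ : 0 < C₂) (hα₁ : p - 1 ≤ α) (hα₂ : α ≤ p)
    (θ σ : ℝ) (hθ : 1 < θ) (hσ : 1 < σ) :
    ∃ C : ℝ, 0 < C ∧
      ∀ (r₀ : ℝ), 0 < r₀ →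
      ∀ (A : Euc n → Euc n → Euc n), StructCond A p C₁ C₂ →
      ∀ (b : Euc n → ℝ), Measurable b → (∀ x, 0 ≤ b x) → LocBdd b →
      ∀ (q : Euc n → ℝ), Measurable q → (∀ x, 0 ≤ q x) → LocBdd q →
      ∀ (g : ℝ → ℝ), ContinuousOn g (Set.Ici 0) → (∀ t ∈ Set.Ici (0 : ℝ), 0 ≤ g t) →
        (∀ t : ℝ, 0 < t → 0 < g t) →
      (∫⁻ t in Set.Ioi (1 : ℝ), ENNReal.ofReal ((ginf g θ t * t) ^ (-(1 / p)))) < ⊤ →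
      (∫⁻ t in Set.Ioi (1 : ℝ), ENNReal.ofReal (ginf g θ t ^ (-(1 / α)))) < ⊤ →
      (∫⁻ r in Set.Ioi r₀, ENNReal.ofReal ((r * fdef q b p α σ r) ^ (1 / (p - 1)))) < ⊤ →
      ∀ u : Euc n → ℝ, ContDiff ℝ 1 u → (∀ x, 0 ≤ u x) →
        IsWeakSol A b α (fun x => q x * g (u x)) Set.univ u →
        ∃ R : ℝ, r₀ < R ∧ ∀ r : ℝ, R ≤ r →
          sphMax u r = 0 ∨
            C * ∫ ξ in Set.Ioi r, (ξ * fdef q b p α σ ξ) ^ (1 / (p - 1)) ≤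
              Fzero g θ p α (sphMax u r) := by
  obtain ⟨C, hC, hbound⟩ := stmt_2_general n hn p C₁ C₂ α hp hC₁ hC₂ hα₁ hα₂ θ σ hθ hσ
  refine ⟨C, hC, fun r₀ hr₀ A hA b hb hb₀ hbbdd q hq hq₀ hqbdd g hg hg₀ hgpos hdiff hdrift _
    u hu hu₀ hsol ↦ ⟨r₀ + 1, lt_add_one r₀, fun r hr ↦ ?_⟩⟩
  exact (hbound A hA b hb hb₀ hbbdd q hq hq₀ hqbdd g hg hg₀ hgpos hdiff hdrift u hu hu₀ hsol r
    (by linarith)).imp_right (mul_integral_le_of_ofReal_mul_lintegral_le hC.le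
      (Fzero_nonneg hg₀ (zero_lt_one.trans hθ).le (sphMax_nonneg hu₀ r)))
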